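/- Let R be a commutative noetherian ring with identity, let a be a proper ideal of R with dim R/a = 2, and let M be a finitely generated R-module. If the local cohomology module H^{2i}_a(M) is a-cofinite for every i ≥ 0, then H^i_a(M) is a-cofinite for every i ≥ 0. -/

import Mathlib

universe u

open CategoryTheory

/-- `Ext^i_R(R/a, M)` as an `R`-module, for `M : ModuleCat R`. -/
noncomputable def extQuot {R : Type u} [CommRing R] (a : Ideal R) (i : ℕ)
    (M : ModuleCat.{u} R) : ModuleCat.{u} R :=
  ((Ext R (ModuleCat.{u} R) i).obj (Opposite.op (ModuleCat.of R (R ⧸ a)))).obj M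

/-- An `R`-module `M` is `a`-cofinite if `Supp M ⊆ V(a)` and `Ext^i_R(R/a, M)` is a
finitely generated `R`-module for every `i ≥ 0`. -/
def IsCofinite {R : Type u} [CommRing R] (a : Ideal R) (M : ModuleCat.{u} R) : Prop :=
  Module.support R M ⊆ PrimeSpectrum.zeroLocus (a : Set R) ∧
    ∀ i : ℕ, Module.Finite R (extQuot a i M)

section

namespace LC

section XT
variable (R : Type u) [CommRing R]

/-- `Ext^i_R(N, X)` as a type. -/
abbrev XT (N X : Type u) [AddCommGroup N] [Module R N] [AddCommGroup X] [Module R X] (i : ℕ) :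
    Type u := Abelian.Ext (ModuleCat.of R N) (ModuleCat.of R X) i

variable {R}
variable {N N' N'' X Y Z A B C : Type u}
  [AddCommGroup N] [Module R N] [AddCommGroup N'] [Module R N'] [AddCommGroup N''] [Module R N'']
  [AddCommGroup X] [Module R X] [AddCommGroup Y] [Module R Y] [AddCommGroup Z] [Module R Z]
  [AddCommGroup A] [Module R A] [AddCommGroup B] [Module R B] [AddCommGroup C] [Module R C]

/-- functoriality in the second variable -/
noncomputable def mapR (N : Type u) [AddCommGroup N] [Module R N] (f : X →ₗ[R] Y) (i : ℕ) :
    XT R N X i →ₗ[R] XT R N Y i where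
  toFun x := x.comp (Abelian.Ext.mk₀ (ModuleCat.ofHom f)) (add_zero i)
  map_add' x y := by simp
  map_smul' r x := by simp

/-- functoriality in the first variable -/
noncomputable def mapL (X : Type u) [AddCommGroup X] [Module R X] (g : N →ₗ[R] N') (i : ℕ) :
    XT R N' X i →ₗ[R] XT R N X i where
  toFun x := (Abelian.Ext.mk₀ (ModuleCat.ofHom g)).comp x (zero_add i)
  map_add' x y := by simp
  map_smul' r x := by simp

lemma mapR_apply (f : X →ₗ[R] Y) (i : ℕ) (x : XT R N X i) :
    mapR N f i x = x.comp (Abelian.Ext.mk₀ (ModuleCat.ofHom f)) (add_zero i) := rfl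

lemma mapL_apply (g : N →ₗ[R] N') (i : ℕ) (x : XT R N' X i) :
    mapL X g i x = (Abelian.Ext.mk₀ (ModuleCat.ofHom g)).comp x (zero_add i) := rfl

lemma mapR_id (i : ℕ) (x : XT R N X i) : mapR N (LinearMap.id : X →ₗ[R] X) i x = x := by
  rw [mapR_apply]
  exact Abelian.Ext.comp_mk₀_id x

lemma mapL_id (i : ℕ) (x : XT R N X i) : mapL X (LinearMap.id : N →ₗ[R] N) i x = x := by
  rw [mapL_apply]
  exact Abelian.Ext.mk₀_id_comp x

lemma mapR_comp (f : X →ₗ[R] Y) (g : Y →ₗ[R] Z) (i : ℕ) (x : XT R N X i) :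
    mapR N (g ∘ₗ f) i x = mapR N g i (mapR N f i x) := by
  simp only [mapR_apply, ModuleCat.ofHom_comp]
  rw [Abelian.Ext.comp_assoc_of_third_deg_zero, Abelian.Ext.mk₀_comp_mk₀]

lemma mapL_comp (f : N →ₗ[R] N') (g : N' →ₗ[R] N'') (i : ℕ) (x : XT R N'' X i) :
    mapL X (g ∘ₗ f) i x = mapL X f i (mapL X g i x) := by
  simp only [mapL_apply, ModuleCat.ofHom_comp]
  rw [← Abelian.Ext.mk₀_comp_mk₀]
  exact Abelian.Ext.comp_assoc _ _ _ (by simp) (by simp) (by simp)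

lemma mapL_mapR (g : N →ₗ[R] N') (f : X →ₗ[R] Y) (i : ℕ) (x : XT R N' X i) :
    mapL Y g i (mapR N' f i x) = mapR N f i (mapL X g i x) := by
  simp only [mapL_apply, mapR_apply]
  rw [Abelian.Ext.comp_assoc_of_third_deg_zero]

lemma mapR_smul (f : X →ₗ[R] Y) (r : R) (i : ℕ) (x : XT R N X i) :
    mapR N (r • f) i x = r • mapR N f i x := by
  simp only [mapR_apply]
  have : ModuleCat.ofHom (r • f) = r • ModuleCat.ofHom f := rfl
  rw [this, Abelian.Ext.mk₀_smul, Abelian.Ext.comp_smul]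

lemma mapL_smul (g : N →ₗ[R] N') (r : R) (i : ℕ) (x : XT R N' X i) :
    mapL X (r • g) i x = r • mapL X g i x := by
  simp only [mapL_apply]
  have : ModuleCat.ofHom (r • g) = r • ModuleCat.ofHom g := rfl
  rw [this, Abelian.Ext.mk₀_smul, Abelian.Ext.smul_comp]

lemma mapR_add (f f' : X →ₗ[R] Y) (i : ℕ) (x : XT R N X i) :
    mapR N (f + f') i x = mapR N f i x + mapR N f' i x := by
  simp only [mapR_apply]
  have : ModuleCat.ofHom (f + f') = ModuleCat.ofHom f + ModuleCat.ofHom f' := rfl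
  rw [this, Abelian.Ext.mk₀_add, Abelian.Ext.comp_add]

lemma mapL_add (g g' : N →ₗ[R] N') (i : ℕ) (x : XT R N' X i) :
    mapL X (g + g') i x = mapL X g i x + mapL X g' i x := by
  simp only [mapL_apply]
  have : ModuleCat.ofHom (g + g') = ModuleCat.ofHom g + ModuleCat.ofHom g' := rfl
  rw [this, Abelian.Ext.mk₀_add, Abelian.Ext.add_comp]

lemma mapR_zero (i : ℕ) (x : XT R N X i) : mapR N (0 : X →ₗ[R] Y) i x = 0 := by
  have := mapR_smul (0 : X →ₗ[R] Y) (0 : R) i x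
  simpa using this

lemma mapL_zero (i : ℕ) (x : XT R N' X i) : mapL X (0 : N →ₗ[R] N') i x = 0 := by
  have := mapL_smul (0 : N →ₗ[R] N') (0 : R) i x
  simpa using this

/-- isomorphisms in the second variable -/
noncomputable def equivR (N : Type u) [AddCommGroup N] [Module R N] (e : X ≃ₗ[R] Y) (i : ℕ) :
    XT R N X i ≃ₗ[R] XT R N Y i :=
  LinearEquiv.ofLinearMap (mapR N e.toLinearMap i) (mapR N e.symm.toLinearMap i)
    (by ext x; simp [← mapR_comp, mapR_id]) (by ext x; simp [← mapR_comp, mapR_id])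

/-- isomorphisms in the first variable -/
noncomputable def equivL (X : Type u) [AddCommGroup X] [Module R X] (e : N ≃ₗ[R] N') (i : ℕ) :
    XT R N' X i ≃ₗ[R] XT R N X i :=
  LinearEquiv.ofLinearMap (mapL X e.toLinearMap i) (mapL X e.symm.toLinearMap i)
    (by ext x; simp [← mapL_comp, mapL_id]) (by ext x; simp [← mapL_comp, mapL_id])

/-- Degree zero. -/
noncomputable def xt0 (N X : Type u) [AddCommGroup N] [Module R N] [AddCommGroup X] [Module R X] :
    XT R N X 0 ≃ₗ[R] (N →ₗ[R] X) :=
  Abelian.Ext.linearEquiv₀.trans ModuleCat.homLinearEquiv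

lemma xt0_symm_apply (f : N →ₗ[R] X) : (xt0 N X).symm f = Abelian.Ext.mk₀ (ModuleCat.ofHom f) := by
  rfl

lemma mapR_xt0_symm (g : X →ₗ[R] Y) (f : N →ₗ[R] X) :
    mapR N g 0 ((xt0 N X).symm f) = (xt0 N Y).symm (g ∘ₗ f) := by
  simp only [xt0_symm_apply, mapR_apply]
  rw [Abelian.Ext.mk₀_comp_mk₀]; rfl

lemma mapL_xt0_symm (g : N →ₗ[R] N') (f : N' →ₗ[R] X) :
    mapL X g 0 ((xt0 N' X).symm f) = (xt0 N X).symm (f ∘ₗ g) := by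
  simp only [xt0_symm_apply, mapL_apply]
  rw [Abelian.Ext.mk₀_comp_mk₀]; rfl

lemma xt0_mapR (g : X →ₗ[R] Y) (x : XT R N X 0) :
    xt0 N Y (mapR N g 0 x) = g ∘ₗ xt0 N X x := by
  obtain ⟨f, rfl⟩ := (xt0 N X).symm.surjective x
  rw [mapR_xt0_symm]; simp

lemma xt0_mapL (g : N →ₗ[R] N') (x : XT R N' X 0) :
    xt0 N X (mapL X g 0 x) = xt0 N' X x ∘ₗ g := by
  obtain ⟨f, rfl⟩ := (xt0 N' X).symm.surjective x
  rw [mapL_xt0_symm]; simp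

section SES
variable {f : A →ₗ[R] B} {g : B →ₗ[R] C}

/-- A short exact sequence of modules. -/
structure SES (f : A →ₗ[R] B) (g : B →ₗ[R] C) : Prop where
  inj : Function.Injective f
  exact : Function.Exact f g
  surj : Function.Surjective g

/-- the short complex -/
noncomputable def SES.sc (h : SES f g) : ShortComplex (ModuleCat.{u} R) :=
  ModuleCat.shortComplexOfCompEqZero f g h.exact.linearMap_comp_eq_zero

lemma SES.se (h : SES f g) : h.sc.ShortExact :=
  ModuleCat.shortComplex_shortExact _ h.exact h.inj h.surj

/-- extension class -/
noncomputable def SES.ec (h : SES f g) : XT R C A 1 := h.se.extClass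

lemma SES.ec_comp (h : SES f g) :
    h.ec.comp (Abelian.Ext.mk₀ (ModuleCat.ofHom f)) (add_zero 1) = 0 :=
  h.se.extClass_comp

lemma SES.comp_ec (h : SES f g) :
    (Abelian.Ext.mk₀ (ModuleCat.ofHom g)).comp h.ec (zero_add 1) = 0 :=
  h.se.comp_extClass

/-- covariant connecting map -/
noncomputable def SES.dR (h : SES f g) (N : Type u) [AddCommGroup N] [Module R N] (i : ℕ) :
    XT R N C i →ₗ[R] XT R N A (i+1) where
  toFun x := x.comp h.ec rfl
  map_add' x y := by simp
  map_smul' r x := by simp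

/-- contravariant connecting map -/
noncomputable def SES.dL (h : SES f g) (X : Type u) [AddCommGroup X] [Module R X] (i : ℕ) :
    XT R A X i →ₗ[R] XT R C X (i+1) where
  toFun x := h.ec.comp x (add_comm 1 i)
  map_add' x y := by simp
  map_smul' r x := by simp

lemma SES.dR_apply (h : SES f g) (i : ℕ) (x : XT R N C i) : h.dR N i x = x.comp h.ec rfl := rfl
lemma SES.dL_apply (h : SES f g) (i : ℕ) (x : XT R A X i) :
    h.dL X i x = h.ec.comp x (add_comm 1 i) := rfl

lemma SES.exR2 (h : SES f g) (N : Type u) [AddCommGroup N] [Module R N] (i : ℕ) :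
    Function.Exact (mapR N f i) (mapR N g i) := by
  intro x
  constructor
  · intro hx
    obtain ⟨y, hy⟩ := Abelian.Ext.covariant_sequence_exact₂ _ h.se x hx
    exact ⟨y, hy⟩
  · rintro ⟨y, rfl⟩
    rw [← mapR_comp, h.exact.linearMap_comp_eq_zero, mapR_zero]

lemma SES.exR3 (h : SES f g) (N : Type u) [AddCommGroup N] [Module R N] (i : ℕ) :
    Function.Exact (mapR N g i) (h.dR N i) := by
  intro x
  constructor
  · intro hx
    obtain ⟨y, hy⟩ := Abelian.Ext.covariant_sequence_exact₃ _ h.se x rfl hx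
    exact ⟨y, hy⟩
  · rintro ⟨y, rfl⟩
    rw [mapR_apply, SES.dR_apply]
    rw [Abelian.Ext.comp_assoc_of_second_deg_zero, h.comp_ec, Abelian.Ext.comp_zero]

lemma SES.exR1 (h : SES f g) (N : Type u) [AddCommGroup N] [Module R N] (i : ℕ) :
    Function.Exact (h.dR N i) (mapR N f (i+1)) := by
  intro x
  constructor
  · intro hx
    obtain ⟨y, hy⟩ := Abelian.Ext.covariant_sequence_exact₁ _ h.se x hx rfl
    exact ⟨y, hy⟩
  · rintro ⟨y, rfl⟩
    rw [mapR_apply, SES.dR_apply]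
    rw [Abelian.Ext.comp_assoc_of_third_deg_zero, h.ec_comp, Abelian.Ext.comp_zero]

lemma SES.exL2 (h : SES f g) (X : Type u) [AddCommGroup X] [Module R X] (i : ℕ) :
    Function.Exact (mapL X g i) (mapL X f i) := by
  intro x
  constructor
  · intro hx
    obtain ⟨y, hy⟩ := Abelian.Ext.contravariant_sequence_exact₂ h.se _ x hx
    exact ⟨y, hy⟩
  · rintro ⟨y, rfl⟩
    rw [← mapL_comp, h.exact.linearMap_comp_eq_zero, mapL_zero]

lemma SES.exL1 (h : SES f g) (X : Type u) [AddCommGroup X] [Module R X] (i : ℕ) :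
    Function.Exact (mapL X f i) (h.dL X i) := by
  intro x
  constructor
  · intro hx
    obtain ⟨y, hy⟩ := Abelian.Ext.contravariant_sequence_exact₁ h.se _ x (add_comm 1 i) hx
    exact ⟨y, hy⟩
  · rintro ⟨y, rfl⟩
    rw [mapL_apply, SES.dL_apply]
    rw [← Abelian.Ext.comp_assoc_of_second_deg_zero, h.ec_comp, Abelian.Ext.zero_comp]

lemma SES.exL3 (h : SES f g) (X : Type u) [AddCommGroup X] [Module R X] (i : ℕ) :
    Function.Exact (h.dL X i) (mapL X g (i+1)) := by
  intro x
  constructor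
  · intro hx
    obtain ⟨y, hy⟩ := Abelian.Ext.contravariant_sequence_exact₃ h.se _ x hx (add_comm 1 i)
    exact ⟨y, hy⟩
  · rintro ⟨y, rfl⟩
    rw [mapL_apply, SES.dL_apply]
    rw [← Abelian.Ext.comp_assoc _ _ _ (zero_add 1) (add_comm 1 i) (by omega), h.comp_ec,
      Abelian.Ext.zero_comp]

lemma mapR0_inj (N : Type u) [AddCommGroup N] [Module R N] (hf : Function.Injective f) :
    Function.Injective (mapR N f 0) := by
  intro x y hxy
  apply (xt0 N A).injective
  have := congrArg (xt0 N B) hxy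
  rw [xt0_mapR, xt0_mapR] at this
  ext n
  exact hf (LinearMap.congr_fun this n)

lemma mapL0_inj (X : Type u) [AddCommGroup X] [Module R X] (hg : Function.Surjective g) :
    Function.Injective (mapL X g 0) := by
  intro x y hxy
  apply (xt0 C X).injective
  have := congrArg (xt0 B X) hxy
  rw [xt0_mapL, xt0_mapL] at this
  ext n
  obtain ⟨b, rfl⟩ := hg n
  exact LinearMap.congr_fun this b

lemma SES.natR (h : SES f g) (X : Type u) [AddCommGroup X] [Module R X] (k : X →ₗ[R] Y) (i : ℕ)
    (x : XT R A X i) : mapR C k (i+1) (h.dL X i x) = h.dL Y i (mapR A k i x) := by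
  simp only [mapR_apply, SES.dL_apply]
  rw [Abelian.Ext.comp_assoc_of_third_deg_zero]

lemma SES.natL (h : SES f g) (k : N →ₗ[R] N') (i : ℕ)
    (x : XT R N' C i) : mapL A k (i+1) (h.dR N' i x) = h.dR N i (mapL C k i x) := by
  simp only [mapL_apply, SES.dR_apply]
  rw [Abelian.Ext.comp_assoc _ _ _ (zero_add i) rfl (by omega)]

end SES

lemma xt_projective [Module.Projective R N] (i : ℕ) (x : XT R N X (i+1)) : x = 0 := by
  have := (IsProjective.iff_projective (R := R) N).1 inferInstance
  exact Abelian.Ext.eq_zero_of_projective x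

lemma xt_injective [Module.Injective R X] (i : ℕ) (x : XT R N X (i+1)) : x = 0 := by
  have := Module.injective_object_of_injective_module R X
  exact Abelian.Ext.eq_zero_of_injective x

lemma xt_subsingleton_right [Subsingleton X] (i : ℕ) : Subsingleton (XT R N X i) := by
  refine ⟨fun x y => ?_⟩
  rw [← mapR_id i x, ← mapR_id i y, Subsingleton.elim (LinearMap.id : X →ₗ[R] X) 0, mapR_zero,
    mapR_zero]

lemma xt_subsingleton_left [Subsingleton N] (i : ℕ) : Subsingleton (XT R N X i) := by
  refine ⟨fun x y => ?_⟩
  rw [← mapL_id i x, ← mapL_id i y, Subsingleton.elim (LinearMap.id : N →ₗ[R] N) 0, mapL_zero,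
    mapL_zero]

/-- scalars killing the first variable kill Ext -/
lemma xt_smul_left (r : R) (hr : ∀ n : N, r • n = 0) (i : ℕ) (x : XT R N X i) : r • x = 0 := by
  have : (r • LinearMap.id : N →ₗ[R] N) = 0 := by ext n; simp [hr]
  rw [← mapL_id i x, ← mapL_smul, this, mapL_zero]

lemma xt_smul_right (r : R) (hr : ∀ n : X, r • n = 0) (i : ℕ) (x : XT R N X i) : r • x = 0 := by
  have : (r • LinearMap.id : X →ₗ[R] X) = 0 := by ext n; simp [hr]
  rw [← mapR_id i x, ← mapR_smul, this, mapR_zero]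

lemma SES.mkQ (K : Submodule R X) : SES K.subtype K.mkQ :=
  ⟨K.injective_subtype, LinearMap.exact_subtype_mkQ K, K.mkQ_surjective⟩

lemma SES.ker (f : X →ₗ[R] Y) (hf : Function.Surjective f) : SES (LinearMap.ker f).subtype f :=
  ⟨Submodule.injective_subtype _, LinearMap.exact_subtype_ker_map f, hf⟩

lemma SES.kerRange (f : X →ₗ[R] Y) : SES (LinearMap.ker f).subtype f.rangeRestrict :=
  ⟨Submodule.injective_subtype _, by
    rw [LinearMap.exact_iff, LinearMap.ker_rangeRestrict, Submodule.range_subtype],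
    f.surjective_rangeRestrict⟩

lemma SES.range (f : X →ₗ[R] Y) (hf : Function.Injective f) : SES f (LinearMap.range f).mkQ :=
  ⟨hf, by rw [LinearMap.exact_iff, Submodule.ker_mkQ], Submodule.mkQ_surjective _⟩

end XT
end LC

end

section

namespace LC

/-- A Serre class of modules. -/
structure Serre (R : Type u) [CommRing R] where
  /-- the predicate -/
  P : ∀ (M : Type u) [AddCommGroup M] [Module R M], Prop
  zero : ∀ (M : Type u) [AddCommGroup M] [Module R M] [Subsingleton M], P M
  ex : ∀ {A B C : Type u} [AddCommGroup A] [Module R A] [AddCommGroup B] [Module R B]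
    [AddCommGroup C] [Module R C] (f : A →ₗ[R] B) (g : B →ₗ[R] C), Function.Exact f g →
    P A → P C → P B

section
variable {R : Type u} [CommRing R] (S : Serre R)
variable {N N' N'' X Y Z A B C : Type u}
  [AddCommGroup N] [Module R N] [AddCommGroup N'] [Module R N'] [AddCommGroup N''] [Module R N'']
  [AddCommGroup X] [Module R X] [AddCommGroup Y] [Module R Y] [AddCommGroup Z] [Module R Z]
  [AddCommGroup A] [Module R A] [AddCommGroup B] [Module R B] [AddCommGroup C] [Module R C]

lemma Serre.inj {f : A →ₗ[R] B} (hf : Function.Injective f) (h : S.P B) : S.P A := by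
  refine S.ex (0 : PUnit.{u+1} →ₗ[R] A) f ?_ (S.zero _) h
  rw [LinearMap.exact_iff, LinearMap.ker_eq_bot.2 hf, LinearMap.range_zero]

lemma Serre.surj {f : A →ₗ[R] B} (hf : Function.Surjective f) (h : S.P A) : S.P B := by
  refine S.ex f (0 : B →ₗ[R] PUnit.{u+1}) ?_ h (S.zero _)
  rw [LinearMap.exact_iff, LinearMap.range_eq_top.2 hf, LinearMap.ker_zero]

lemma Serre.iso (e : A ≃ₗ[R] B) (h : S.P A) : S.P B := S.surj (f := e.toLinearMap) e.surjective h

lemma Serre.sub {K L : Submodule R X} (hKL : K ≤ L) (h : S.P L) : S.P K :=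
  S.inj (Submodule.inclusion_injective hKL) h

lemma Serre.ses {f : A →ₗ[R] B} {g : B →ₗ[R] C} (h : SES f g) (hA : S.P A) (hC : S.P C) : S.P B :=
  S.ex f g h.exact hA hC

/-- the canonical split exact sequence for `Fin (n+1) → A` -/
lemma SES.pi (A : Type u) [AddCommGroup A] [Module R A] (n : ℕ) :
    SES (LinearMap.single R (fun _ : Fin (n+1) => A) 0)
      (LinearMap.funLeft R A (Fin.succ : Fin n → Fin (n+1))) := by
  refine ⟨fun x y h => by simpa using congrFun h 0, ?_, ?_⟩
  · intro x
    constructor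
    · intro hx
      refine ⟨x 0, ?_⟩
      ext j
      refine Fin.cases ?_ (fun j => ?_) j
      · simp
      · have := congrFun hx j
        simp [LinearMap.funLeft] at this
        simp [this]
    · rintro ⟨y, rfl⟩
      ext j
      simp [LinearMap.funLeft]
  · exact LinearMap.funLeft_surjective_of_injective R A _ (Fin.succ_injective n)

lemma Serre.pi (h : S.P A) (n : ℕ) : S.P (Fin n → A) := by
  induction n with
  | zero => exact S.zero _
  | succ n ih => exact S.ses (SES.pi A n) h ih

lemma Serre.xt_pi (i : ℕ) (h : S.P (XT R N X i)) (n : ℕ) : S.P (XT R (Fin n → N) X i) := by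
  induction n with
  | zero =>
    have := xt_subsingleton_left (R := R) (N := Fin 0 → N) (X := X) i
    exact S.zero _
  | succ n ih => exact S.ex _ _ ((SES.pi N n).exL2 X i) ih h

/-- dévissage -/
lemma Serre.dev [IsNoetherianRing R] (a : Ideal R) (n : ℕ)
    (h : ∀ j ≤ n, S.P (XT R (R ⧸ a) X j)) : ∀ (j : ℕ), j ≤ n → ∀ (N : Type u) [AddCommGroup N]
    [Module R N] [Module.Finite R N], (∀ r ∈ a, ∀ m : N, r • m = 0) → S.P (XT R N X j) := by
  have key : ∀ (N : Type u) [AddCommGroup N] [Module R N] [Module.Finite R N],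
      (∀ r ∈ a, ∀ m : N, r • m = 0) →
      ∃ (k : ℕ) (f : (Fin k → R ⧸ a) →ₗ[R] N), Function.Surjective f := by
    intro N _ _ _ hN
    let _ : Module (R ⧸ a) N := Module.IsTorsionBySet.module (I := a) (by
      intro m r; exact hN r r.2 m)
    have : IsScalarTower R (R ⧸ a) N := Module.IsTorsionBySet.isScalarTower (I := a) (by
      intro m r; exact hN r r.2 m)
    have : Module.Finite (R ⧸ a) N := Module.Finite.of_restrictScalars_finite R (R ⧸ a) N
    obtain ⟨k, f, hf⟩ := Module.Finite.exists_fin' (R ⧸ a) N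
    exact ⟨k, f.restrictScalars R, hf⟩
  intro j
  induction j with
  | zero =>
    intro hj N _ _ _ hN
    obtain ⟨k, f, hf⟩ := key N hN
    exact S.inj (mapL0_inj X hf) (S.xt_pi 0 (h 0 (Nat.zero_le _)) k)
  | succ j ih =>
    intro hj N _ _ _ hN
    obtain ⟨k, f, hf⟩ := key N hN
    have ses := SES.ker f hf
    refine S.ex _ _ (ses.exL3 X j) (ih (by omega) _ ?_) (S.xt_pi _ (h _ hj) k)
    intro r hr m
    ext i
    obtain ⟨y, hy⟩ := Submodule.Quotient.mk_surjective a ((m : Fin k → R ⧸ a) i)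
    simp only [SetLike.val_smul, Pi.smul_apply, ← hy, ZeroMemClass.coe_zero, Pi.zero_apply]
    rw [← Submodule.Quotient.mk_smul, Submodule.Quotient.mk_eq_zero]
    exact a.mul_mem_right _ hr

lemma Serre.dev_all [IsNoetherianRing R] (a : Ideal R)
    (h : ∀ j, S.P (XT R (R ⧸ a) X j)) (j : ℕ) (N : Type u) [AddCommGroup N]
    [Module R N] [Module.Finite R N] (hN : ∀ r ∈ a, ∀ m : N, r • m = 0) : S.P (XT R N X j) :=
  S.dev a j (fun j _ => h j) j le_rfl N hN

lemma Serre.xt_of [IsNoetherianRing R] (h : S.P X) (j : ℕ) (N : Type u) [AddCommGroup N]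
    [Module R N] [Module.Finite R N] : S.P (XT R N X j) := by
  refine S.dev_all (⊥ : Ideal R) ?_ j N (by intro r hr m; rw [Ideal.mem_bot.1 hr, zero_smul])
  have e : (R ⧸ (⊥ : Ideal R)) ≃ₗ[R] R := Submodule.quotEquivOfEqBot _ rfl
  intro j
  refine S.iso (equivL X e j) ?_
  cases j with
  | zero => exact S.iso ((xt0 R X).trans (LinearMap.ringLmapEquivSelf R R X)).symm h
  | succ j =>
    have : Subsingleton (XT R R X (j+1)) := ⟨fun x y => by
      rw [xt_projective j x, xt_projective j y]⟩
    exact S.zero _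

/-- `0 :_X a` -/
abbrev tb (X : Type u) [AddCommGroup X] [Module R X] (a : Ideal R) : Submodule R X :=
  Submodule.torsionBySet R X (a : Set R)

lemma mem_tb {a : Ideal R} {x : X} : x ∈ tb X a ↔ ∀ r ∈ a, r • x = 0 := by
  rw [Submodule.mem_torsionBySet_iff]
  exact ⟨fun h r hr => h ⟨r, hr⟩, fun h r => h r r.2⟩

lemma tb_mono {a b : Ideal R} (h : a ≤ b) : tb X b ≤ tb X a := by
  intro x hx; rw [mem_tb] at *; exact fun r hr => hx r (h hr)

/-- `Hom(R/a, X) = 0 :_X a` -/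
noncomputable def homQuot (X : Type u) [AddCommGroup X] [Module R X] (a : Ideal R) :
    ((R ⧸ a) →ₗ[R] X) ≃ₗ[R] tb X a :=
  LinearEquiv.ofBijective
    (LinearMap.codRestrict (tb X a) (LinearMap.applyₗ (R := R) (Submodule.Quotient.mk (p := a) 1))
      (by
        intro f
        rw [mem_tb]
        intro r hr
        rw [LinearMap.applyₗ_apply_apply, ← map_smul, ← Submodule.Quotient.mk_smul,
          (Submodule.Quotient.mk_eq_zero a).2 (by simpa using hr), map_zero]))
    (by
      constructor
      · intro f g hfg
        have h1 := congrArg Subtype.val hfg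
        simp only [LinearMap.codRestrict_apply, LinearMap.applyₗ_apply_apply] at h1
        refine LinearMap.ext fun y => ?_
        obtain ⟨r, rfl⟩ := Submodule.Quotient.mk_surjective a y
        have : (Submodule.Quotient.mk r : R ⧸ a) = r • Submodule.Quotient.mk 1 := by
          rw [← Submodule.Quotient.mk_smul]; simp
        rw [this, map_smul, map_smul, h1]
      · rintro ⟨x, hx⟩
        rw [mem_tb] at hx
        refine ⟨Submodule.liftQ a (LinearMap.toSpanSingleton R X x) ?_, ?_⟩
        · intro r hr
          simpa using hx r hr
        · ext
          change LinearMap.toSpanSingleton R X x 1 = x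
          simp)

lemma Serre.tb_iff (a : Ideal R) : S.P (XT R (R ⧸ a) X 0) ↔ S.P (tb X a) :=
  ⟨S.iso ((xt0 _ _).trans (homQuot X a)), S.iso ((xt0 _ _).trans (homQuot X a)).symm⟩

lemma Serre.tb_pow [IsNoetherianRing R] (a : Ideal R) (h : S.P (tb X a)) (k : ℕ) :
    S.P (tb X (a ^ k)) := by
  induction k with
  | zero =>
    have : Subsingleton (tb X (a ^ 0)) := by
      refine ⟨fun x y => ?_⟩
      have : ∀ x : tb X (a ^ 0), x = 0 := by
        intro x
        have := mem_tb.1 x.2 1 (by simp)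
        ext; simpa using this
      rw [this x, this y]
    exact S.zero _
  | succ k ih =>
    obtain ⟨n, g, hg⟩ := Submodule.fg_iff_exists_fin_generating_family.1
      (IsNoetherian.noetherian a)
    have hga : ∀ i, g i ∈ a := fun i => by rw [← hg]; exact Submodule.subset_span ⟨i, rfl⟩
    let φ : tb X (a ^ (k+1)) →ₗ[R] (Fin n → tb X (a ^ k)) := LinearMap.pi fun i =>
      LinearMap.restrict (LinearMap.lsmul R X (g i)) (by
        intro x hx
        rw [mem_tb] at *
        intro r hr
        rw [LinearMap.lsmul_apply, ← mul_smul]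
        exact hx _ (by rw [pow_succ]; exact Ideal.mul_mem_mul hr (hga i)))
    refine S.ex (Submodule.inclusion (tb_mono (Ideal.pow_le_self (Nat.succ_ne_zero k)))) φ ?_ h
      (S.pi ih n)
    intro x
    constructor
    · intro hx
      refine ⟨⟨x, ?_⟩, rfl⟩
      rw [mem_tb]
      intro r hr
      rw [← hg] at hr
      induction hr using Submodule.span_induction with
      | mem r hr =>
        obtain ⟨i, rfl⟩ := hr
        have := congrArg Subtype.val (congrFun hx i)
        exact this
      | zero => simp
      | add r s _ _ h1 h2 => rw [add_smul, h1, h2, add_zero]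
      | smul r s _ h1 => rw [smul_eq_mul, mul_smul, h1, smul_zero]
    · rintro ⟨y, rfl⟩
      ext i
      exact mem_tb.1 y.2 _ (hga i)

lemma Serre.of_pow [IsNoetherianRing R] (a : Ideal R) (h : S.P (tb X a)) (k : ℕ)
    (hk : ∀ r ∈ a ^ k, ∀ x : X, r • x = 0) : S.P X := by
  have : tb X (a ^ k) = ⊤ := by
    rw [eq_top_iff]; intro x _; rw [mem_tb]; exact fun r hr => hk r hr x
  exact S.iso ((LinearEquiv.ofEq _ _ this).trans Submodule.topEquiv) (S.tb_pow a h k)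

/-- kernel of multiplication by `x` -/
abbrev kx (x : R) (X : Type u) [AddCommGroup X] [Module R X] : Submodule R X :=
  LinearMap.ker (LinearMap.lsmul R X x)

/-- image of multiplication by `x` -/
abbrev ix (x : R) (X : Type u) [AddCommGroup X] [Module R X] : Submodule R X :=
  LinearMap.range (LinearMap.lsmul R X x)

/-- cokernel of multiplication by `x` -/
abbrev qx (x : R) (X : Type u) [AddCommGroup X] [Module R X] : Type u := X ⧸ ix x X

lemma mem_kx {x : R} {m : X} : m ∈ kx x X ↔ x • m = 0 := by simp [kx]

lemma mem_ix {x : R} {m : X} : m ∈ ix x X ↔ ∃ y, x • y = m := by simp [ix]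

lemma Serre.x_lemma (a : Ideal R) (x : R) (hx : x ∈ a) (h1 : ∀ i, S.P (XT R (R ⧸ a) (kx x X) i))
    (h2 : ∀ i, S.P (XT R (R ⧸ a) (qx x X) i)) (i : ℕ) : S.P (XT R (R ⧸ a) X i) := by
  have s1 := SES.kerRange (LinearMap.lsmul R X x)
  have s2 := SES.mkQ (ix x X)
  have hker : S.P (LinearMap.ker (mapR (R ⧸ a) (ix x X).subtype i)) := by
    cases i with
    | zero =>
      rw [LinearMap.ker_eq_bot.2 (mapR0_inj _ (Submodule.injective_subtype _))]
      exact S.zero _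
    | succ i =>
      rw [LinearMap.exact_iff.1 (s2.exR1 (R ⧸ a) i)]
      exact S.surj (LinearMap.surjective_rangeRestrict _) (h2 i)
  have hcomp : ∀ y, mapR (R ⧸ a) (ix x X).subtype i
      (mapR (R ⧸ a) (LinearMap.lsmul R X x).rangeRestrict i y) = 0 := by
    intro y
    rw [← mapR_comp]
    have : (ix x X).subtype ∘ₗ (LinearMap.lsmul R X x).rangeRestrict = x • LinearMap.id := by
      ext; rfl
    rw [this, mapR_smul, mapR_id]
    refine xt_smul_left x ?_ i y
    intro n
    obtain ⟨r, rfl⟩ := Submodule.Quotient.mk_surjective a n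
    rw [← Submodule.Quotient.mk_smul, Submodule.Quotient.mk_eq_zero]
    exact a.mul_mem_right _ hx
  refine S.ex (mapR (R ⧸ a) (kx x X).subtype i)
    (LinearMap.codRestrict _ (mapR (R ⧸ a) (LinearMap.lsmul R X x).rangeRestrict i) hcomp) ?_
    (h1 i) hker
  have := s1.exR2 (R ⧸ a) i
  intro y
  rw [← this y]
  exact Subtype.ext_iff

lemma Serre.kx1 (a : Ideal R) (x : R) (h0 : S.P (XT R (R ⧸ a) X 0))
    (h1 : S.P (XT R (R ⧸ a) X 1)) :
    S.P (XT R (R ⧸ a) (kx x X) 0) ∧ S.P (XT R (R ⧸ a) (kx x X) 1) := by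
  have s1 := SES.kerRange (LinearMap.lsmul R X x)
  refine ⟨S.inj (mapR0_inj _ (Submodule.injective_subtype _)) h0, ?_⟩
  refine S.ex _ _ (s1.exR1 (R ⧸ a) 0) ?_ h1
  exact S.inj (mapR0_inj _ (Submodule.injective_subtype (ix x X))) h0

lemma Serre.qx0 (a : Ideal R) (x : R) (h0 : S.P (XT R (R ⧸ a) X 0))
    (h1 : S.P (XT R (R ⧸ a) X 1)) (h2 : S.P (XT R (R ⧸ a) (kx x X) 2)) :
    S.P (XT R (R ⧸ a) (qx x X) 0) := by
  have s1 := SES.kerRange (LinearMap.lsmul R X x)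
  have s2 := SES.mkQ (ix x X)
  exact S.ex _ _ (s2.exR3 (R ⧸ a) 0) h0 (S.ex _ _ (s1.exR3 (R ⧸ a) 1) h1 h2)

theorem Serre.jind [IsNoetherianRing R] (a : Ideal R)
    (Q : ∀ (X : Type u) [AddCommGroup X] [Module R X], Prop)
    (h1 : ∀ (X : Type u) [AddCommGroup X] [Module R X], Q X → S.P (tb X a))
    (h2 : ∀ (X : Type u) [AddCommGroup X] [Module R X], Q X → ∀ p : Ideal R, p.IsPrime → ¬ a ≤ p →
      ∃ x ∈ a, x ∉ p ∧ Q (kx x X) ∧ ((∀ i, S.P (XT R (R ⧸ a) (kx x X) i)) →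
        ∀ i, S.P (XT R (R ⧸ a) (qx x X) i)))
    (X : Type u) [AddCommGroup X] [Module R X] (hQ : Q X) (i : ℕ) : S.P (XT R (R ⧸ a) X i) := by
  suffices H : ∀ J : Ideal R, ∀ (X : Type u) [AddCommGroup X] [Module R X], Q X →
      (∀ r ∈ J, ∀ x : X, r • x = 0) → ∀ i, S.P (XT R (R ⧸ a) X i) from
    H ⊥ X hQ (by intro r hr m; rw [Ideal.mem_bot.1 hr, zero_smul]) i
  intro J
  induction J using IsNoetherian.induction (R := R) (M := R) with
  | hgt J ih =>
  intro X _ _ hQ hJ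
  by_cases hrad : a ≤ Ideal.radical J
  · obtain ⟨k, hk⟩ := Ideal.exists_pow_le_of_le_radical_of_fg hrad (IsNoetherian.noetherian a)
    have : S.P X := S.of_pow a (h1 X hQ) k (fun r hr x => hJ r (hk hr) x)
    exact fun i => S.xt_of this i _
  · have : ∃ p : Ideal R, p.IsPrime ∧ J ≤ p ∧ ¬ a ≤ p := by
      by_contra! hcon
      apply hrad
      rw [Ideal.radical_eq_sInf]
      exact le_sInf fun p hp => hcon p hp.2 hp.1
    obtain ⟨p, hp, hJp, hap⟩ := this
    obtain ⟨x, hxa, hxp, hQx, hq⟩ := h2 X hQ p hp hap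
    have hk : ∀ i, S.P (XT R (R ⧸ a) (kx x X) i) := by
      refine ih (J ⊔ Ideal.span {x}) ?_ _ hQx ?_
      · refine lt_of_le_of_ne le_sup_left fun h => hxp (hJp ?_)
        rw [h]
        exact Ideal.mem_sup_right (Ideal.mem_span_singleton_self x)
      · intro r hr m
        obtain ⟨j, hj, y, hy, rfl⟩ := Submodule.mem_sup.1 hr
        obtain ⟨c, rfl⟩ := Ideal.mem_span_singleton'.1 hy
        ext
        have := mem_kx.1 m.2
        simp [add_smul, mul_smul, this, hJ j hj]
    exact S.x_lemma a x hxa hk (hq hk)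

/-- The Serre class of finitely generated modules. -/
def fgS (R : Type u) [CommRing R] [IsNoetherianRing R] : Serre R where
  P M _ _ := Module.Finite R M
  zero M _ _ _ := inferInstance
  ex {A B C} _ _ _ _ _ _ f g h hA hC := by
    have hr : (LinearMap.range g).FG := IsNoetherian.noetherian _
    have hk : (LinearMap.ker g).FG := by
      rw [LinearMap.exact_iff.1 h, LinearMap.range_eq_map]
      exact Submodule.FG.map _ hA.1
    refine ⟨Submodule.fg_of_fg_map_of_fg_inf_ker g ?_ (by simpa using hk)⟩
    rwa [← LinearMap.range_eq_map]

end
end LC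

end

section

namespace LC

section
variable {R : Type u} [CommRing R]
variable {X Y : Type u} [AddCommGroup X] [Module R X] [AddCommGroup Y] [Module R Y]

/-- `a`-torsion modules -/
def Tors (a : Ideal R) (X : Type u) [AddCommGroup X] [Module R X] : Prop :=
  ∀ x : X, ∃ n : ℕ, ∀ r ∈ a ^ n, r • x = 0

lemma Tors.of_inj {a : Ideal R} (h : Tors a Y) (f : X →ₗ[R] Y) (hf : Function.Injective f) :
    Tors a X := by
  intro x
  obtain ⟨n, hn⟩ := h (f x)
  refine ⟨n, fun r hr => hf ?_⟩
  rw [map_smul, hn r hr, map_zero]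

lemma Tors.of_surj {a : Ideal R} (h : Tors a X) (f : X →ₗ[R] Y) (hf : Function.Surjective f) :
    Tors a Y := by
  intro y
  obtain ⟨x, rfl⟩ := hf y
  obtain ⟨n, hn⟩ := h x
  refine ⟨n, fun r hr => ?_⟩
  rw [← map_smul, hn r hr, map_zero]

lemma Tors.sub {a : Ideal R} (h : Tors a X) (K : Submodule R X) : Tors a K :=
  h.of_inj K.subtype K.injective_subtype

lemma Tors.quot {a : Ideal R} (h : Tors a X) (K : Submodule R X) : Tors a (X ⧸ K) :=
  h.of_surj K.mkQ K.mkQ_surjective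

lemma artinian_one (x : R) (ht : ∀ m : X, ∃ n : ℕ, x ^ n • m = 0) (hk : IsArtinian R (kx x X)) :
    IsArtinian R X := by
  rw [← monotone_stabilizes_iff_artinian]
  intro f
  let F : ℕ → Submodule R X := fun k => OrderDual.ofDual (f k)
  have hF : ∀ {k l}, k ≤ l → F l ≤ F k := fun h => f.monotone h
  let V : ℕ → ℕ → Submodule R X := fun k j =>
    (F k ⊓ LinearMap.ker (LinearMap.lsmul R X (x ^ (j+1)))).map (LinearMap.lsmul R X (x ^ j))
  have memV : ∀ k j v, v ∈ V k j ↔ ∃ z ∈ F k, x ^ (j+1) • z = 0 ∧ x ^ j • z = v := by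
    intro k j v
    simp [V, and_assoc]
  have Vle : ∀ k j, V k j ≤ kx x X := by
    intro k j v hv
    obtain ⟨z, hz, h1, rfl⟩ := (memV _ _ _).1 hv
    rw [mem_kx, ← mul_smul, ← pow_succ', h1]
  have Vmono : ∀ {k l i j}, k ≤ l → i ≤ j → V l j ≤ V k i := by
    intro k l i j hkl hij v hv
    obtain ⟨z, hz, h1, rfl⟩ := (memV _ _ _).1 hv
    refine (memV _ _ _).2 ⟨x ^ (j - i) • z, (F k).smul_mem _ (hF hkl hz), ?_, ?_⟩
    · rw [← mul_smul, ← pow_add, show i + 1 + (j - i) = j + 1 by omega, h1]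
    · rw [← mul_smul, ← pow_add, show i + (j - i) = j by omega]
  let V' : ℕ → ℕ → Submodule R (kx x X) := fun k j => (V k j).comap (kx x X).subtype
  have V'inj : ∀ k j l i, V' k j = V' l i → V k j = V l i := by
    intro k j l i h
    have h2 := congrArg (Submodule.map (kx x X).subtype) h
    simp only [V', Submodule.map_comap_subtype] at h2
    rwa [inf_eq_right.2 (Vle _ _), inf_eq_right.2 (Vle _ _)] at h2
  have V'mono : ∀ {k l i j}, k ≤ l → i ≤ j → V' l j ≤ V' k i := fun h1 h2 =>
    Submodule.comap_mono (Vmono h1 h2)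
  -- diagonal stabilisation
  obtain ⟨d, hd⟩ := IsArtinian.monotone_stabilizes
    (⟨fun n => OrderDual.toDual (V' n n), fun m n h => V'mono h h⟩ : ℕ →o (Submodule R (kx x X))ᵒᵈ)
  have hdd : ∀ k j, d ≤ k → d ≤ j → V' k j = V' d d := by
    intro k j hk hj
    refine le_antisymm (V'mono hk hj) ?_
    have h3 : V' d d = V' (max k j) (max k j) := congrArg OrderDual.ofDual (hd (max k j) (by omega))
    rw [h3]
    exact V'mono (le_max_left _ _) (le_max_right _ _)
  have hrow : ∀ j, ∃ n, ∀ m, n ≤ m → V' n j = V' m j := by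
    intro j
    obtain ⟨n, hn⟩ := IsArtinian.monotone_stabilizes
      (⟨fun n => OrderDual.toDual (V' n j), fun m n h => V'mono h le_rfl⟩ :
        ℕ →o (Submodule R (kx x X))ᵒᵈ)
    exact ⟨n, fun m hm => congrArg OrderDual.ofDual (hn m hm)⟩
  choose g hg using hrow
  let K := d + (Finset.range d).sup g
  have hK : ∀ k j, K ≤ k → V k j = V K j := by
    intro k j hk
    apply V'inj
    by_cases hj : d ≤ j
    · rw [hdd k j (by omega) hj, hdd K j (by omega) hj]
    · have : g j ≤ (Finset.range d).sup g := Finset.le_sup (Finset.mem_range.2 (by omega))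
      rw [← hg j k (by omega), ← hg j K (by omega)]
  refine ⟨K, fun k hk => ?_⟩
  have main : ∀ j, ∀ z ∈ F K, x ^ j • z = 0 → z ∈ F k := by
    intro j
    induction j with
    | zero => intro z _ h; simp at h; rw [h]; exact zero_mem _
    | succ j ih =>
      intro z hz h
      have : x ^ j • z ∈ V k j := by
        rw [hK k j hk]; exact (memV _ _ _).2 ⟨z, hz, h, rfl⟩
      obtain ⟨z', hz', _, h2⟩ := (memV _ _ _).1 this
      have := ih (z - z') (Submodule.sub_mem _ hz (hF hk hz')) (by rw [smul_sub, h2, sub_self])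
      simpa using Submodule.add_mem _ this hz'
  have : F K = F k := le_antisymm (fun z hz => by
    obtain ⟨n, hn⟩ := ht z
    exact main n z hz hn) (hF hk)
  exact congrArg OrderDual.toDual this

lemma artinian_set (s : Finset R) : ∀ (X : Type u) [AddCommGroup X] [Module R X],
    (∀ x ∈ s, ∀ m : X, ∃ n : ℕ, x ^ n • m = 0) →
    IsArtinian R (Submodule.torsionBySet R X (s : Set R)) → IsArtinian R X := by
  classical
  induction s using Finset.induction_on with
  | empty =>
    intro X _ _ _ h
    refine isArtinian_of_injective (LinearMap.codRestrict
      (Submodule.torsionBySet R X ((∅ : Finset R) : Set R)) LinearMap.id ?_) ?_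
    · intro c; rw [Submodule.mem_torsionBySet_iff]; rintro ⟨a, ha⟩; simp at ha
    · intro x y h; exact congrArg Subtype.val h
  | insert y s hy ih =>
    intro X _ _ ht h
    refine ih X (fun x hx => ht x (Finset.mem_insert_of_mem hx)) ?_
    refine artinian_one y (fun m => ?_) ?_
    · obtain ⟨n, hn⟩ := ht y (Finset.mem_insert_self _ _) m
      exact ⟨n, by ext; simpa using hn⟩
    · refine isArtinian_of_injective (LinearMap.codRestrict
        (Submodule.torsionBySet R X ((insert y s : Finset R) : Set R))
        ((Submodule.subtype _) ∘ₗ (kx y _).subtype) ?_) ?_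
      · intro c
        rw [Submodule.mem_torsionBySet_iff]
        rintro ⟨r, hr⟩
        rcases Finset.mem_insert.1 hr with rfl | hr
        · have := congrArg Subtype.val (mem_kx.1 c.2)
          exact this
        · exact (Submodule.mem_torsionBySet_iff _ _).1 c.1.2 ⟨r, hr⟩
      · intro x y h
        have := congrArg Subtype.val h
        exact Subtype.ext (Subtype.ext this)

lemma artinian_of_tb (a : Ideal R) (ha : a.FG) (ht : Tors a X) (h : IsArtinian R (tb X a)) :
    IsArtinian R X := by
  obtain ⟨s, hs⟩ := ha
  refine artinian_set s X ?_ ?_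
  · intro x hx m
    obtain ⟨n, hn⟩ := ht m
    exact ⟨n, hn _ (Ideal.pow_mem_pow (by rw [← hs]; exact Submodule.subset_span hx) n)⟩
  · refine isArtinian_of_le (t := tb X a) ?_
    intro m hm
    rw [Submodule.mem_torsionBySet_iff] at hm
    rw [mem_tb]
    intro r hr
    have : Submodule.span R (s : Set R) ≤ LinearMap.ker (LinearMap.toSpanSingleton R X m) := by
      rw [Submodule.span_le]
      intro r hr
      simpa using hm ⟨r, hr⟩
    rw [← hs] at hr
    simpa using this hr

lemma artinian_of_killed [IsNoetherianRing R] (J : Ideal R)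
    (hJ : ∀ p : Ideal R, p.IsPrime → J ≤ p → p.IsMaximal) [Module.Finite R X]
    (hX : ∀ r ∈ J, ∀ x : X, r • x = 0) : IsArtinian R X := by
  let _ : Module (R ⧸ J) X := Module.IsTorsionBySet.module (I := J) (by
    intro m r; exact hX r r.2 m)
  have : IsScalarTower R (R ⧸ J) X := Module.IsTorsionBySet.isScalarTower (I := J) (by
    intro m r; exact hX r r.2 m)
  have : Module.Finite (R ⧸ J) X := Module.Finite.of_restrictScalars_finite R (R ⧸ J) X
  have : IsArtinianRing (R ⧸ J) := by
    rw [isArtinianRing_iff_krullDimLE_zero, Ring.krullDimLE_zero_iff]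
    intro I hI
    have h1 : (I.comap (Ideal.Quotient.mk J)).IsMaximal := hJ _ inferInstance (by
      intro r hr
      rw [Ideal.mem_comap, Ideal.Quotient.eq_zero_iff_mem.2 hr]; exact zero_mem _)
    rw [← Ideal.map_comap_of_surjective _ Ideal.Quotient.mk_surjective I]
    refine Ideal.IsMaximal.map_of_surjective_of_ker_le Ideal.Quotient.mk_surjective ?_
    exact Ideal.comap_mono bot_le
  have : IsArtinian (R ⧸ J) X := inferInstance
  exact isArtinian_of_surjective_algebraMap (S := R) (R := R ⧸ J) Ideal.Quotient.mk_surjective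

/-- secondary decomposition, weak form -/
lemma sec_artinian [IsNoetherianRing R] (b : Ideal R) [IsArtinian R X] :
    ∃ F : Finset (Ideal R), (∀ P ∈ F, P.IsPrime ∧ ¬ b ≤ P) ∧ ∃ (n : ℕ) (V : Submodule R X),
      (∀ r ∈ b ^ n, ∀ v ∈ V, r • v = 0) ∧
      ∀ x ∈ b, (∀ P ∈ F, x ∉ P) → V ⊔ ix x X = ⊤ := by
  classical
  obtain ⟨s, hs, hirr⟩ := exists_supIrred_decomposition (⊤ : Submodule R X)
  have dich : ∀ W ∈ s, ∀ x : R, (∃ n : ℕ, ∀ w ∈ W, x ^ n • w = 0) ∨ (∀ w ∈ W, ∃ w' ∈ W, x • w' = w) := by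
    intro W hW x
    obtain ⟨n, hn⟩ := (((LinearMap.lsmul R W x : Module.End R W)
      ).eventually_codisjoint_ker_pow_range_pow.and (Filter.eventually_ge_atTop 1)).exists
    obtain ⟨hn, hn1⟩ := hn
    have h1 := congrArg (Submodule.map W.subtype) (codisjoint_iff.1 hn)
    rw [Submodule.map_sup, Submodule.map_top, Submodule.range_subtype] at h1
    have hpow : ∀ w : W, ((LinearMap.lsmul R W x : Module.End R W) ^ n) w = x ^ n • w := by
      intro w
      clear h1 hn hn1
      induction n with
      | zero => simp
      | succ n ih => rw [pow_succ', Module.End.mul_apply, ih, LinearMap.lsmul_apply, ← mul_smul,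
          ← pow_succ']
    rcases (hirr hW).2 h1 with h | h
    · left
      refine ⟨n, fun w hw => ?_⟩
      rw [← h] at hw
      obtain ⟨w', hw', rfl⟩ := hw
      have : ((LinearMap.lsmul R W x : Module.End R W) ^ n) w' = 0 := hw'
      rw [hpow] at this
      exact congrArg Subtype.val this
    · right
      intro w hw
      rw [← h] at hw
      obtain ⟨_, ⟨w', rfl⟩, rfl⟩ := hw
      refine ⟨x ^ (n-1) • w', W.smul_mem _ w'.2, ?_⟩
      rw [hpow, ← mul_smul, ← pow_succ', Nat.sub_add_cancel hn1]
      rfl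
  let PP : Submodule R X → Ideal R := fun W => W.annihilator.radical
  have memPP : ∀ W x, x ∈ PP W ↔ ∃ n : ℕ, ∀ w ∈ W, x ^ n • w = 0 := by
    intro W x
    simp only [PP, Ideal.mem_radical_iff, Submodule.mem_annihilator]
  have surj_pow : ∀ W : Submodule R X, ∀ x : R, (∀ w ∈ W, ∃ w' ∈ W, x • w' = w) → ∀ n : ℕ,
      ∀ w ∈ W, ∃ w' ∈ W, x ^ n • w' = w := by
    intro W x hx n
    induction n with
    | zero => intro w hw; exact ⟨w, hw, by simp⟩
    | succ n ih =>
      intro w hw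
      obtain ⟨w', hw', rfl⟩ := hx w hw
      obtain ⟨w'', hw'', rfl⟩ := ih w' hw'
      exact ⟨w'', hw'', by rw [pow_succ', mul_smul]⟩
  have hne : ∀ W ∈ s, W ≠ ⊥ := fun W hW => (hirr hW).ne_bot
  have hprime : ∀ W ∈ s, (PP W).IsPrime := by
    intro W hW
    refine ⟨?_, ?_⟩
    · intro h
      apply hne W hW
      have : (1 : R) ∈ PP W := by rw [h]; trivial
      obtain ⟨n, hn⟩ := (memPP _ _).1 this
      rw [eq_bot_iff]
      intro w hw
      simpa using hn w hw
    · intro x y hxy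
      by_contra! hcon
      have hx := (dich W hW x).resolve_left (fun h => hcon.1 ((memPP _ _).2 h))
      have hy := (dich W hW y).resolve_left (fun h => hcon.2 ((memPP _ _).2 h))
      have hxys : ∀ w ∈ W, ∃ w' ∈ W, (x * y) • w' = w := by
        intro w hw
        obtain ⟨w', hw', rfl⟩ := hx w hw
        obtain ⟨w'', hw'', rfl⟩ := hy w' hw'
        exact ⟨w'', hw'', by rw [mul_smul]⟩
      obtain ⟨n, hn⟩ := (memPP _ _).1 hxy
      apply hne W hW
      rw [eq_bot_iff]
      intro w hw
      obtain ⟨w', hw', rfl⟩ := surj_pow W _ hxys n w hw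
      simpa using hn w' hw'
  have hnil : ∀ W, b ≤ PP W → ∃ n : ℕ, b ^ n ≤ W.annihilator := fun W h =>
    Ideal.exists_pow_le_of_le_radical_of_fg h (IsNoetherian.noetherian b)
  have hnil' : ∀ W, ∃ n : ℕ, b ≤ PP W → b ^ n ≤ W.annihilator := by
    intro W
    by_cases h : b ≤ PP W
    · obtain ⟨n, hn⟩ := hnil W h; exact ⟨n, fun _ => hn⟩
    · exact ⟨0, fun h' => (h h').elim⟩
  choose nn hnn using hnil'
  refine ⟨(s.filter fun W => ¬ b ≤ PP W).image PP, ?_, s.sup nn,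
    (s.filter fun W => b ≤ PP W).sup id, ?_, ?_⟩
  · intro P hP
    obtain ⟨W, hW, rfl⟩ := Finset.mem_image.1 hP
    rw [Finset.mem_filter] at hW
    exact ⟨hprime W hW.1, hW.2⟩
  · intro r hr v hv
    have : (s.filter fun W => b ≤ PP W).sup id ≤ kx r X := by
      refine Finset.sup_le fun W hW => ?_
      rw [Finset.mem_filter] at hW
      intro w hw
      rw [mem_kx]
      have h1 : r ∈ b ^ nn W := Ideal.pow_le_pow_right (Finset.le_sup hW.1) hr
      exact (Submodule.mem_annihilator.1 (hnn W hW.2 h1)) w hw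
    exact mem_kx.1 (this hv)
  · intro x hx hxP
    rw [eq_top_iff, ← hs]
    refine Finset.sup_le fun W hW => ?_
    by_cases h : b ≤ PP W
    · exact le_sup_of_le_left (Finset.le_sup (f := id) (Finset.mem_filter.2 ⟨hW, h⟩))
    · refine le_sup_of_le_right ?_
      have hx' := (dich W hW x).resolve_left (fun h' => hxP (PP W)
        (Finset.mem_image.2 ⟨W, Finset.mem_filter.2 ⟨hW, h⟩, rfl⟩) ((memPP _ _).2 h'))
      intro w hw
      obtain ⟨w', _, rfl⟩ := hx' w hw
      exact mem_ix.2 ⟨w', rfl⟩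

/-- local secondary representation property -/
def SecP (a p : Ideal R) (X : Type u) [AddCommGroup X] [Module R X] : Prop :=
  ∃ F : Finset (Ideal R), (∀ P ∈ F, P.IsPrime ∧ ¬ a ≤ P) ∧ ∃ n : ℕ,
    ∀ x ∈ a, (∀ P ∈ F, x ∉ P) → ∀ ξ : X, ∀ r ∈ a ^ n, ∃ t ∉ p, ∃ y : X, t • r • ξ = x • y

end
end LC

end

section

namespace LC

section
variable {R : Type u} [CommRing R]
variable {X Y : Type u} [AddCommGroup X] [Module R X] [AddCommGroup Y] [Module R Y]

lemma exists_common (M : Submonoid R) (N : Submodule R X) (hN : N.FG)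
    (h : ∀ n ∈ N, ∃ t ∈ M, t • n = 0) : ∃ t ∈ M, ∀ n ∈ N, t • n = 0 := by
  induction N, hN using Submodule.fg_induction with
  | singleton x =>
    obtain ⟨t, ht, h0⟩ := h x (Submodule.mem_span_singleton_self x)
    refine ⟨t, ht, fun n hn => ?_⟩
    obtain ⟨c, rfl⟩ := Submodule.mem_span_singleton.1 hn
    rw [smul_comm, h0, smul_zero]
  | sup N₁ N₂ _ _ ih1 ih2 =>
    obtain ⟨t, ht, h1⟩ := ih1 (fun n hn => h n (Submodule.mem_sup_left hn))
    obtain ⟨s, hs, h2⟩ := ih2 (fun n hn => h n (Submodule.mem_sup_right hn))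
    refine ⟨t * s, M.mul_mem ht hs, fun n hn => ?_⟩
    obtain ⟨a, ha, b, hb, rfl⟩ := Submodule.mem_sup.1 hn
    rw [smul_add, mul_smul, mul_smul, h2 b hb, smul_comm, h1 a ha]; simp

lemma fg_lift (g : X →ₗ[R] Y) (G : Submodule R Y) (hG : G.FG) (hle : G ≤ LinearMap.range g) :
    ∃ L : Submodule R X, L.FG ∧ L.map g = G := by
  obtain ⟨n, s, rfl⟩ := Submodule.fg_iff_exists_fin_generating_family.1 hG
  have : ∀ i, ∃ x, g x = s i := fun i => hle (Submodule.subset_span ⟨i, rfl⟩)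
  choose t ht using this
  refine ⟨Submodule.span R (Set.range t), Submodule.fg_span (Set.finite_range t), ?_⟩
  rw [Submodule.map_span, ← Set.range_comp]
  congr 2
  funext i
  exact ht i

lemma avoid (a : Ideal R) (F : Finset (Ideal R)) (hF : ∀ P ∈ F, P.IsPrime ∧ ¬ a ≤ P) :
    ∃ x ∈ a, ∀ P ∈ F, x ∉ P := by
  by_contra! hcon
  have : (a : Set R) ⊆ ⋃ P ∈ (F : Set (Ideal R)), (P : Set R) := by
    intro x hx
    obtain ⟨P, hP, hxP⟩ := hcon x hx
    simp only [Set.mem_iUnion]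
    exact ⟨P, hP, hxP⟩
  have := (Ideal.subset_union_prime (s := F) (f := id) ⊤ ⊤ (fun P hP _ _ => (hF P hP).1)
    (I := a)).1 (by simpa using this)
  obtain ⟨P, hP, h⟩ := this
  exact (hF P hP).2 h

section loc
variable (p : Ideal R) [hp : p.IsPrime]

lemma loc_killed (c : Ideal R) (x : X) (s : p.primeCompl) (h : ∀ r ∈ c, r • x = 0) :
    ∀ r ∈ c.map (algebraMap R (Localization.AtPrime p)),
      r • (LocalizedModule.mk x s : LocalizedModule p.primeCompl X) = 0 := by
  have : c.map (algebraMap R (Localization.AtPrime p)) ≤ LinearMap.ker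
      (LinearMap.toSpanSingleton (Localization.AtPrime p) (LocalizedModule p.primeCompl X)
        (LocalizedModule.mk x s)) := by
    rw [Ideal.map_le_iff_le_comap]
    intro r hr
    simp only [Ideal.mem_comap, LinearMap.mem_ker, LinearMap.toSpanSingleton_apply]
    rw [algebraMap_smul, LocalizedModule.smul'_mk, h r hr, LocalizedModule.zero_mk]
  intro r hr
  simpa using this hr

lemma secP_of [IsNoetherianRing R] (a : Ideal R) (hpa : p ∈ a.minimalPrimes) (ht : Tors a X)
    (hfin : Module.Finite (Localization.AtPrime p) (LocalizedModule p.primeCompl (tb X a))) :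
    SecP a p X := by
  let S := Localization.AtPrime p
  let W := LocalizedModule p.primeCompl X
  let b : Ideal S := a.map (algebraMap R S)
  have hNS : IsNoetherianRing S := IsLocalization.isNoetherianRing p.primeCompl S inferInstance
  have htors : Tors b W := by
    intro w
    induction w using LocalizedModule.induction_on with
    | h x s =>
    obtain ⟨n, hn⟩ := ht x
    refine ⟨n, ?_⟩
    rw [show b ^ n = (a ^ n).map (algebraMap R S) from (Ideal.map_pow _ _ _).symm]
    exact loc_killed p (a ^ n) x s hn
  have hle : tb W b ≤ LinearMap.range (LocalizedModule.map p.primeCompl (tb X a).subtype) := by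
    intro w hw
    rw [mem_tb] at hw
    induction w using LocalizedModule.induction_on with
    | h x s =>
    have h1 : ∀ n ∈ Submodule.map (LinearMap.toSpanSingleton R X x) a, ∃ t ∈ p.primeCompl,
        t • n = 0 := by
      rintro _ ⟨r, hr, rfl⟩
      have := hw _ (Ideal.mem_map_of_mem (algebraMap R S) hr)
      rw [algebraMap_smul, LocalizedModule.smul'_mk, IsLocalizedModule.mk_eq_mk',
        IsLocalizedModule.mk'_eq_zero'] at this
      obtain ⟨t, ht⟩ := this
      exact ⟨t, t.2, ht⟩
    obtain ⟨t, htp, ht⟩ := exists_common _ _ ((IsNoetherian.noetherian a).map _) h1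
    have htx : t • x ∈ tb X a := by
      rw [mem_tb]
      intro r hr
      rw [smul_comm]
      exact ht _ ⟨r, hr, rfl⟩
    refine ⟨LocalizedModule.mk ⟨t • x, htx⟩ (⟨t, htp⟩ * s), ?_⟩
    rw [LocalizedModule.map_mk]
    exact LocalizedModule.mk_cancel_common_left ⟨t, htp⟩ s x
  have hf1 : Module.Finite S (LinearMap.range (LocalizedModule.map p.primeCompl (tb X a).subtype)) :=
    Module.Finite.range _
  have hf2 : Module.Finite S (tb W b) := (fgS S).sub hle hf1
  have hart : IsArtinian S (tb W b) := by
    refine artinian_of_killed b ?_ ?_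
    · intro q hq hbq
      have h1 : q.comap (algebraMap R S) ≤ p := by
        have := (IsLocalization.isPrime_iff_isPrime_disjoint p.primeCompl S q).1 hq
        intro r hr
        by_contra hrp
        exact Set.disjoint_left.1 this.2 hrp hr
      have h2 : p ≤ q.comap (algebraMap R S) := hpa.2
        ⟨Ideal.IsPrime.comap _, Ideal.map_le_iff_le_comap.1 hbq⟩ h1
      have h3 : IsLocalRing.maximalIdeal S ≤ q := by
        rw [← Localization.AtPrime.map_eq_maximalIdeal]
        exact Ideal.map_le_iff_le_comap.2 h2
      rw [← (IsLocalRing.maximalIdeal.isMaximal S).eq_of_le hq.ne_top h3]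
      exact IsLocalRing.maximalIdeal.isMaximal S
    · intro r hr x
      ext
      exact mem_tb.1 x.2 r hr
  have hW : IsArtinian S W := artinian_of_tb b (IsNoetherian.noetherian b) htors hart
  obtain ⟨F, hF, n, V, hV, hx⟩ := sec_artinian (X := W) b
  classical
  refine ⟨F.image (Ideal.comap (algebraMap R S)), ?_, n, ?_⟩
  · intro P hP
    obtain ⟨Q, hQ, rfl⟩ := Finset.mem_image.1 hP
    have := (hF Q hQ).1
    exact ⟨inferInstance, fun h => (hF Q hQ).2 (Ideal.map_le_iff_le_comap.2 h)⟩
  · intro x hxa hxP ξ r hr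
    have h1 := hx (algebraMap R S x) (Ideal.mem_map_of_mem _ hxa) (fun P hP hxP' =>
      hxP _ (Finset.mem_image_of_mem _ hP) hxP')
    have h2 : (LocalizedModule.mk ξ 1 : W) ∈ V ⊔ ix (algebraMap R S x) W := by rw [h1]; trivial
    obtain ⟨v, hv, z, hz, hvz⟩ := Submodule.mem_sup.1 h2
    obtain ⟨w, rfl⟩ := mem_ix.1 hz
    have hrv : (algebraMap R S r) • v = 0 := hV _ (by
      rw [show b ^ n = (a ^ n).map (algebraMap R S) from (Ideal.map_pow _ _ _).symm]
      exact Ideal.mem_map_of_mem _ hr) v hv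
    have h3 : (LocalizedModule.mk (r • ξ) 1 : W) = x • r • w := by
      rw [← LocalizedModule.smul'_mk, ← hvz, smul_add, ← algebraMap_smul S r v, hrv, zero_add,
        algebraMap_smul, smul_comm]
    induction w using LocalizedModule.induction_on with
    | h w s =>
    rw [LocalizedModule.smul'_mk, LocalizedModule.smul'_mk, LocalizedModule.mk_eq] at h3
    obtain ⟨t, ht⟩ := h3
    refine ⟨t * s, (t * s).2, (t : R) • r • w, ?_⟩
    simp only [Submonoid.smul_def, one_smul] at ht
    rw [mul_smul, ht]
    rw [smul_comm]

end loc

/-- abstract version of the one-dimensional theorem -/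
theorem thmG [IsNoetherianRing R] (S : Serre R) (a : Ideal R) (T : Finset (Ideal R))
    (hT : ∀ p ∈ T, p.IsPrime)
    (H1 : ∀ (Y : Type u) [AddCommGroup Y] [Module R Y], Tors a Y →
      (∀ p ∈ T, ∀ y : Y, ∃ t ∉ p, t • y = 0) → S.P (tb Y a) → ∀ i, S.P (XT R (R ⧸ a) Y i))
    (H2 : ∀ (X : Type u) [AddCommGroup X] [Module R X], Tors a X → S.P (tb X a) →
      ∀ p ∈ T, SecP a p X)
    (X : Type u) [AddCommGroup X] [Module R X] (ht : Tors a X) (h0 : S.P (XT R (R ⧸ a) X 0))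
    (h1 : S.P (XT R (R ⧸ a) X 1)) (i : ℕ) : S.P (XT R (R ⧸ a) X i) := by
  classical
  refine S.jind a (fun X _ _ => Tors a X ∧ S.P (XT R (R ⧸ a) X 0) ∧ S.P (XT R (R ⧸ a) X 1))
    ?_ ?_ X ⟨ht, h0, h1⟩ i
  · intro X _ _ h
    exact (S.tb_iff a).1 h.2.1
  · rintro X _ _ ⟨ht, h0, h1⟩ p hp hap
    have hsec : ∀ q : Ideal R, ∃ F : Finset (Ideal R), (∀ P ∈ F, P.IsPrime ∧ ¬ a ≤ P) ∧ ∃ n : ℕ,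
        q ∈ T → ∀ x ∈ a, (∀ P ∈ F, x ∉ P) → ∀ ξ : X, ∀ r ∈ a ^ n, ∃ t ∉ q, ∃ y : X,
          t • r • ξ = x • y := by
      intro q
      by_cases hq : q ∈ T
      · obtain ⟨F, hF, n, hn⟩ := H2 X ht ((S.tb_iff a).1 h0) q hq
        exact ⟨F, hF, n, fun _ => hn⟩
      · exact ⟨∅, by simp, 0, fun h => (hq h).elim⟩
    choose F hF n hn using hsec
    obtain ⟨x, hxa, hx⟩ := avoid a (insert p (T.biUnion F)) (by
      intro P hP
      rcases Finset.mem_insert.1 hP with rfl | hP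
      · exact ⟨hp, hap⟩
      · obtain ⟨q, hq, hP⟩ := Finset.mem_biUnion.1 hP
        exact hF q P hP)
    refine ⟨x, hxa, hx p (Finset.mem_insert_self _ _), ⟨ht.sub _, S.kx1 a x h0 h1⟩, ?_⟩
    intro hk
    have hq0 := S.qx0 a x h0 h1 (hk 2)
    let N := T.sup n
    let Y1 : Submodule R (qx x X) := a ^ N • (⊤ : Submodule R (qx x X))
    have hloc : ∀ q ∈ T, ∀ y : Y1, ∃ t ∉ q, t • y = 0 := by
      rintro q hq ⟨y, hy⟩
      suffices H : ∃ t ∉ q, t • y = 0 by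
        obtain ⟨t, ht, h⟩ := H
        exact ⟨t, ht, Subtype.ext h⟩
      have hqp := hT q hq
      refine Submodule.smul_induction_on hy ?_ ?_
      · intro r hr η _
        obtain ⟨ξ, rfl⟩ := Submodule.Quotient.mk_surjective _ η
        obtain ⟨t, htq, y, hy⟩ := hn q hq x hxa (fun P hP => hx P (Finset.mem_insert_of_mem
          (Finset.mem_biUnion.2 ⟨q, hq, hP⟩))) ξ r (Ideal.pow_le_pow_right (Finset.le_sup hq) hr)
        refine ⟨t, htq, ?_⟩
        rw [← Submodule.Quotient.mk_smul, ← Submodule.Quotient.mk_smul,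
          Submodule.Quotient.mk_eq_zero, hy]
        exact mem_ix.2 ⟨y, rfl⟩
      · rintro y z ⟨t, ht, hy⟩ ⟨s, hs, hz⟩
        refine ⟨t * s, fun h => (hqp.mem_or_mem h).elim ht hs, ?_⟩
        rw [smul_add, mul_smul, mul_smul, hz, smul_comm, hy]; simp
    have hY1 : ∀ i, S.P (XT R (R ⧸ a) Y1 i) := by
      refine H1 Y1 ((ht.quot _).sub _) hloc ?_
      rw [← S.tb_iff]
      exact S.inj (mapR0_inj _ Y1.injective_subtype) hq0
    have s2 := SES.mkQ Y1
    have hQ : S.P ((qx x X) ⧸ Y1) := by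
      refine S.of_pow a ?_ N ?_
      · rw [← S.tb_iff]
        exact S.ex _ _ (s2.exR3 (R ⧸ a) 0) hq0 (hY1 1)
      · intro r hr y
        obtain ⟨η, rfl⟩ := Submodule.Quotient.mk_surjective _ y
        rw [← Submodule.Quotient.mk_smul, Submodule.Quotient.mk_eq_zero]
        exact Submodule.smul_mem_smul hr trivial
    exact fun i => S.ex _ _ (s2.exR2 (R ⧸ a) i) (hY1 i) (S.xt_of hQ i _)

theorem thm0 [IsNoetherianRing R] (a : Ideal R) (X : Type u) [AddCommGroup X] [Module R X]
    (ht : Tors a X) (hf : Module.Finite R (tb X a)) (hA : IsArtinian R (tb X a)) (i : ℕ) :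
    Module.Finite R (XT R (R ⧸ a) X i) := by
  classical
  refine (fgS R).jind a (fun X _ _ => Tors a X ∧ Module.Finite R (tb X a) ∧ IsArtinian R (tb X a))
    ?_ ?_ X ⟨ht, hf, hA⟩ i
  · intro X _ _ h
    exact h.2.1
  · rintro X _ _ ⟨ht, hf, hA⟩ p hp hap
    have : IsArtinian R X := artinian_of_tb a (IsNoetherian.noetherian a) ht hA
    obtain ⟨F, hF, n, V, hV, hFx⟩ := sec_artinian (X := X) a
    obtain ⟨x, hxa, hx⟩ := avoid a (insert p F) (by
      intro P hP
      rcases Finset.mem_insert.1 hP with rfl | hP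
      · exact ⟨hp, hap⟩
      · exact hF P hP)
    let j : tb (kx x X) a →ₗ[R] tb X a := LinearMap.restrict (kx x X).subtype (by
      intro z hz
      rw [mem_tb] at *
      exact fun r hr => congrArg Subtype.val (hz r hr))
    have hj : Function.Injective j := by
      intro u v h
      have h' : ((u : kx x X) : X) = ((v : kx x X) : X) :=
        congrArg (fun z : tb X a => (z : X)) h
      exact Subtype.ext (Subtype.ext h')
    refine ⟨x, hxa, hx p (Finset.mem_insert_self _ _), ⟨ht.sub _, (fgS R).inj hj hf,
      isArtinian_of_injective j hj⟩, ?_⟩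
    intro _
    have hVf : Module.Finite R V := (fgS R).sub (L := tb X (a ^ n))
      (fun v hv => mem_tb.2 fun r hr => hV r hr v hv) ((fgS R).tb_pow a hf n)
    have hq : Module.Finite R (qx x X) := by
      refine (fgS R).surj (f := (ix x X).mkQ ∘ₗ V.subtype) ?_ hVf
      intro y
      obtain ⟨ξ, rfl⟩ := Submodule.Quotient.mk_surjective _ y
      have h2 : ξ ∈ V ⊔ ix x X := by
        rw [hFx x hxa (fun P hP => hx P (Finset.mem_insert_of_mem hP))]; trivial
      obtain ⟨v, hv, z, hz, rfl⟩ := Submodule.mem_sup.1 h2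
      refine ⟨⟨v, hv⟩, ?_⟩
      change Submodule.Quotient.mk v = Submodule.Quotient.mk (v + z)
      rw [Submodule.Quotient.eq]
      simpa using hz
    exact fun i => (fgS R).xt_of hq i _

/-- `dim R/a ≤ 1`: primes that strictly contain a prime above `a` are maximal -/
def D1 (a : Ideal R) : Prop := ∀ p q : Ideal R, p.IsPrime → q.IsPrime → a ≤ p → p < q → q.IsMaximal

/-- the minimal primes as a finset -/
noncomputable def mins [IsNoetherianRing R] (a : Ideal R) : Finset (Ideal R) :=
  (Ideal.finite_minimalPrimes_of_isNoetherianRing R a).toFinset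

lemma mem_mins [IsNoetherianRing R] {a p : Ideal R} : p ∈ mins a ↔ p ∈ a.minimalPrimes := by
  simp [mins]

theorem thm1 [IsNoetherianRing R] (a : Ideal R) (hD : D1 a) (X : Type u) [AddCommGroup X]
    [Module R X] (ht : Tors a X) (h0 : Module.Finite R (XT R (R ⧸ a) X 0))
    (h1 : Module.Finite R (XT R (R ⧸ a) X 1)) (i : ℕ) : Module.Finite R (XT R (R ⧸ a) X i) := by
  refine thmG (fgS R) a (mins a) (fun p hp => (mem_mins.1 hp).1.1) ?_ ?_ X ht h0 h1 i
  · intro Y _ _ ht hloc hf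
    change Module.Finite R (tb Y a) at hf
    refine thm0 a Y ht hf ?_
    refine artinian_of_killed (Submodule.annihilator (tb Y a)) ?_ (fun r hr x =>
      Subtype.ext (Submodule.mem_annihilator.1 hr x x.2))
    intro q hq hJq
    have haq : a ≤ q := fun r hr => hJq (Submodule.mem_annihilator.2 fun n hn => mem_tb.1 hn r hr)
    obtain ⟨p, hp, hpq⟩ := Ideal.exists_minimalPrimes_le haq
    have := hp.1.1
    refine hD p q hp.1.1 hq hp.1.2 (lt_of_le_of_ne hpq ?_)
    rintro rfl
    obtain ⟨t, htp, hann⟩ := exists_common p.primeCompl (tb Y a) (Module.Finite.iff_fg.1 hf)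
      (fun n _ => hloc p (mem_mins.2 hp) n)
    exact htp (hJq (Submodule.mem_annihilator.2 hann))
  · intro X _ _ ht hf p hp
    have := (mem_mins.1 hp).1.1
    change Module.Finite R (tb X a) at hf
    exact secP_of p a (mem_mins.1 hp) ht inferInstance

/-- power torsion Serre class -/
def torS (u : R) : Serre R where
  P M _ _ := ∀ m : M, ∃ n : ℕ, u ^ n • m = 0
  zero M _ _ _ := fun m => ⟨0, Subsingleton.elim _ _⟩
  ex {A B C} _ _ _ _ _ _ f g h hA hC := by
    intro b
    obtain ⟨n, hn⟩ := hC (g b)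
    rw [← map_smul] at hn
    obtain ⟨α, hα⟩ := (h _).1 hn
    obtain ⟨m, hm⟩ := hA α
    exact ⟨m + n, by rw [pow_add, mul_smul, ← hα, ← map_smul, hm, map_zero]⟩

/-- generically finitely generated modules -/
def genS [IsNoetherianRing R] (T : Finset (Ideal R)) (hT : ∀ p ∈ T, p.IsPrime) : Serre R where
  P M _ _ := ∃ F : Submodule R M, F.FG ∧ ∃ s : R, (∀ p ∈ T, s ∉ p) ∧ ∀ m : M, ∃ n : ℕ, s ^ n • m ∈ F
  zero M _ _ _ := ⟨⊥, Submodule.fg_bot, 1, fun p hp h => (hT p hp).ne_top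
    ((Ideal.eq_top_iff_one p).2 h), fun m => ⟨0, by simpa using Subsingleton.elim _ _⟩⟩
  ex {A B C} _ _ _ _ _ _ f g h hA hC := by
    obtain ⟨F, hF, s, hs, hFs⟩ := hA
    obtain ⟨G, hG, t, ht, hGt⟩ := hC
    have : IsNoetherian R G := isNoetherian_of_fg_of_noetherian _ hG
    have hG' : (G ⊓ LinearMap.range g).FG := Submodule.FG.of_le hG inf_le_left
    obtain ⟨L, hL, hLmap⟩ : ∃ L : Submodule R B, L.FG ∧ L.map g = G ⊓ LinearMap.range g := by
      exact fg_lift g _ hG' inf_le_right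
    refine ⟨F.map f ⊔ L, (hF.map f).sup hL, s * t, fun p hp h =>
      ((hT p hp).mem_or_mem h).elim (hs p hp) (ht p hp), fun b => ?_⟩
    obtain ⟨n, hn⟩ := hGt (g b)
    have h1 : t ^ n • g b ∈ L.map g := by
      rw [hLmap]; exact ⟨hn, by rw [← map_smul]; exact ⟨_, rfl⟩⟩
    obtain ⟨l, hl, hgl⟩ := h1
    have h2 : g (t ^ n • b - l) = 0 := by rw [map_sub, map_smul, hgl, sub_self]
    obtain ⟨α, hα⟩ := (h _).1 h2
    obtain ⟨m, hm⟩ := hFs α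
    have h3 : s ^ m • t ^ n • b ∈ F.map f ⊔ L := by
      have : s ^ m • t ^ n • b = f (s ^ m • α) + s ^ m • l := by
        rw [map_smul, hα, smul_sub]; abel
      rw [this]
      exact Submodule.add_mem_sup ⟨_, hm, rfl⟩ (L.smul_mem _ hl)
    refine ⟨m + n, ?_⟩
    have : (s * t) ^ (m + n) • b = (s ^ n * t ^ m) • s ^ m • t ^ n • b := by
      rw [← mul_smul, ← mul_smul]; congr 1; ring
    rw [this]
    exact Submodule.smul_mem _ _ h3

theorem thmGen [IsNoetherianRing R] (a : Ideal R) (X : Type u) [AddCommGroup X]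
    [Module R X] (ht : Tors a X) (h0 : Module.Finite R (XT R (R ⧸ a) X 0))
    (h1 : Module.Finite R (XT R (R ⧸ a) X 1)) (i : ℕ) :
    ∃ F : Submodule R (XT R (R ⧸ a) X i), F.FG ∧ ∃ s : R, (∀ p ∈ a.minimalPrimes, s ∉ p) ∧
      ∀ m, ∃ n : ℕ, s ^ n • m ∈ F := by
  have hT : ∀ p ∈ mins a, p.IsPrime := fun p hp => (mem_mins.1 hp).1.1
  have hone : ∀ p ∈ mins a, (1 : R) ∉ p := fun p hp h => (hT p hp).ne_top
    ((Ideal.eq_top_iff_one p).2 h)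
  have hfg : ∀ (M : Type u) [AddCommGroup M] [Module R M], Module.Finite R M →
      (genS (mins a) hT).P M := fun M _ _ h => ⟨⊤, h.1, 1, hone, fun m => ⟨0, trivial⟩⟩
  have main := thmG (genS (mins a) hT) a (mins a) hT ?_ ?_ X ht (hfg _ h0) (hfg _ h1) i
  · obtain ⟨F, hF, s, hs, h⟩ := main
    exact ⟨F, hF, s, fun p hp => hs p (mem_mins.2 hp), h⟩
  · rintro Y _ _ ht hloc ⟨F, hF, s, hs, hFs⟩ i
    have h2 : ∃ x ∈ F.annihilator, ∀ P ∈ mins a, x ∉ P := by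
      refine avoid _ _ fun p hp => ⟨hT p hp, fun hle => ?_⟩
      have := hT p hp
      obtain ⟨t, htp, hann⟩ := exists_common p.primeCompl F hF (fun n _ => by
        obtain ⟨t, ht, h⟩ := hloc p hp n
        exact ⟨t, ht, Subtype.ext h⟩)
      exact htp (hle (Submodule.mem_annihilator.2 hann))
    obtain ⟨t, htann, ht'⟩ := h2
    have h3 : (torS (s * t)).P (tb Y a) := by
      intro m
      obtain ⟨n, hn⟩ := hFs m
      refine ⟨n + 1, ?_⟩
      have : (s * t) ^ (n + 1) • m = (s * t ^ n) • t • s ^ n • m := by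
        rw [← mul_smul, ← mul_smul]; congr 1; ring
      rw [this, Submodule.mem_annihilator.1 htann _ hn, smul_zero]
    have h4 : ∀ y : Y, ∃ n : ℕ, (s * t) ^ n • y = 0 := by
      intro y
      obtain ⟨k, hk⟩ := ht y
      obtain ⟨n, hn⟩ := (torS (s * t)).tb_pow a h3 k ⟨y, mem_tb.2 hk⟩
      exact ⟨n, congrArg Subtype.val hn⟩
    refine Serre.xt_of (genS (mins a) hT) (X := Y) ⟨⊥, Submodule.fg_bot, s * t, fun p hp h =>
      ((hT p hp).mem_or_mem h).elim (hs p hp) (ht' p hp), fun m => ?_⟩ i _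
    obtain ⟨n, hn⟩ := h4 m
    exact ⟨n, by simpa using hn⟩
  · rintro X _ _ ht ⟨F, hF, s, hs, hFs⟩ p hp
    have := hT p hp
    refine secP_of p a (mem_mins.1 hp) ht ?_
    have hFf : Module.Finite R F := Module.Finite.iff_fg.2 hF
    have hFl : Module.Finite (Localization.AtPrime p) (LocalizedModule p.primeCompl F) :=
      inferInstance
    refine Module.Finite.of_surjective (LocalizedModule.map p.primeCompl F.subtype) ?_
    intro w
    induction w using LocalizedModule.induction_on with
    | h x t =>
    obtain ⟨n, hn⟩ := hFs x
    have hsn : s ^ n ∈ p.primeCompl := Submonoid.pow_mem _ (hs p hp) n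
    refine ⟨LocalizedModule.mk ⟨s ^ n • x, hn⟩ (⟨s ^ n, hsn⟩ * t), ?_⟩
    rw [LocalizedModule.map_mk]
    exact LocalizedModule.mk_cancel_common_left ⟨s ^ n, hsn⟩ t x

end
end LC

end

section

namespace LC

section
variable {R : Type u} [CommRing R]
variable {X Y : Type u} [AddCommGroup X] [Module R X] [AddCommGroup Y] [Module R Y]

lemma tors_sup {a : Ideal R} {y : R} (h : Tors a X) (hy : ∀ x : X, ∃ n : ℕ, y ^ n • x = 0) :
    Tors (a ⊔ Ideal.span {y}) X := by
  intro x
  obtain ⟨n, hn⟩ := h x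
  obtain ⟨m, hm⟩ := hy x
  refine ⟨n + m, fun r hr => ?_⟩
  have := Ideal.sup_pow_add_le_pow_sup_pow hr
  rw [Ideal.span_singleton_pow] at this
  obtain ⟨c, hc, d, hd, rfl⟩ := Submodule.mem_sup.1 this
  obtain ⟨e, rfl⟩ := Ideal.mem_span_singleton'.1 hd
  rw [add_smul, hn c hc, mul_smul, hm, smul_zero, add_zero]

lemma xt_zero_of_bij (y : R) (N : Type u) [AddCommGroup N] [Module R N] (hN : ∀ n : N, y • n = 0)
    (hb : Function.Bijective (y • LinearMap.id : X →ₗ[R] X)) (i : ℕ) (x : XT R N X i) : x = 0 := by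
  let e := LinearEquiv.ofBijective _ hb
  have h1 : (e.symm : X →ₗ[R] X) ∘ₗ (y • LinearMap.id) = LinearMap.id := by
    ext z
    exact e.symm_apply_apply z
  have h2 := mapR_comp (N := N) (y • LinearMap.id : X →ₗ[R] X) (e.symm : X →ₗ[R] X) i x
  rw [h1, mapR_id, mapR_smul, mapR_id, xt_smul_left y hN, map_zero] at h2
  exact h2

lemma quot_killed (a : Ideal R) : ∀ r ∈ a, ∀ m : R ⧸ a, r • m = 0 := by
  intro r hr m
  obtain ⟨m, rfl⟩ := Ideal.Quotient.mk_surjective m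
  rw [← Ideal.Quotient.mk_eq_mk, ← Submodule.Quotient.mk_smul, Ideal.Quotient.mk_eq_mk,
    Ideal.Quotient.eq_zero_iff_mem]
  exact Ideal.mul_mem_right _ _ hr

theorem stepA [IsNoetherianRing R] (a : Ideal R) (y : R) (hD : D1 (a ⊔ Ideal.span {y}))
    (X : Type u) [AddCommGroup X] [Module R X] (ht : Tors a X)
    (h : ∀ j ≤ 2, Module.Finite R (XT R (R ⧸ a) X j)) (i : ℕ) :
    Module.Finite R (XT R (R ⧸ (a ⊔ Ideal.span {y})) X i) := by
  set b := a ⊔ Ideal.span {y} with hb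
  have hyb : y ∈ b := Ideal.mem_sup_right (Ideal.mem_span_singleton_self y)
  have hX : ∀ j ≤ 2, (fgS R).P (XT R (R ⧸ b) X j) := fun j hj =>
    (fgS R).dev a 2 h j hj (R ⧸ b) (fun r hr => quot_killed b r (Ideal.mem_sup_left hr))
  let V := LocalizedModule (Submonoid.powers y) X
  let f : X →ₗ[R] V := LocalizedModule.mkLinearMap (Submonoid.powers y) X
  have hV : ∀ i (x : XT R (R ⧸ b) V i), x = 0 := by
    refine xt_zero_of_bij y _ (quot_killed b y hyb) ?_
    have := IsLocalizedModule.map_units f ⟨y, Submonoid.mem_powers y⟩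
    rw [Module.End.isUnit_iff] at this
    exact this
  have s1 := SES.kerRange f
  have s2 := SES.mkQ (LinearMap.range f)
  have hI0 : ∀ x : XT R (R ⧸ b) (LinearMap.range f) 0, x = 0 := fun x =>
    mapR0_inj _ (LinearMap.range f).injective_subtype ((hV _ _).trans (hV _ _).symm)
  have hI0' : (fgS R).P (XT R (R ⧸ b) (LinearMap.range f) 0) := by
    have : Subsingleton (XT R (R ⧸ b) (LinearMap.range f) 0) :=
      ⟨fun x y => (hI0 x).trans (hI0 y).symm⟩
    exact (fgS R).zero _
  have hVf : ∀ i, (fgS R).P (XT R (R ⧸ b) V i) := fun i => by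
    have : Subsingleton (XT R (R ⧸ b) V i) := ⟨fun x y => (hV i x).trans (hV i y).symm⟩
    exact (fgS R).zero _
  have hG : ∀ i, (fgS R).P (XT R (R ⧸ b) (LinearMap.ker f) i) := by
    refine thm1 b hD _ ?_ ?_ ?_
    · refine tors_sup (ht.sub _) ?_
      rintro ⟨x, hx⟩
      obtain ⟨⟨_, n, rfl⟩, hn⟩ := (IsLocalizedModule.eq_zero_iff (Submonoid.powers y) f).1 hx
      exact ⟨n, Subtype.ext hn⟩
    · exact (fgS R).inj (mapR0_inj _ (LinearMap.ker f).injective_subtype) (hX 0 (by omega))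
    · exact (fgS R).ex _ _ (s1.exR1 (R ⧸ b) 0) hI0' (hX 1 (by omega))
  have hI : ∀ i ≤ 2, (fgS R).P (XT R (R ⧸ b) (LinearMap.range f) i) := fun i hi =>
    (fgS R).ex _ _ (s1.exR3 (R ⧸ b) i) (hX i hi) (hG _)
  have hL : ∀ i, (fgS R).P (XT R (R ⧸ b) (V ⧸ LinearMap.range f) i) := by
    refine thm1 b hD _ ?_ ?_ ?_
    · refine tors_sup ?_ ?_
      · refine Tors.quot ?_ _
        intro v
        induction v using LocalizedModule.induction_on with
        | h x s =>
        obtain ⟨n, hn⟩ := ht x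
        refine ⟨n, fun r hr => ?_⟩
        rw [LocalizedModule.smul'_mk, hn r hr, LocalizedModule.zero_mk]
      · intro v
        obtain ⟨v, rfl⟩ := Submodule.Quotient.mk_surjective _ v
        obtain ⟨⟨x, ⟨_, n, rfl⟩⟩, hn⟩ := IsLocalizedModule.surj (Submonoid.powers y) f v
        refine ⟨n, ?_⟩
        rw [← Submodule.Quotient.mk_smul, Submodule.Quotient.mk_eq_zero]
        exact ⟨x, hn.symm⟩
    · exact (fgS R).ex _ _ (s2.exR3 (R ⧸ b) 0) (hVf 0) (hI 1 (by omega))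
    · exact (fgS R).ex _ _ (s2.exR3 (R ⧸ b) 1) (hVf 1) (hI 2 (by omega))
  have hI' : ∀ i, (fgS R).P (XT R (R ⧸ b) (LinearMap.range f) i) := by
    rintro (_ | i)
    · exact hI0'
    · exact (fgS R).ex _ _ (s2.exR1 (R ⧸ b) i) (hL i) (hVf _)
  exact (fgS R).ex _ _ (s1.exR2 (R ⧸ b) i) (hG i) (hI' i)

theorem stepB [IsNoetherianRing R] (a : Ideal R) (y : R) (hD : D1 (a ⊔ Ideal.span {y}))
    (X : Type u) [AddCommGroup X] [Module R X] (ht : Tors a X)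
    (h : ∀ j ≤ 2, Module.Finite R (XT R (R ⧸ a) X j)) (i : ℕ) :
    Module.Finite R (kx y (XT R (R ⧸ a) X i)) ∧ Module.Finite R (qx y (XT R (R ⧸ a) X i)) := by
  let φ : (R ⧸ a) →ₗ[R] (R ⧸ a) := y • LinearMap.id
  have s1 := SES.kerRange φ
  have s2 := SES.mkQ (LinearMap.range φ)
  have hdev : ∀ j (N : Type u) [AddCommGroup N] [Module R N] [Module.Finite R N],
      (∀ r ∈ a ⊔ Ideal.span {y}, ∀ m : N, r • m = 0) → Module.Finite R (XT R N X j) :=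
    fun j N _ _ _ hN => (fgS R).dev (a ⊔ Ideal.span {y}) j (fun j _ => stepA a y hD X ht h j) j
      le_rfl N hN
  have hkill : ∀ (N : Type u) [AddCommGroup N] [Module R N], (∀ r ∈ a, ∀ m : N, r • m = 0) →
      (∀ m : N, y • m = 0) → ∀ r ∈ a ⊔ Ideal.span {y}, ∀ m : N, r • m = 0 := by
    intro N _ _ h1 h2 r hr m
    obtain ⟨c, hc, d, hd, rfl⟩ := Submodule.mem_sup.1 hr
    obtain ⟨e, rfl⟩ := Ideal.mem_span_singleton'.1 hd
    rw [add_smul, h1 c hc, mul_smul, h2, smul_zero, add_zero]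
  have hK : ∀ j, Module.Finite R (XT R (LinearMap.ker φ) X j) := fun j => hdev j _ (hkill _
    (fun r hr m => Subtype.ext (quot_killed a r hr m)) (fun m => Subtype.ext m.2))
  have hC : ∀ j, Module.Finite R (XT R ((R ⧸ a) ⧸ LinearMap.range φ) X j) := by
    refine fun j => hdev j _ (hkill _ ?_ ?_)
    · intro r hr m
      obtain ⟨m, rfl⟩ := Submodule.Quotient.mk_surjective _ m
      rw [← Submodule.Quotient.mk_smul, quot_killed a r hr m, Submodule.Quotient.mk_zero]
    · intro m
      obtain ⟨m, rfl⟩ := Submodule.Quotient.mk_surjective _ m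
      rw [← Submodule.Quotient.mk_smul, Submodule.Quotient.mk_eq_zero]
      exact ⟨m, rfl⟩
  let ι := mapL X (LinearMap.range φ).subtype i
  let q := mapL X φ.rangeRestrict i
  have hcomp : ∀ x, y • x = q (ι x) := by
    intro x
    rw [← mapL_comp, show (LinearMap.range φ).subtype ∘ₗ φ.rangeRestrict = φ from rfl, mapL_smul,
      mapL_id]
  have hkι : (LinearMap.ker ι).FG := by
    rw [(s2.exL2 X i).linearMap_ker_eq]
    exact Module.Finite.iff_fg.1 (Module.Finite.range _)
  have hkq : (LinearMap.ker q).FG := by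
    rcases i with _ | i
    · rw [LinearMap.ker_eq_bot.2 (mapL0_inj X s1.surj)]
      exact Submodule.fg_bot
    · rw [(s1.exL3 X i).linearMap_ker_eq]
      exact Module.Finite.iff_fg.1 (Module.Finite.range _)
  constructor
  · refine Module.Finite.iff_fg.2 (Submodule.fg_of_fg_map_of_fg_inf_ker ι ?_ ?_)
    · refine hkq.of_le ?_
      rintro _ ⟨x, hx, rfl⟩
      rw [LinearMap.mem_ker, ← hcomp]
      exact mem_kx.1 hx
    · exact hkι.of_le inf_le_right
  · have h1 : Module.Finite R (XT R (LinearMap.range φ) X i ⧸ LinearMap.range ι) := by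
      rw [← (s2.exL1 X i).linearMap_ker_eq]
      exact (fgS R).iso (LinearMap.quotKerEquivRange _).symm ((fgS R).inj
        (Submodule.injective_subtype _) (hC (i + 1)))
    have h2 : Module.Finite R (XT R (R ⧸ a) X i ⧸ LinearMap.range q) := by
      rw [← (s1.exL2 X i).linearMap_ker_eq]
      exact (fgS R).iso (LinearMap.quotKerEquivRange _).symm ((fgS R).inj
        (Submodule.injective_subtype _) (hK i))
    have hle1 : LinearMap.range ι ≤ (ix y (XT R (R ⧸ a) X i)).comap q := by
      rintro _ ⟨x, rfl⟩
      exact mem_ix.2 ⟨x, hcomp x⟩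
    have hle2 : ix y (XT R (R ⧸ a) X i) ≤ LinearMap.range q := by
      intro z hz
      obtain ⟨x, rfl⟩ := mem_ix.1 hz
      exact ⟨_, (hcomp x).symm⟩
    refine (fgS R).ex (Submodule.mapQ _ _ q hle1) (Submodule.factor hle2) ?_ h1 h2
    intro z
    obtain ⟨z, rfl⟩ := Submodule.Quotient.mk_surjective _ z
    constructor
    · intro h
      have h' : z ∈ LinearMap.range q := (Submodule.Quotient.mk_eq_zero _).1 h
      obtain ⟨w, rfl⟩ := h'
      exact ⟨Submodule.Quotient.mk w, rfl⟩
    · rintro ⟨w, hw⟩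
      obtain ⟨w, rfl⟩ := Submodule.Quotient.mk_surjective _ w
      rw [← hw]
      exact (Submodule.Quotient.mk_eq_zero _).2 ⟨w, rfl⟩

end
end LC

end

section
open TensorProduct

namespace LC

section
variable {R : Type u} [CommRing R]

lemma coker_equiv {A B C A' B' C' : Type u} [AddCommGroup A] [Module R A] [AddCommGroup B]
    [Module R B] [AddCommGroup C] [Module R C] [AddCommGroup A'] [Module R A'] [AddCommGroup B']
    [Module R B'] [AddCommGroup C'] [Module R C'] (f : A →ₗ[R] B) (g : B →ₗ[R] C)
    (f' : A' →ₗ[R] B') (g' : B' →ₗ[R] C') (h : Function.Exact f g) (hg : Function.Surjective g)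
    (h' : Function.Exact f' g') (hg' : Function.Surjective g') (eA : A ≃ₗ[R] A') (eB : B ≃ₗ[R] B')
    (hc : ∀ x, eB (f x) = f' (eA x)) : Nonempty (C ≃ₗ[R] C') := by
  have hm : (LinearMap.ker g).map (eB : B →ₗ[R] B') = LinearMap.ker g' := by
    rw [h.linearMap_ker_eq, h'.linearMap_ker_eq]
    ext z
    constructor
    · rintro ⟨_, ⟨x, rfl⟩, rfl⟩
      exact ⟨eA x, (hc x).symm⟩
    · rintro ⟨x, rfl⟩
      exact ⟨_, ⟨eA.symm x, rfl⟩, by simp [hc]⟩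
  exact ⟨(g.quotKerEquivOfSurjective hg).symm.trans ((Submodule.Quotient.equiv _ _ eB hm).trans
    (g'.quotKerEquivOfSurjective hg'))⟩

variable {A B C X : Type u} [AddCommGroup A] [Module R A] [AddCommGroup B]
    [Module R B] [AddCommGroup C] [Module R C] [AddCommGroup X] [Module R X]
    {f : A →ₗ[R] B} {g : B →ₗ[R] C}

lemma SES.ext1 (h : SES f g) [Module.Projective R B] (X : Type u) [AddCommGroup X] [Module R X] :
    Function.Exact (f.lcomp R X) (h.dL X 0 ∘ₗ (xt0 A X).symm.toLinearMap) ∧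
      Function.Surjective (h.dL X 0 ∘ₗ (xt0 A X).symm.toLinearMap) := by
  constructor
  · intro z
    have h1 := h.exL1 X 0 ((xt0 A X).symm z)
    refine h1.trans ⟨?_, ?_⟩
    · rintro ⟨w, hw⟩
      refine ⟨xt0 B X w, ?_⟩
      have := congrArg (xt0 A X) hw
      rw [xt0_mapL, LinearEquiv.apply_symm_apply] at this
      exact this
    · rintro ⟨w, rfl⟩
      exact ⟨(xt0 B X).symm w, mapL_xt0_symm ..⟩
  · intro z
    obtain ⟨w, hw⟩ := (h.exL3 X 0 z).1 (xt_projective 0 _)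
    exact ⟨xt0 A X w, by simpa using hw⟩

lemma SES.extS (h : SES f g) [Module.Projective R B] (X : Type u) [AddCommGroup X] [Module R X]
    (i : ℕ) : Function.Bijective (h.dL X (i + 1)) := by
  constructor
  · rw [injective_iff_map_eq_zero]
    intro z hz
    obtain ⟨w, rfl⟩ := (h.exL1 X (i + 1) z).1 hz
    rw [xt_projective i w, map_zero]
  · intro z
    exact (h.exL3 X (i + 1) z).1 (xt_projective _ _)

lemma SES.bc (h : SES f g) (S : Type u) [CommRing S] [Algebra R S] [Module.Flat R S] :
    SES (f.baseChange S) (g.baseChange S) where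
  inj := Module.Flat.lTensor_preserves_injective_linearMap f h.inj
  exact := lTensor_exact S h.exact h.surj
  surj := LinearMap.lTensor_surjective S h.surj

/-- flat base change for Ext -/
theorem ext_bc [IsNoetherianRing R] (S : Type u) [CommRing S] [Algebra R S] [Module.Flat R S]
    (i : ℕ) : ∀ (N : Type u) [AddCommGroup N] [Module R N] [Module.Finite R N],
    Nonempty (S ⊗[R] XT R N X i ≃ₗ[S] XT S (S ⊗[R] N) (S ⊗[R] X) i) := by
  have fp : ∀ (N : Type u) [AddCommGroup N] [Module R N] [Module.Finite R N],
    Module.FinitePresentation R N := fun N _ _ _ => Module.finitePresentation_of_finite R N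
  induction i with
  | zero =>
    intro N _ _ _
    have := fp N
    exact ⟨((xt0 N X).baseChange R S).trans
      ((Module.FinitePresentation.isBaseChange_map R N X S).equiv.trans (xt0 _ _).symm)⟩
  | succ i ih =>
    intro N _ _ _
    obtain ⟨n, g, hg⟩ := Module.Finite.exists_fin' R N
    have hs := SES.ker g hg
    have hs' := hs.bc S
    rcases i with _ | i
    · have := fp N
      have := fp (LinearMap.ker g)
      obtain ⟨h1, h2⟩ := hs.ext1 X
      obtain ⟨h3, h4⟩ := hs'.ext1 (S ⊗[R] X)
      refine coker_equiv (B' := S ⊗[R] LinearMap.ker g →ₗ[S] S ⊗[R] X)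
        (A' := S ⊗[R] (Fin n → R) →ₗ[S] S ⊗[R] X)
        (LinearMap.baseChange S _) (LinearMap.baseChange S _) _ _
        (lTensor_exact S h1 h2) (LinearMap.lTensor_surjective S h2) h3 h4
        (Module.FinitePresentation.isBaseChange_map R (Fin n → R) X S).equiv
        (Module.FinitePresentation.isBaseChange_map R (LinearMap.ker g) X S).equiv ?_
      intro x
      induction x using TensorProduct.induction_on with
      | zero => simp only [map_zero]
      | add x y hx hy => simp only [map_add, hx, hy]
      | tmul s φ =>
        rw [LinearMap.baseChange_tmul, IsBaseChange.equiv_tmul, IsBaseChange.equiv_tmul, map_smul]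
        congr 1
        refine TensorProduct.AlgebraTensorModule.curry_injective
          (LinearMap.ext fun s ↦ (LinearMap.ext fun m ↦ (by simp)))
    · obtain ⟨e⟩ := ih (LinearMap.ker g)
      exact ⟨((LinearEquiv.ofBijective _ (hs.extS X i)).symm.baseChange R S).trans (e.trans
        (LinearEquiv.ofBijective _ (hs'.extS (S ⊗[R] X) i)))⟩

lemma tors_bc (S : Type u) [CommRing S] [Algebra R S] {a : Ideal R} (h : Tors a X) :
    Tors (a.map (algebraMap R S)) (S ⊗[R] X) := by
  intro z
  induction z using TensorProduct.induction_on with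
  | zero => exact ⟨0, fun r _ => smul_zero r⟩
  | add x y hx hy =>
    obtain ⟨n, hn⟩ := hx
    obtain ⟨m, hm⟩ := hy
    refine ⟨n + m, fun r hr => ?_⟩
    rw [smul_add, hn r (Ideal.pow_le_pow_right (by omega) hr),
      hm r (Ideal.pow_le_pow_right (by omega) hr), add_zero]
  | tmul s x =>
    obtain ⟨n, hn⟩ := h x
    refine ⟨n, ?_⟩
    rw [← Ideal.map_pow]
    have : (a ^ n).map (algebraMap R S) ≤ LinearMap.ker
        (LinearMap.toSpanSingleton S (S ⊗[R] X) (s ⊗ₜ x)) := by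
      rw [Ideal.map_le_iff_le_comap]
      intro r hr
      simp only [Ideal.mem_comap, LinearMap.mem_ker, LinearMap.toSpanSingleton_apply]
      rw [algebraMap_smul, ← TensorProduct.tmul_smul, hn r hr, TensorProduct.tmul_zero]
    exact fun r hr => by simpa using this hr

theorem ext_bc' [IsNoetherianRing R] (S : Type u) [CommRing S] [Algebra R S] [Module.Flat R S]
    (a : Ideal R) (i : ℕ) :
    Nonempty (S ⊗[R] XT R (R ⧸ a) X i ≃ₗ[S]
      XT S (S ⧸ a.map (algebraMap R S)) (S ⊗[R] X) i) := by
  obtain ⟨e⟩ := ext_bc (R := R) (X := X) S i (R ⧸ a)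
  exact ⟨e.trans (equivL _ (Ideal.qoutMapEquivTensorQout S) i)⟩
end
end LC

end

section
open TensorProduct

namespace LC
variable {R : Type u} [CommRing R]

/-- A separated module over an `s`-adically complete ring which is finite modulo `s` is finite. -/
theorem fg_complete (s : R) [hs : IsAdicComplete (Ideal.span {s}) R] (M : Type u) [AddCommGroup M]
    [Module R M] (hsep : ∀ m : M, (∀ n : ℕ, ∃ m', m = s ^ n • m') → m = 0)
    (hq : Module.Finite R (qx s M)) : Module.Finite R M := by
  obtain ⟨k, f, hf⟩ := Module.Finite.exists_fin' R (qx s M)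
  obtain ⟨g, hg⟩ := Module.projective_lifting_property (ix s M).mkQ f
    (Submodule.mkQ_surjective _)
  have hstep : ∀ m : M, ∃ v : Fin k → R, ∃ m', m = g v + s • m' := by
    intro m
    obtain ⟨v, hv⟩ := hf ((ix s M).mkQ m)
    rw [← hg, LinearMap.comp_apply] at hv
    have h1 : m - g v ∈ ix s M := by
      rw [← Submodule.ker_mkQ (ix s M), LinearMap.mem_ker, map_sub, hv, sub_self]
    obtain ⟨m', hm'⟩ := mem_ix.1 h1
    exact ⟨v, m', by rw [hm']; abel⟩
  choose v w hvw using hstep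
  refine Module.Finite.of_surjective g ?_
  intro m
  let a : ℕ → M := fun n => w^[n] m
  let V : ℕ → (Fin k → R) := fun n => ∑ j ∈ Finset.range n, s ^ j • v (a j)
  have hV : ∀ n, m = g (V n) + s ^ n • a n := by
    intro n
    induction n with
    | zero => simp [V, a]
    | succ n ih =>
      have h1 : a (n + 1) = w (a n) := by simp [a, Function.iterate_succ_apply']
      have h2 : V (n + 1) = V n + s ^ n • v (a n) := Finset.sum_range_succ _ _
      have h3 := hvw (a n)
      calc m = g (V n) + s ^ n • a n := ih
        _ = g (V n) + s ^ n • (g (v (a n)) + s • w (a n)) := by rw [← h3]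
        _ = _ := by
          rw [h1, h2, map_add, map_smul, smul_add, pow_succ, mul_smul, add_assoc]
  have hlim : ∀ i : Fin k, ∃ L : R, ∀ n, ∃ c, L = V n i + s ^ n * c := by
    intro i
    obtain ⟨L, hL⟩ := hs.toIsPrecomplete.prec (f := fun n => V n i) (by
      intro p q hpq
      rw [SModEq.sub_mem, Ideal.smul_top_eq_map, Ideal.span_singleton_pow]
      simp only [Algebra.algebraMap_self, Ideal.map_id, Submodule.restrictScalars_self]
      rw [Ideal.mem_span_singleton]
      obtain ⟨d, rfl⟩ := Nat.exists_eq_add_of_le hpq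
      have h2 : V (p + d) i - V p i = ∑ j ∈ Finset.range d, s ^ (p + j) * v (a (p + j)) i := by
        simp only [V, Finset.sum_range_add, Finset.sum_apply, Pi.add_apply, Pi.smul_apply,
          smul_eq_mul]
        ring
      rw [← neg_sub, dvd_neg, h2]
      exact Finset.dvd_sum fun j _ => ⟨s ^ j * v (a (p + j)) i, by ring⟩)
    refine ⟨L, fun n => ?_⟩
    have h := hL n
    rw [SModEq.sub_mem, Ideal.smul_top_eq_map, Ideal.span_singleton_pow] at h
    simp only [Algebra.algebraMap_self, Ideal.map_id, Submodule.restrictScalars_self] at h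
    rw [Ideal.mem_span_singleton] at h
    obtain ⟨c, hc⟩ := h
    exact ⟨-c, by linear_combination -hc⟩
  choose L c hc using hlim
  refine ⟨L, ?_⟩
  rw [eq_comm, ← sub_eq_zero]
  apply hsep
  intro n
  have h1 : L = V n + s ^ n • (fun i => c i n) := by
    ext i; simp [hc i n]
  refine ⟨a n - g (fun i => c i n), ?_⟩
  conv_lhs => rw [hV n, h1]
  rw [map_add, map_smul, smul_sub]; abel

/-- chain modification -/
lemma chain_mod [IsNoetherianRing R] {p q m : Ideal R} (hp : p.IsPrime) (hq : q.IsPrime)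
    (hm : m.IsPrime) (h1 : p < q) (h2 : q < m) {s : R} (hs : s ∈ m) :
    ∃ q' : Ideal R, q'.IsPrime ∧ s ∈ q' ∧ p < q' ∧ q' < m := by
  obtain ⟨q', h3, h4, h5⟩ := PrimeSpectrum.exist_mem_one_of_mem_two
    (p₀ := ⟨p, hp⟩) (p₁ := ⟨q, hq⟩) (p₂ := ⟨m, hm⟩) h1 h2 hs
  exact ⟨q'.asIdeal, q'.2, h3, h4, h5⟩

/-- dimension at most two -/
def D2 (a : Ideal R) : Prop := ∀ p q r : Ideal R, p.IsPrime → q.IsPrime → r.IsPrime → a ≤ p →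
  p < q → q < r → r.IsMaximal

lemma D2.d1_sup {a : Ideal R} (hD : D2 a) {y : R}
    (hy : ∀ p ∈ a.minimalPrimes, y ∈ p → D1 p) : D1 (a ⊔ Ideal.span {y}) := by
  intro p q hp hq hap hpq
  obtain ⟨p0, hp0, hle⟩ := Ideal.exists_minimalPrimes_le (le_sup_left.trans hap)
  have hyp : y ∈ p := hap (le_sup_right (a := a) (Ideal.mem_span_singleton_self y))
  by_cases h : y ∈ p0
  · exact hy p0 hp0 h p q hp hq hle hpq
  · exact hD p0 p q hp0.1.1 hp hq hp0.1.2 (lt_of_le_of_ne hle (by rintro rfl; exact h hyp)) hpq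

end LC

end

section
open TensorProduct

namespace LC
variable {R : Type u} [CommRing R]

lemma fg_of_loc (q : Ideal R) [q.IsPrime] (E : Type u) [AddCommGroup E] [Module R E]
    (h : Module.Finite (Localization.AtPrime q) (Localization.AtPrime q ⊗[R] E)) :
    ∃ G : Submodule R E, G.FG ∧ ∀ e : E, ∃ c ∉ q, c • e ∈ G := by
  classical
  let S := Localization.AtPrime q
  let f : E →ₗ[R] S ⊗[R] E := TensorProduct.mk R S E 1
  have hf : IsLocalizedModule q.primeCompl f :=
    (isLocalizedModule_iff_isBaseChange q.primeCompl S f).2 (TensorProduct.isBaseChange R E S)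
  obtain ⟨T, hT⟩ := h.fg_top
  have hs : ∀ x : S ⊗[R] E, ∃ m : E, ∃ c : q.primeCompl, c • x = f m := fun x => by
    obtain ⟨⟨m, c⟩, h⟩ := IsLocalizedModule.surj q.primeCompl f x
    exact ⟨m, c, h⟩
  choose m c hmc using hs
  refine ⟨Submodule.span R (T.image m : Finset E), ⟨_, rfl⟩, fun e => ?_⟩
  have htop : Submodule.localized' S q.primeCompl f (Submodule.span R (T.image m : Finset E)) = ⊤ := by
    rw [eq_top_iff, ← hT, Submodule.span_le]
    intro x hx
    rw [SetLike.mem_coe, Submodule.mem_localized']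
    refine ⟨m x, Submodule.subset_span (by simpa using ⟨x, hx, rfl⟩), c x, ?_⟩
    rw [IsLocalizedModule.mk'_eq_iff, hmc]
  have he : f e ∈ Submodule.localized' S q.primeCompl f
      (Submodule.span R (T.image m : Finset E)) := by rw [htop]; trivial
  rw [Submodule.mem_localized'] at he
  obtain ⟨g, hg, d, hd⟩ := he
  rw [IsLocalizedModule.mk'_eq_iff, ← LinearMap.map_smul_of_tower] at hd
  obtain ⟨d', hd'⟩ := (IsLocalizedModule.eq_iff_exists q.primeCompl f).1 hd
  refine ⟨(d' * d : q.primeCompl), (d' * d).2, ?_⟩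
  have : ((d' * d : q.primeCompl) : R) • e = (d' : R) • g := by
    have := hd'.symm
    rw [← mul_smul] at this
    exact this
  rw [this]
  exact Submodule.smul_mem _ _ hg

lemma loc_fg [IsNoetherianRing R] (a : Ideal R) (hD : D2 a) (X : Type u) [AddCommGroup X]
    [Module R X] (ht : Tors a X) (h0 : Module.Finite R (XT R (R ⧸ a) X 0))
    (h1 : Module.Finite R (XT R (R ⧸ a) X 1)) (i : ℕ) (q : Ideal R) [hq : q.IsPrime]
    (hqm : ¬ q.IsMaximal) :
    ∃ G : Submodule R (XT R (R ⧸ a) X i), G.FG ∧ ∀ e, ∃ c ∉ q, c • e ∈ G := by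
  let S := Localization.AtPrime q
  apply fg_of_loc
  obtain ⟨e⟩ := ext_bc' (R := R) (X := X) S a i
  obtain ⟨e0⟩ := ext_bc' (R := R) (X := X) S a 0
  obtain ⟨e1⟩ := ext_bc' (R := R) (X := X) S a 1
  haveI : IsNoetherianRing S := IsLocalization.isNoetherianRing q.primeCompl S inferInstance
  have := thm1 (R := S) (a.map (algebraMap R S)) ?_ (S ⊗[R] X) (tors_bc S ht)
    (Module.Finite.equiv e0) (Module.Finite.equiv e1) i
  · exact Module.Finite.equiv e.symm
  · intro p r hp hr hap hpr
    have hlt : p.comap (algebraMap R S) < r.comap (algebraMap R S) := by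
      refine lt_of_le_of_ne (Ideal.comap_mono hpr.le) fun h => hpr.ne ?_
      rw [← IsLocalization.map_under q.primeCompl S p, ← IsLocalization.map_under q.primeCompl S r]
      exact congrArg _ h
    have hrq : r.comap (algebraMap R S) ≤ q := by
      have := Ideal.comap_mono (f := algebraMap R S) (IsLocalRing.le_maximalIdeal hr.ne_top)
      rwa [show Ideal.comap (algebraMap R S) (IsLocalRing.maximalIdeal S) = q from
        Localization.AtPrime.under_maximalIdeal] at this
    by_cases hrq' : r.comap (algebraMap R S) = q
    · have : r = IsLocalRing.maximalIdeal S := by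
        rw [← IsLocalization.map_under q.primeCompl S r]
        rw [← Localization.AtPrime.map_eq_maximalIdeal]
        exact congrArg _ hrq'
      rw [this]; infer_instance
    · exact absurd (hD _ _ q (hp.comap _) (hr.comap _) hq (Ideal.le_comap_of_map_le hap) hlt
        (lt_of_le_of_ne hrq hrq')) hqm

end LC

end

section
open TensorProduct

namespace LC
variable {R : Type u} [CommRing R]

lemma nak (q : Ideal R) [hq : q.IsPrime] (s : R) (hs : s ∈ q) (M : Type u) [AddCommGroup M]
    [Module R M] [Module.Finite R M] (h : ∀ m : M, ∃ c ∉ q, ∃ m', c • m = s • m') :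
    ∃ d ∉ q, ∀ m : M, d • m = 0 := by
  obtain ⟨c, hc, hcm⟩ := exists_common (R := R) q.primeCompl (⊤ : Submodule R (qx s M))
    (Module.Finite.fg_top) (by
      intro x _
      obtain ⟨m, rfl⟩ := Submodule.Quotient.mk_surjective _ x
      obtain ⟨c, hc, m', h⟩ := h m
      refine ⟨c, hc, ?_⟩
      rw [← Submodule.Quotient.mk_smul, Submodule.Quotient.mk_eq_zero, mem_ix]
      exact ⟨m', h.symm⟩)
  obtain ⟨P, hP, -, hco, hz⟩ :=
    LinearMap.exists_monic_and_natDegree_eq_and_coeff_mem_pow_and_aeval_eq_zero R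
      (c • LinearMap.id : Module.End R M) (Ideal.span {s}) (by
        rintro _ ⟨m, rfl⟩
        have := hcm (Submodule.Quotient.mk m) trivial
        rw [← Submodule.Quotient.mk_smul, Submodule.Quotient.mk_eq_zero, mem_ix] at this
        obtain ⟨y, hy⟩ := this
        have h2 : (c • LinearMap.id : Module.End R M) m = s • y := by rw [hy]; rfl
        rw [h2]
        exact Submodule.smul_mem_smul (Ideal.mem_span_singleton_self s) trivial)
  refine ⟨P.eval c, fun hmem => ?_, fun m => ?_⟩
  · rw [Polynomial.eval_eq_sum_range, Finset.sum_range_succ] at hmem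
    have h1 : ∑ x ∈ Finset.range P.natDegree, P.coeff x * c ^ x ∈ q := by
      refine Ideal.sum_mem _ fun x hx => Ideal.mul_mem_right _ _ ?_
      have hle : Ideal.span {s} ≤ q := by simpa [Ideal.span_le] using hs
      have := hco x
      refine hle (Ideal.pow_le_self ?_ this)
      have := Finset.mem_range.1 hx
      omega
    have h2 := (Ideal.add_mem_iff_right _ h1).1 hmem
    rw [hP.coeff_natDegree, one_mul] at h2
    exact hc (hq.mem_of_pow_mem _ h2)
  · have h1 : Polynomial.aeval (c • LinearMap.id : Module.End R M) P = (P.eval c) • LinearMap.id := by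
      have h3 : (c • LinearMap.id : Module.End R M) = algebraMap R (Module.End R M) c := by
        ext; simp
      rw [h3, Polynomial.aeval_algebraMap_apply]
      ext; simp
    have := LinearMap.congr_fun (h1.symm.trans hz) m
    simpa using this

/-- The Tate-like module of sequences. -/
def tate (s : R) (T : Type u) [AddCommGroup T] [Module R T] : Submodule R (ℕ → T) where
  carrier := {t | t 0 = 0 ∧ ∀ n, s • t (n + 1) = t n}
  add_mem' := by
    rintro t t' ⟨h1, h2⟩ ⟨h3, h4⟩
    exact ⟨by simp [h1, h3], fun n => by simp [h2, h4]⟩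
  zero_mem' := ⟨rfl, fun n => by simp⟩
  smul_mem' := by
    rintro c t ⟨h1, h2⟩
    exact ⟨by simp [h1], fun n => by
      simp only [Pi.smul_apply]; rw [smul_comm, h2]⟩

/-- evaluation at one -/
def tateEv (s : R) (T : Type u) [AddCommGroup T] [Module R T] : tate s T →ₗ[R] T :=
  (LinearMap.proj 1) ∘ₗ (tate s T).subtype

lemma tate_ker (s : R) (T : Type u) [AddCommGroup T] [Module R T] :
    LinearMap.ker (tateEv s T) = ix s (tate s T) := by
  ext ⟨t, h0, h1⟩
  rw [LinearMap.mem_ker, mem_ix]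
  constructor
  · intro h
    refine ⟨⟨fun n => t (n + 1), h, fun n => h1 (n + 1)⟩, ?_⟩
    ext n
    exact h1 n
  · rintro ⟨⟨t', h0', h1'⟩, h⟩
    have := congrFun (congrArg Subtype.val h) 1
    exact this.symm.trans ((h1' 0).trans h0')

lemma tate_pow {s : R} {T : Type u} [AddCommGroup T] [Module R T] (t : tate s T) (n k : ℕ) :
    s ^ k • t.1 (n + k) = t.1 n := by
  induction k with
  | zero => simp
  | succ k ih => rw [pow_succ, mul_smul, ← add_assoc, t.2.2, ih]

lemma tate_fg (s : R) [IsAdicComplete (Ideal.span {s}) R] [IsNoetherianRing R]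
    (T : Type u) [AddCommGroup T] [Module R T]
    (hk : Module.Finite R (kx s T)) : Module.Finite R (tate s T) := by
  refine fg_complete s _ ?_ ?_
  · intro t ht
    ext k
    obtain ⟨t', rfl⟩ := ht k
    have := tate_pow t' 0 k
    rw [zero_add] at this
    exact this.trans t'.2.1
  · change Module.Finite R (tate s T ⧸ ix s (tate s T))
    rw [← tate_ker]
    have : Module.Finite R (LinearMap.range (tateEv s T)) := by
      refine (fgS R).sub (K := LinearMap.range (tateEv s T)) (L := kx s T) ?_ hk
      rintro _ ⟨t, rfl⟩
      rw [mem_kx]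
      exact (t.2.2 0).trans t.2.1
    exact Module.Finite.equiv (tateEv s T).quotKerEquivRange.symm

theorem caseT [IsNoetherianRing R] (a : Ideal R) (s : R) [IsAdicComplete (Ideal.span {s}) R]
    (hD2 : D2 a) (T : Type u) [AddCommGroup T] [Module R T] (hT : ∀ t : T, ∃ n : ℕ, s ^ n • t = 0)
    (hdiv : ∀ t : T, ∃ t', s • t' = t) (hk : Module.Finite R (kx s T))
    (hloc : ∀ q : Ideal R, q.IsPrime → ¬ q.IsMaximal → s ∈ q → ∀ t : T, ∃ c ∉ q, c • t = 0) :
    ∃ y : R, D1 (a ⊔ Ideal.span {y}) ∧ ∀ t : T, y • t = 0 := by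
  classical
  have hfin := tate_fg s T hk
  let A := Module.annihilator R (tate s T)
  have hA : ∀ p : Ideal R, p.IsPrime → A ≤ p → D1 p := by
    intro p hp hAp p1 q1 hp1 hq1 hpp1 hlt
    by_contra hmax
    obtain ⟨m, hm, hqm⟩ := Ideal.exists_le_maximal q1 hq1.ne_top
    have hqm' : q1 < m := lt_of_le_of_ne hqm (by rintro rfl; exact hmax hm)
    have hsm : s ∈ m := by
      have h1 := IsAdicComplete.le_jacobson_bot (Ideal.span {s}) (Ideal.mem_span_singleton_self s)
      rw [Ideal.jacobson, Submodule.mem_sInf] at h1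
      exact h1 m ⟨bot_le, hm⟩
    obtain ⟨q', hq', hsq', h2, h3⟩ := chain_mod hp1 hq1 hm.isPrime hlt hqm' hsm
    have hq'm : ¬ q'.IsMaximal := fun h => h3.ne (h.eq_of_le hm.ne_top h3.le)
    obtain ⟨d, hd, hdt⟩ := nak q' s hsq' (tate s T) (by
      intro t
      obtain ⟨c, hc, hct⟩ := hloc q' hq' hq'm hsq' (tateEv s T t)
      refine ⟨c, hc, ?_⟩
      have : c • t ∈ ix s (tate s T) := by
        rw [← tate_ker, LinearMap.mem_ker, map_smul, hct]
      obtain ⟨t', ht'⟩ := mem_ix.1 this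
      exact ⟨t', ht'.symm⟩)
    exact hd (h2.le (hpp1 (hAp (Module.mem_annihilator.2 hdt))))
  obtain ⟨y, hyA, hy⟩ := avoid A ((mins a).filter (fun p => ¬ D1 p)) (by
    intro p hp
    rw [Finset.mem_filter, mem_mins] at hp
    exact ⟨hp.1.1.1, fun h => hp.2 (hA p hp.1.1.1 h)⟩)
  refine ⟨y, hD2.d1_sup ?_, ?_⟩
  · intro p hp hyp
    by_contra h
    exact hy p (Finset.mem_filter.2 ⟨mem_mins.2 hp, h⟩) hyp
  · intro t
    choose σ hσ using hdiv
    obtain ⟨k, hk⟩ := hT t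
    have hpow : ∀ n, s ^ n • σ^[n] t = t := by
      intro n
      induction n with
      | zero => simp
      | succ n ih => rw [Function.iterate_succ_apply', pow_succ, mul_smul, hσ, ih]
    let u : tate s T := ⟨fun n => s ^ k • σ^[n] t, hk, fun n => by
      simp only []
      rw [Function.iterate_succ_apply', smul_comm, hσ]⟩
    have h1 := Module.mem_annihilator.1 hyA u
    have h2 : y • (s ^ k • σ^[k] t) = 0 := congrFun (congrArg Subtype.val h1) k
    rwa [hpow] at h2

theorem caseE [IsNoetherianRing R] (a : Ideal R) (s : R) [IsAdicComplete (Ideal.span {s}) R]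
    (hD2 : D2 a) (E : Type u) [AddCommGroup E] [Module R E]
    (hk : Module.Finite R (kx s E)) (hq : Module.Finite R (qx s E))
    (hy : ∀ y, D1 (a ⊔ Ideal.span {y}) → Module.Finite R (kx y E))
    (hloc : ∀ q : Ideal R, q.IsPrime → ¬ q.IsMaximal →
      ∃ G : Submodule R E, G.FG ∧ ∀ e, ∃ c ∉ q, c • e ∈ G)
    (F0 : Submodule R E) (hF0 : F0.FG) (hF0s : ∀ m, ∃ n : ℕ, s ^ n • m ∈ F0) :
    Module.Finite R E := by
  obtain ⟨L, hL, hLq⟩ := fg_lift (ix s E).mkQ ⊤ hq.fg_top (by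
    rw [Submodule.range_mkQ])
  obtain ⟨F, hF, hFs, hFq⟩ : ∃ F : Submodule R E, F.FG ∧ (∀ m, ∃ n : ℕ, s ^ n • m ∈ F) ∧
      ∀ e, ∃ e', e - s • e' ∈ F := by
    refine ⟨F0 ⊔ L, hF0.sup hL, fun m => ?_, fun e => ?_⟩
    · obtain ⟨n, hn⟩ := hF0s m
      exact ⟨n, Submodule.mem_sup_left hn⟩
    · have : (ix s E).mkQ e ∈ L.map (ix s E).mkQ := by rw [hLq]; trivial
      obtain ⟨l, hl, hle⟩ := this
      have h1 : e - l ∈ ix s E := by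
        rw [← Submodule.ker_mkQ (ix s E), LinearMap.mem_ker, map_sub, hle, sub_self]
      obtain ⟨e', he'⟩ := mem_ix.1 h1
      exact ⟨e', Submodule.mem_sup_right (by rw [he']; simpa using hl)⟩
  have key : ∀ y, Module.Finite R (kx y E) → (F.comap (LinearMap.lsmul R E y)).FG := by
    intro y hky
    refine Submodule.fg_of_fg_map_of_fg_inf_ker (LinearMap.lsmul R E y) ?_ ?_
    · exact hF.of_le (Submodule.map_comap_le _ _)
    · exact (Module.Finite.iff_fg.1 hky).of_le inf_le_right
  have hdiv : ∀ t : E ⧸ F, ∃ t', s • t' = t := by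
    intro t
    obtain ⟨e, rfl⟩ := Submodule.Quotient.mk_surjective _ t
    obtain ⟨e', he'⟩ := hFq e
    exact ⟨Submodule.Quotient.mk e', ((Submodule.Quotient.eq F).2 he').symm⟩
  suffices H : ∃ y : R, D1 (a ⊔ Ideal.span {y}) ∧ ∀ t : E ⧸ F, y • t = 0 by
    obtain ⟨y, hD, hyT⟩ := H
    have := key y (hy y hD)
    rw [Module.finite_def]
    convert this
    symm
    rw [eq_top_iff]
    intro e _
    have := hyT (Submodule.Quotient.mk e)
    rw [← Submodule.Quotient.mk_smul, Submodule.Quotient.mk_eq_zero] at this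
    exact this
  refine caseT a s hD2 (E ⧸ F) ?_ hdiv ?_ ?_
  · intro t
    obtain ⟨e, rfl⟩ := Submodule.Quotient.mk_surjective _ t
    obtain ⟨n, hn⟩ := hFs e
    exact ⟨n, by rwa [← Submodule.Quotient.mk_smul, Submodule.Quotient.mk_eq_zero]⟩
  · rw [Module.Finite.iff_fg]
    refine ((key s hk).map F.mkQ).of_le ?_
    intro t ht
    obtain ⟨e, rfl⟩ := Submodule.Quotient.mk_surjective _ t
    rw [mem_kx, ← Submodule.Quotient.mk_smul, Submodule.Quotient.mk_eq_zero] at ht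
    exact ⟨e, ht, rfl⟩
  · intro q hq hqm hsq
    obtain ⟨G, hG, hGc⟩ := hloc q hq hqm
    have hGm := hG.map F.mkQ
    have : Module.Finite R (G.map F.mkQ) := Module.Finite.iff_fg.2 hGm
    have hGT : ∀ t : E ⧸ F, ∃ c ∉ q, c • t ∈ G.map F.mkQ := by
      intro t
      obtain ⟨e, rfl⟩ := Submodule.Quotient.mk_surjective _ t
      obtain ⟨c, hc, h⟩ := hGc e
      exact ⟨c, hc, c • e, h, by simp⟩
    obtain ⟨d, hd, hdg⟩ := nak q s hsq (G.map F.mkQ) (by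
      rintro ⟨g, hg⟩
      obtain ⟨t, rfl⟩ := hdiv g
      obtain ⟨c, hc, h⟩ := hGT t
      exact ⟨c, hc, ⟨c • t, h⟩, Subtype.ext (smul_comm _ _ _)⟩)
    intro t
    obtain ⟨c, hc, h⟩ := hGT t
    refine ⟨d * c, fun h => (hq.mem_or_mem h).elim hd hc, ?_⟩
    rw [mul_smul]
    exact congrArg Subtype.val (hdg ⟨_, h⟩)

theorem caseC [IsNoetherianRing R] (a : Ideal R) (s : R) [IsAdicComplete (Ideal.span {s}) R]
    (hD1 : D1 (a ⊔ Ideal.span {s})) (hD2 : D2 a) (X : Type u) [AddCommGroup X] [Module R X]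
    (ht : Tors a X) (h : ∀ j ≤ 2, Module.Finite R (XT R (R ⧸ a) X j)) (i : ℕ)
    (F : Submodule R (XT R (R ⧸ a) X i)) (hF : F.FG) (hFs : ∀ m, ∃ n : ℕ, s ^ n • m ∈ F) :
    Module.Finite R (XT R (R ⧸ a) X i) :=
  caseE a s hD2 _ (stepB a s hD1 X ht h i).1 (stepB a s hD1 X ht h i).2
    (fun y hy => (stepB a y hy X ht h i).1)
    (fun q _ hqm => loc_fg a hD2 X ht (h 0 (by omega)) (h 1 (by omega)) i q hqm) F hF hFs

end LC

end

section
open TensorProduct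

namespace LC
variable {R : Type u} [CommRing R]

section comp
variable (s : R)

/-- the completion -/
abbrev Cp : Type u := AdicCompletion (Ideal.span {s}) R
/-- the image of `s` -/
noncomputable abbrev Cs : Cp s := algebraMap R (Cp s) s

lemma Cp_map : (Ideal.span {s}).map (algebraMap R (Cp s)) = Ideal.span {Cs s} := by
  rw [Ideal.map_span, Set.image_singleton]

lemma Cp_complete : IsAdicComplete (Ideal.span {Cs s}) (Cp s) := by
  rw [← Cp_map]
  exact AdicCompletion.isAdicComplete_self _ ⟨{s}, by simp⟩

lemma Cp_ker (x : Cp s) : AdicCompletion.evalOneₐ (Ideal.span {s}) x = 0 ↔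
    ∃ c, x = Cs s * c := by
  have h := AdicCompletion.ker_evalOneₐ_eq_map (Ideal.span {s}) ⟨{s}, by simp⟩
  rw [Cp_map] at h
  have h2 : x ∈ RingHom.ker (AdicCompletion.evalOneₐ (Ideal.span {s})).toRingHom ↔
      x ∈ Ideal.span {Cs s} := by rw [h]
  rw [Ideal.mem_span_singleton] at h2
  exact h2

lemma Cp_ev (r : R) : AdicCompletion.evalOneₐ (Ideal.span {s}) (algebraMap R (Cp s) r) =
    Ideal.Quotient.mk (Ideal.span {s}) r := by
  exact (AdicCompletion.evalOneₐ (Ideal.span {s})).commutes r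

lemma Cp_dec (x : Cp s) : ∃ r c, x = algebraMap R (Cp s) r + Cs s * c := by
  obtain ⟨r, hr⟩ := Ideal.Quotient.mk_surjective (AdicCompletion.evalOneₐ (Ideal.span {s}) x)
  obtain ⟨c, hc⟩ := (Cp_ker s (x - algebraMap R (Cp s) r)).1 (by
    rw [map_sub, Cp_ev, hr, sub_self])
  exact ⟨r, c, by rw [← hc]; ring⟩

lemma Cp_dec_pow (n : ℕ) (x : Cp s) : ∃ r c, x = algebraMap R (Cp s) r + Cs s ^ n * c := by
  induction n generalizing x with
  | zero => exact ⟨0, x, by simp⟩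
  | succ n ih =>
    obtain ⟨r, c, rfl⟩ := ih x
    obtain ⟨r', c', rfl⟩ := Cp_dec s c
    exact ⟨r + s ^ n * r', c', by simp only [map_add, map_mul, map_pow]; ring⟩

lemma Cp_fg [IsNoetherianRing R] (P : Ideal (Cp s)) (hs : Cs s ∈ P) : P.FG := by
  have : P = (P.comap (algebraMap R (Cp s))).map (algebraMap R (Cp s)) ⊔ Ideal.span {Cs s} := by
    apply le_antisymm
    · intro x hx
      obtain ⟨r, c, rfl⟩ := Cp_dec s x
      refine Submodule.add_mem_sup (Ideal.mem_map_of_mem _ ?_)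
        (Ideal.mul_mem_right _ _ (Ideal.mem_span_singleton_self _))
      rw [Ideal.mem_comap]
      exact (Ideal.add_mem_iff_left _ (Ideal.mul_mem_right _ _ hs)).1 hx
    · refine sup_le Ideal.map_comap_le ?_
      rwa [Ideal.span_singleton_le_iff_mem]
  rw [this]
  exact Submodule.FG.sup (Ideal.FG.map (IsNoetherian.noetherian (P.comap (algebraMap R (Cp s)))) _)
    ⟨{Cs s}, by simp⟩

lemma Cp_noeth [IsNoetherianRing R] : IsNoetherianRing (Cp s) := by
  refine IsNoetherianRing.of_prime fun P hP => ?_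
  by_cases hs : Cs s ∈ P
  · exact Cp_fg s P hs
  have := Cp_complete s
  refine Module.Finite.iff_fg.1 ?_
  refine fg_complete (Cs s) P ?_ ?_
  · intro m hm
    apply Subtype.ext
    refine this.toIsHausdorff.haus _ fun n => ?_
    obtain ⟨m', rfl⟩ := hm n
    rw [SModEq.zero]
    exact Submodule.smul_mem_smul (r := Cs s ^ n) (n := (m' : Cp s))
      (Ideal.pow_mem_pow (Ideal.mem_span_singleton_self _) _) trivial
  · let f : P →ₗ[Cp s] (Cp s ⧸ Ideal.span {Cs s}) :=
      (Submodule.mkQ (Ideal.span {Cs s})) ∘ₗ Submodule.subtype P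
    have hker : LinearMap.ker f = ix (Cs s) P := by
      ext ⟨x, hx⟩
      rw [LinearMap.mem_ker, mem_ix]
      change Submodule.Quotient.mk x = 0 ↔ _
      rw [Submodule.Quotient.mk_eq_zero, Ideal.mem_span_singleton]
      constructor
      · rintro ⟨c, rfl⟩
        exact ⟨⟨c, (hP.mem_or_mem hx).resolve_left hs⟩, rfl⟩
      · rintro ⟨⟨c, hc⟩, h⟩
        exact ⟨c, (congrArg Subtype.val h).symm⟩
    change Module.Finite (Cp s) (P ⧸ ix (Cs s) P)
    rw [← hker]
    have hr : Module.Finite (Cp s) (LinearMap.range f) := by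
      rw [Module.Finite.iff_fg]
      have h1 : LinearMap.range f =
          Submodule.map (Submodule.mkQ (Ideal.span {Cs s})) (P ⊔ Ideal.span {Cs s}) := by
        rw [LinearMap.range_comp, Submodule.range_subtype, Submodule.map_sup]
        conv_rhs => rw [Submodule.mkQ_map_self]
        simp
      rw [h1]
      exact Submodule.FG.map _ (Cp_fg s _ (le_sup_right (a := P) (Ideal.mem_span_singleton_self _)))
    exact Module.Finite.equiv f.quotKerEquivRange.symm

lemma Cp_lt {p q : Ideal (Cp s)} (hs : Cs s ∈ p) (h : p < q) :
    p.comap (algebraMap R (Cp s)) < q.comap (algebraMap R (Cp s)) := by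
  refine lt_of_le_not_ge (Ideal.comap_mono h.le) fun hle => h.not_ge ?_
  intro x hx
  obtain ⟨r, c, rfl⟩ := Cp_dec s x
  have h1 := (Ideal.add_mem_iff_left _ (Ideal.mul_mem_right c _ (h.le hs))).1 hx
  exact add_mem (hle h1) (Ideal.mul_mem_right c _ hs)

lemma Cp_D1 (a : Ideal R) (hD : D1 (a ⊔ Ideal.span {s})) :
    D1 (a.map (algebraMap R (Cp s)) ⊔ Ideal.span {Cs s}) := by
  intro p q hp hq hap hpq
  have hsp : Cs s ∈ p := hap ((le_sup_right : Ideal.span {Cs s} ≤ a.map (algebraMap R (Cp s)) ⊔ Ideal.span {Cs s}) (Ideal.mem_span_singleton_self _))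
  have hmax := hD _ _ (hp.comap (algebraMap R (Cp s))) (hq.comap (algebraMap R (Cp s))) (by
    refine sup_le (Ideal.le_comap_of_map_le (le_sup_left.trans hap)) ?_
    rw [Ideal.span_singleton_le_iff_mem]
    exact hsp) (Cp_lt s hsp hpq)
  obtain ⟨m, hm, hqm⟩ := Ideal.exists_le_maximal q hq.ne_top
  rcases hqm.eq_or_lt with rfl | hlt
  · exact hm
  · have h1 := Cp_lt s (hpq.le hsp) hlt
    exact absurd (hmax.eq_of_le (hm.isPrime.comap _).ne_top h1.le) h1.ne

lemma Cp_D2 [IsNoetherianRing R] (a : Ideal R) (hD : D1 (a ⊔ Ideal.span {s})) :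
    D2 (a.map (algebraMap R (Cp s))) := by
  have := Cp_noeth s
  have := Cp_complete s
  intro P Q N hP hQ hN haP hPQ hQN
  by_contra hmax
  obtain ⟨m, hm, hNm⟩ := Ideal.exists_le_maximal N hN.ne_top
  have hNm' : N < m := lt_of_le_of_ne hNm (by rintro rfl; exact hmax hm)
  have hsm : Cs s ∈ m := by
    have h1 := IsAdicComplete.le_jacobson_bot (Ideal.span {Cs s}) (Ideal.mem_span_singleton_self _)
    rw [Ideal.jacobson, Submodule.mem_sInf] at h1
    exact h1 m ⟨bot_le, hm⟩
  obtain ⟨N', hN', hsN', h1, h2⟩ := chain_mod hQ hN hm.isPrime hQN hNm' hsm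
  obtain ⟨Q', hQ', hsQ', h3, h4⟩ := chain_mod hP hQ hN' hPQ h1 hsN'
  have := Cp_D1 s a hD Q' N' hQ' hN' (sup_le (haP.trans h3.le)
    ((Ideal.span_singleton_le_iff_mem _).2 hsQ')) h4
  exact h2.ne (this.eq_of_le hm.ne_top h2.le)

/-- descent of finiteness for `s`-torsion modules -/
lemma Cp_desc [IsNoetherianRing R] (T : Type u) [AddCommGroup T] [Module R T]
    (hT : ∀ t : T, ∃ n : ℕ, s ^ n • t = 0) (hf : Module.Finite (Cp s) (Cp s ⊗[R] T)) :
    Module.Finite R T := by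
  classical
  have hsw : ∀ (x : Cp s) (t : T), ∃ r : R, x ⊗ₜ[R] t = 1 ⊗ₜ[R] (r • t) := by
    intro x t
    obtain ⟨n, hn⟩ := hT t
    obtain ⟨r, c, rfl⟩ := Cp_dec_pow s n x
    refine ⟨r, ?_⟩
    have h1 : (Cs s ^ n * c) ⊗ₜ[R] t = 0 := by
      rw [← map_pow, ← Algebra.smul_def, TensorProduct.smul_tmul, hn, TensorProduct.tmul_zero]
    rw [TensorProduct.add_tmul, h1, add_zero, Algebra.algebraMap_eq_smul_one,
      TensorProduct.smul_tmul]
  have hinj : ∀ t : T, (1 : Cp s) ⊗ₜ[R] t = 0 → t = 0 := by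
    intro t h
    let g : R →ₗ[R] T := LinearMap.toSpanSingleton R T t
    let I : Ideal R := LinearMap.ker g
    let f : (R ⧸ I) →ₗ[R] T := I.liftQ g le_rfl
    have hfi : Function.Injective f := by
      rw [← LinearMap.ker_eq_bot]
      exact Submodule.ker_liftQ_eq_bot _ _ _ le_rfl
    have hfi' := Module.Flat.lTensor_preserves_injective_linearMap (M := Cp s) f hfi
    have h0 : (1 : Cp s) ⊗ₜ[R] (Ideal.Quotient.mk I 1) = 0 := by
      apply hfi'
      rw [map_zero, LinearMap.lTensor_tmul]
      have : f (Ideal.Quotient.mk I 1) = t := by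
        change g 1 = t
        simp [g]
      rw [this, h]
    let J : Ideal R := I ⊔ Ideal.span {s}
    let φ : Cp s →ₐ[R] (R ⧸ J) := (Ideal.Quotient.factorₐ R (le_sup_right : Ideal.span {s} ≤ J)).comp
      (AdicCompletion.evalOneₐ (Ideal.span {s}))
    let ψ : (R ⧸ I) →ₐ[R] (R ⧸ J) := Ideal.Quotient.factorₐ R (le_sup_left : I ≤ J)
    have h1 : (1 : R ⧸ J) = 0 := by
      have := congrArg (Algebra.TensorProduct.productMap φ ψ) h0
      rw [map_zero, Algebra.TensorProduct.productMap_apply_tmul, map_one, map_one, map_one,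
        one_mul] at this
      exact this
    have h2 : (1 : R) ∈ J := by
      rw [← Ideal.Quotient.eq_zero_iff_mem, map_one, h1]
    obtain ⟨r, hr, y, hy, hry⟩ := Submodule.mem_sup.1 h2
    obtain ⟨c, rfl⟩ := Ideal.mem_span_singleton'.1 hy
    have hrt : r • t = 0 := hr
    have h3 : t = (c * s) • t := by
      conv_lhs => rw [← one_smul R t, ← hry, add_smul, hrt, zero_add]
    have h4 : ∀ n : ℕ, t = (c * s) ^ n • t := by
      intro n
      induction n with
      | zero => simp
      | succ n ih => rw [pow_succ, mul_smul, ← h3, ← ih]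
    obtain ⟨n, hn⟩ := hT t
    rw [h4 n, mul_pow, mul_smul, hn, smul_zero]
  have hsurj : ∀ z : Cp s ⊗[R] T, ∃ t : T, z = 1 ⊗ₜ[R] t := by
    intro z
    induction z with
    | zero => exact ⟨0, by simp⟩
    | tmul x t => obtain ⟨r, hr⟩ := hsw x t; exact ⟨_, hr⟩
    | add x y hx hy =>
      obtain ⟨t, rfl⟩ := hx
      obtain ⟨t', rfl⟩ := hy
      exact ⟨t + t', (TensorProduct.tmul_add _ _ _).symm⟩
  obtain ⟨G, hG⟩ := hf.fg_top
  choose τ hτ using hsurj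
  let N : Submodule R T := Submodule.span R (G.image τ : Finset T)
  have hN : ∀ z ∈ Submodule.span (Cp s) (G : Set (Cp s ⊗[R] T)), ∃ t ∈ N, z = 1 ⊗ₜ[R] t := by
    intro z hz
    induction hz using Submodule.span_induction with
    | mem x hx => exact ⟨τ x, Submodule.subset_span (by simpa using ⟨x, hx, rfl⟩), hτ x⟩
    | zero => exact ⟨0, zero_mem _, by simp⟩
    | add x y _ _ hx hy =>
      obtain ⟨t, ht, rfl⟩ := hx
      obtain ⟨t', ht', rfl⟩ := hy
      exact ⟨t + t', add_mem ht ht', (TensorProduct.tmul_add _ _ _).symm⟩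
    | smul c x _ hx =>
      obtain ⟨t, ht, rfl⟩ := hx
      obtain ⟨r, hr⟩ := hsw c t
      refine ⟨r • t, N.smul_mem _ ht, ?_⟩
      rw [← hr, TensorProduct.smul_tmul', smul_eq_mul, mul_one]
  rw [Module.finite_def]
  refine ⟨G.image τ, ?_⟩
  rw [eq_top_iff]
  intro t _
  obtain ⟨t', ht', h⟩ := hN (1 ⊗ₜ[R] t) (by rw [hG]; trivial)
  have : t = t' := by
    rw [← sub_eq_zero]
    apply hinj
    rw [TensorProduct.tmul_sub, h, sub_self]
  rw [this]
  exact ht'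

end comp

theorem thm2 [IsNoetherianRing R] (a : Ideal R) (hD : D2 a) (X : Type u) [AddCommGroup X]
    [Module R X] (ht : Tors a X) (h : ∀ j ≤ 2, Module.Finite R (XT R (R ⧸ a) X j)) (i : ℕ) :
    Module.Finite R (XT R (R ⧸ a) X i) := by
  obtain ⟨F, hF, s, hs, hFs⟩ := thmGen a X ht (h 0 (by omega)) (h 1 (by omega)) i
  have hD1 : D1 (a ⊔ Ideal.span {s}) := hD.d1_sup fun p hp hsp => absurd hsp (hs p hp)
  have := Cp_noeth s
  have := Cp_complete s
  have hfin : Module.Finite (Cp s) (Cp s ⊗[R] XT R (R ⧸ a) X i) := by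
    obtain ⟨e⟩ := ext_bc' (R := R) (X := X) (Cp s) a i
    have hG : ((F.baseChange (Cp s)).map e.toLinearMap).FG := by
      refine Submodule.FG.map _ ?_
      obtain ⟨G, rfl⟩ := hF
      rw [Submodule.baseChange_span]
      exact Submodule.fg_span (G.finite_toSet.image _)
    have := caseC (R := Cp s) (a.map (algebraMap R (Cp s))) (Cs s) (Cp_D1 s a hD1)
      (Cp_D2 s a hD1) (Cp s ⊗[R] X) (tors_bc (Cp s) ht) (fun j hj => by
        obtain ⟨ej⟩ := ext_bc' (R := R) (X := X) (Cp s) a j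
        have := h j hj
        exact Module.Finite.equiv ej) i _ hG (by
        intro m
        obtain ⟨z, rfl⟩ := e.surjective m
        suffices H : ∃ n : ℕ, Cs s ^ n • z ∈ F.baseChange (Cp s) by
          obtain ⟨n, hn⟩ := H
          exact ⟨n, by rw [← map_smul]; exact Submodule.mem_map_of_mem hn⟩
        induction z with
        | zero => exact ⟨0, by simp⟩
        | tmul x t =>
          obtain ⟨n, hn⟩ := hFs t
          refine ⟨n, ?_⟩
          rw [TensorProduct.smul_tmul', ← map_pow, algebraMap_smul, TensorProduct.smul_tmul]
          exact Submodule.tmul_mem_baseChange_of_mem _ hn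
        | add x y hx hy =>
          obtain ⟨n, hn⟩ := hx
          obtain ⟨m, hm⟩ := hy
          refine ⟨n + m, ?_⟩
          rw [smul_add]
          refine add_mem ?_ ?_
          · rw [add_comm, pow_add, mul_smul]; exact Submodule.smul_mem _ _ hn
          · rw [pow_add, mul_smul]; exact Submodule.smul_mem _ _ hm)
    exact Module.Finite.equiv e.symm
  have hTf : Module.Finite (Cp s) (Cp s ⊗[R] (XT R (R ⧸ a) X i ⧸ F)) := by
    refine Module.Finite.of_surjective (F.mkQ.baseChange (Cp s)) ?_
    exact LinearMap.lTensor_surjective _ (Submodule.mkQ_surjective F)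
  have hq : Module.Finite R (XT R (R ⧸ a) X i ⧸ F) := by
    refine Cp_desc s _ (fun t => ?_) hTf
    obtain ⟨e, rfl⟩ := Submodule.Quotient.mk_surjective _ t
    obtain ⟨n, hn⟩ := hFs e
    exact ⟨n, by rwa [← Submodule.Quotient.mk_smul, Submodule.Quotient.mk_eq_zero]⟩
  have : Module.Finite R F := Module.Finite.iff_fg.2 hF
  exact Module.Finite.of_submodule_quotient F

end LC

end

section

namespace LC
variable {R : Type u} [CommRing R]

/-- cocycles in the unopped complex -/
noncomputable def zk (K : ChainComplex (ModuleCat.{u} R)ᵒᵖ ℕ) (n : ℕ) :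
    Submodule R (K.X n).unop := LinearMap.ker (K.d (n+1) n).unop.hom

noncomputable def zkDesc (K : ChainComplex (ModuleCat.{u} R)ᵒᵖ ℕ) (n : ℕ) :
    K.opcycles n ⟶ Opposite.op (ModuleCat.of R (zk K n)) :=
  K.descOpcycles (j := n+1) (ModuleCat.ofHom (zk K n).subtype).op (by simp) (by
    apply Quiver.Hom.unop_inj
    ext z
    exact z.2)

noncomputable def kap (K : ChainComplex (ModuleCat.{u} R)ᵒᵖ ℕ) (n : ℕ) :
    zk K n →ₗ[R] (K.homology n).unop := (K.homologyι n ≫ zkDesc K n).unop.hom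

theorem zkDesc_p (K : ChainComplex (ModuleCat.{u} R)ᵒᵖ ℕ) (n : ℕ) (z : zk K n) :
    (K.pOpcycles n).unop ((zkDesc K n).unop z) = z := by
  have : K.pOpcycles n ≫ zkDesc K n = (ModuleCat.ofHom (zk K n).subtype).op := by
    simp [zkDesc]
  have h2 := congrArg (fun f => f.unop.hom z) this
  exact h2

theorem pOp_inj (K : ChainComplex (ModuleCat.{u} R)ᵒᵖ ℕ) (n : ℕ) :
    Function.Injective (K.pOpcycles n).unop := by
  rw [← ModuleCat.mono_iff_injective]; infer_instance

theorem pOp_mem (K : ChainComplex (ModuleCat.{u} R)ᵒᵖ ℕ) (n : ℕ) (w : (K.opcycles n).unop) :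
    (K.pOpcycles n).unop w ∈ zk K n := by
  have : K.d (n+1) n ≫ K.pOpcycles n = 0 := by simp
  exact congrArg (fun f => f.unop.hom w) this

theorem zkDesc_surj (K : ChainComplex (ModuleCat.{u} R)ᵒᵖ ℕ) (n : ℕ) :
    Function.Surjective (zkDesc K n).unop := fun w =>
  ⟨⟨_, pOp_mem K n w⟩, pOp_inj K n (zkDesc_p K n _)⟩

theorem kap_apply (K : ChainComplex (ModuleCat.{u} R)ᵒᵖ ℕ) (n : ℕ) (z : zk K n) :
    kap K n z = (K.homologyι n).unop ((zkDesc K n).unop z) := rfl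

theorem kap_surj (K : ChainComplex (ModuleCat.{u} R)ᵒᵖ ℕ) (n : ℕ) :
    Function.Surjective (kap K n) := by
  have h : Function.Surjective (K.homologyι n).unop := by
    rw [← ModuleCat.epi_iff_surjective]; infer_instance
  exact h.comp (zkDesc_surj K n)

theorem kap_zero (K : ChainComplex (ModuleCat.{u} R)ᵒᵖ ℕ) (n j : ℕ)
    (hj : (ComplexShape.down ℕ).next n = j) (z : zk K n) :
    kap K n z = 0 ↔ ∃ g : (K.X j).unop, (K.d n j).unop g = z := by
  have hp : ∀ g, (K.pOpcycles n).unop ((K.fromOpcycles n j).unop g) = (K.d n j).unop g :=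
    fun g => congrArg (fun f => f.unop.hom g) (K.p_fromOpcycles n j)
  have hex : Function.Exact (K.fromOpcycles n j).unop (K.homologyι n).unop := by
    have h1 := (ShortComplex.mk (K.homologyι n) (K.fromOpcycles n j)
      (K.homologyι_comp_fromOpcycles n j)).exact_of_f_is_kernel (K.homologyIsKernel n j hj)
    exact (ShortComplex.ShortExact.moduleCat_exact_iff_function_exact _).1 h1.unop
  rw [kap_apply, hex]
  constructor
  · rintro ⟨g, hg⟩
    exact ⟨g, by rw [← hp, hg, zkDesc_p]⟩
  · rintro ⟨g, hg⟩
    exact ⟨g, pOp_inj K n (by rw [hp, hg, zkDesc_p])⟩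

theorem kap_nat {K K' : ChainComplex (ModuleCat.{u} R)ᵒᵖ ℕ} (φ : K ⟶ K') (n : ℕ)
    (z' : zk K' n) (z : zk K n) (hz : (φ.f n).unop z' = (z : (K.X n).unop)) :
    (HomologicalComplex.homologyMap φ n).unop (kap K' n z') = kap K n z := by
  rw [kap_apply, kap_apply]
  have h1 : (HomologicalComplex.homologyMap φ n).unop ((K'.homologyι n).unop ((zkDesc K' n).unop z'))
     = (K.homologyι n).unop ((HomologicalComplex.opcyclesMap φ n).unop ((zkDesc K' n).unop z')) :=
    congrArg (fun f => f.unop.hom ((zkDesc K' n).unop z')) (HomologicalComplex.homologyι_naturality φ n)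
  rw [h1]
  congr 1
  apply pOp_inj K n
  rw [zkDesc_p, ← hz]
  have h2 : (K.pOpcycles n).unop ((HomologicalComplex.opcyclesMap φ n).unop ((zkDesc K' n).unop z'))
     = (φ.f n).unop ((K'.pOpcycles n).unop ((zkDesc K' n).unop z')) :=
    congrArg (fun f => f.unop.hom ((zkDesc K' n).unop z')) (HomologicalComplex.p_opcyclesMap φ n)
  rw [h2, zkDesc_p]
end LC

end

section

namespace LC
variable {R : Type u} [CommRing R]

/-- the complex computing the old Ext -/
noncomputable abbrev KK {X : ModuleCat.{u} R} (P : ProjectiveResolution X) (Y : ModuleCat.{u} R) :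
    ChainComplex (ModuleCat.{u} R)ᵒᵖ ℕ :=
  (((linearYoneda R (ModuleCat.{u} R)).obj Y).rightOp.mapHomologicalComplex _).obj P.complex

theorem KK_d {X : ModuleCat.{u} R} (P : ProjectiveResolution X) (Y : ModuleCat.{u} R) (i j : ℕ)
    (f : P.complex.X j ⟶ Y) :
    ((KK P Y).d i j).unop f = (P.complex.d i j ≫ f : P.complex.X i ⟶ Y) := rfl

theorem KK_map {X X' : ModuleCat.{u} R} {P : ProjectiveResolution X} {P' : ProjectiveResolution X'}
    (φ : P.complex ⟶ P'.complex)
    (Y : ModuleCat.{u} R) (i : ℕ) (f : P'.complex.X i ⟶ Y) :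
    (((((linearYoneda R (ModuleCat.{u} R)).obj Y).rightOp.mapHomologicalComplex _).map φ).f i).unop f
      = (φ.f i ≫ f : P.complex.X i ⟶ Y) := rfl

/-- underlying morphism of a cocycle -/
def zf {X : ModuleCat.{u} R} {P : ProjectiveResolution X} {Y : ModuleCat.{u} R} {n : ℕ}
    (z : zk (KK P Y) n) : P.complex.X n ⟶ Y := z.1

theorem zf_d {X : ModuleCat.{u} R} {P : ProjectiveResolution X} {Y : ModuleCat.{u} R} {n : ℕ}
    (z : zk (KK P Y) n) : P.complex.d (n+1) n ≫ zf z = 0 := z.2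

noncomputable def emk {X : ModuleCat.{u} R} (P : ProjectiveResolution X) (Y : ModuleCat.{u} R) (n : ℕ) :
    zk (KK P Y) n →ₗ[R] Abelian.Ext X Y n where
  toFun z := P.extMk (zf z) (n+1) rfl (zf_d z)
  map_add' z w := (P.add_extMk (zf z) (zf w) (n+1) rfl (zf_d z) (zf_d w)).symm
  map_smul' r z := by
    rw [RingHom.id_apply, Abelian.Ext.smul_eq_comp_mk₀, ProjectiveResolution.extMk_comp_mk₀]
    congr 1

theorem emk_surj {X : ModuleCat.{u} R} (P : ProjectiveResolution X) (Y : ModuleCat.{u} R) (n : ℕ) :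
    Function.Surjective (emk P Y n) := fun α => by
  obtain ⟨f, hf, h⟩ := P.extMk_surjective α (n+1) rfl
  exact ⟨⟨f, hf⟩, h⟩

theorem emk_zero {X : ModuleCat.{u} R} (P : ProjectiveResolution X) (Y : ModuleCat.{u} R) (n j : ℕ)
    (hj : (ComplexShape.down ℕ).next n = j) (z : zk (KK P Y) n) :
    emk P Y n z = 0 ↔ ∃ g : ((KK P Y).X j).unop, ((KK P Y).d n j).unop g = z := by
  change P.extMk (zf z) (n+1) rfl (zf_d z) = 0 ↔
    ∃ g : P.complex.X j ⟶ Y, P.complex.d n j ≫ g = zf z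
  cases n with
  | succ n =>
    obtain rfl : n = j := by simpa using hj
    exact P.extMk_eq_zero_iff _ _ _ _ n rfl
  | zero =>
    obtain rfl : 0 = j := by simpa using hj
    have h0 : P.complex.d 0 0 = 0 := P.complex.shape _ _ (by simp)
    simp only [← P.extEquivCohomologyClass.apply_eq_iff_eq,
      ProjectiveResolution.extEquivCohomologyClass_extMk,
      ProjectiveResolution.extEquivCohomologyClass_zero,
      CochainComplex.HomComplex.CohomologyClass.mk_eq_zero_iff]
    rw [CochainComplex.HomComplex.Cocycle.toSingleMk_mem_coboundaries_iff _ _ _ _ _ 1 (by simp)]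
    have hz : Limits.IsZero (P.cochainComplex.X 1) :=
      CochainComplex.isZero_of_isStrictlyLE _ 0 _
    have hd : P.cochainComplex.d (-((0:ℕ):ℤ)) 1 = 0 := hz.eq_of_tgt _ _
    simp only [h0, hd, Limits.zero_comp]
    constructor
    · rintro ⟨_, h⟩
      refine ⟨0, ?_⟩
      rw [← cancel_epi (P.cochainComplexXIso (-((0:ℕ):ℤ)) 0 rfl).hom, ← h]
      simp
    · rintro ⟨_, h⟩
      exact ⟨0, by rw [← h]; simp⟩

/-- old Ext -/
noncomputable abbrev OX (X Y : ModuleCat.{u} R) (n : ℕ) : ModuleCat.{u} R :=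
  ((Ext R (ModuleCat.{u} R) n).obj (Opposite.op X)).obj Y

noncomputable def omk {X : ModuleCat.{u} R} (P : ProjectiveResolution X) (Y : ModuleCat.{u} R) (n : ℕ) :
    zk (KK P Y) n →ₗ[R] OX X Y n :=
  (P.isoLeftDerivedObj ((linearYoneda R (ModuleCat.{u} R)).obj Y).rightOp n).hom.unop.hom ∘ₗ
    kap (KK P Y) n

theorem omk_apply {X : ModuleCat.{u} R} (P : ProjectiveResolution X) (Y : ModuleCat.{u} R) (n : ℕ)
   (z : zk (KK P Y) n) : omk P Y n z =
  (P.isoLeftDerivedObj ((linearYoneda R (ModuleCat.{u} R)).obj Y).rightOp n).hom.unop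
    (kap (KK P Y) n z) := rfl

theorem iso_bij {X : ModuleCat.{u} R} (P : ProjectiveResolution X) (Y : ModuleCat.{u} R) (n : ℕ) :
   Function.Bijective
  (P.isoLeftDerivedObj ((linearYoneda R (ModuleCat.{u} R)).obj Y).rightOp n).hom.unop := by
  have := (ConcreteCategory.isIso_iff_bijective
    ((P.isoLeftDerivedObj ((linearYoneda R (ModuleCat.{u} R)).obj Y).rightOp n).hom.unop)).1
    inferInstance
  exact this

theorem omk_surj {X : ModuleCat.{u} R} (P : ProjectiveResolution X) (Y : ModuleCat.{u} R) (n : ℕ) :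
    Function.Surjective (omk P Y n) :=
  (iso_bij P Y n).2.comp (kap_surj _ _)

theorem omk_zero {X : ModuleCat.{u} R} (P : ProjectiveResolution X) (Y : ModuleCat.{u} R) (n : ℕ)
    (z : zk (KK P Y) n) : omk P Y n z = 0 ↔ emk P Y n z = 0 := by
  rw [emk_zero P Y n _ rfl, ← kap_zero (KK P Y) n _ rfl, omk_apply]
  exact map_eq_zero_iff _ (iso_bij P Y n).1

theorem exists_lift {X X' : ModuleCat.{u} R} (g : X ⟶ X') (P : ProjectiveResolution X)
    (P' : ProjectiveResolution X') (Y : ModuleCat.{u} R) (n : ℕ) (z' : zk (KK P' Y) n) :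
    ∃ z : zk (KK P Y) n,
      ((Ext R (ModuleCat.{u} R) n).map g.op).app Y (omk P' Y n z') = omk P Y n z ∧
      (Abelian.Ext.mk₀ g).comp (emk P' Y n z') (zero_add n) = emk P Y n z := by
  let φ := ProjectiveResolution.lift g P P'
  have hφ : φ.f 0 ≫ P'.π.f 0 = P.π.f 0 ≫ g := ProjectiveResolution.lift_commutes_zero g P P'
  let φ' : ProjectiveResolution.Hom P P' g := ⟨φ, by simpa using hφ⟩
  refine ⟨⟨φ.f n ≫ zf z', ?_⟩, ?_, ?_⟩
  · change P.complex.d (n+1) n ≫ φ.f n ≫ zf z' = 0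
    rw [← φ.comm_assoc, zf_d, Limits.comp_zero]
  · have h1 := ProjectiveResolution.isoLeftDerivedObj_hom_naturality g P P' φ hφ
      ((linearYoneda R (ModuleCat.{u} R)).obj Y).rightOp n
    have h2 := congrArg (fun f => f.unop.hom (kap (KK P' Y) n z')) h1
    refine h2.trans ?_
    rw [omk_apply]
    exact congrArg
      (P.isoLeftDerivedObj ((linearYoneda R (ModuleCat.{u} R)).obj Y).rightOp n).hom.unop
      (kap_nat _ n z' _ rfl)
  · exact ProjectiveResolution.mk₀_comp_extMk (zf z') (n+1) rfl (zf_d z') φ'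

theorem omk_ker {X : ModuleCat.{u} R} (P : ProjectiveResolution X) (Y : ModuleCat.{u} R) (n : ℕ) :
    LinearMap.ker (omk P Y n) = LinearMap.ker (emk P Y n) := by
  ext z; exact omk_zero P Y n z

/-- comparison of the two Ext functors -/
noncomputable def oe (X Y : ModuleCat.{u} R) (n : ℕ) : OX X Y n ≃ₗ[R] Abelian.Ext X Y n :=
  ((omk (projectiveResolution X) Y n).quotKerEquivOfSurjective (omk_surj _ _ _)).symm ≪≫ₗ
    Submodule.quotEquivOfEq _ _ (omk_ker _ _ _) ≪≫ₗ
    (emk (projectiveResolution X) Y n).quotKerEquivOfSurjective (emk_surj _ _ _)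

theorem oe_omk (X Y : ModuleCat.{u} R) (n : ℕ) (z : zk (KK (projectiveResolution X) Y) n) :
    oe X Y n (omk _ Y n z) = emk _ Y n z := by
  have h : ((omk (projectiveResolution X) Y n).quotKerEquivOfSurjective (omk_surj _ _ _)).symm
      (omk _ Y n z) = Submodule.Quotient.mk z := by
    rw [LinearEquiv.symm_apply_eq]; rfl
  simp only [oe, LinearEquiv.trans_apply, h]
  rfl

theorem oe_nat {X X' : ModuleCat.{u} R} (g : X ⟶ X') (Y : ModuleCat.{u} R) (n : ℕ)
    (w : OX X' Y n) :
    oe X Y n (((Ext R (ModuleCat.{u} R) n).map g.op).app Y w) =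
      (Abelian.Ext.mk₀ g).comp (oe X' Y n w) (zero_add n) := by
  obtain ⟨z', rfl⟩ := omk_surj (projectiveResolution X') Y n w
  obtain ⟨z, h1, h2⟩ := exists_lift g (projectiveResolution X) (projectiveResolution X') Y n z'
  rw [oe_omk, h2, ← oe_omk, ← h1]

end LC

end

section

namespace LC
variable {R : Type u} [CommRing R]
variable {M M' H H' : Type u} [AddCommGroup M] [Module R M] [AddCommGroup M'] [Module R M']
  [AddCommGroup H] [Module R H] [AddCommGroup H'] [Module R H']

/-- the projection `R/a^t → R/a^s` -/
noncomputable def pj (a : Ideal R) {s t : ℕ} (h : s ≤ t) : (R ⧸ a ^ t) →ₗ[R] (R ⧸ a ^ s) :=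
  Submodule.mapQ _ _ LinearMap.id (Ideal.pow_le_pow_right h)

/-- transition map -/
noncomputable def tr (a : Ideal R) (M : Type u) [AddCommGroup M] [Module R M] (n : ℕ) {s t : ℕ}
    (h : s ≤ t) : XT R (R ⧸ a ^ s) M n →ₗ[R] XT R (R ⧸ a ^ t) M n :=
  mapL M (pj a h) n

lemma pj_comp (a : Ideal R) {s t r : ℕ} (h : s ≤ t) (h' : t ≤ r) :
    pj a h ∘ₗ pj a h' = pj a (h.trans h') := by
  ext; rfl

lemma tr_tr (a : Ideal R) (n : ℕ) {s t r : ℕ} (h : s ≤ t) (h' : t ≤ r)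
    (x : XT R (R ⧸ a ^ s) M n) : tr a M n h' (tr a M n h x) = tr a M n (h.trans h') x := by
  rw [tr, tr, tr, ← mapL_comp, pj_comp]

lemma tr_self (a : Ideal R) (n : ℕ) {s : ℕ} (h : s ≤ s)
    (x : XT R (R ⧸ a ^ s) M n) : tr a M n h x = x := by
  have : pj a h = LinearMap.id := by ext; rfl
  rw [tr, this, mapL_id]

/-- `H` is the colimit of the `Ext^n(R/a^t, M)` -/
structure LCoh (a : Ideal R) (n : ℕ) (M H : Type u) [AddCommGroup M] [Module R M]
    [AddCommGroup H] [Module R H] (ι : ∀ t, XT R (R ⧸ a ^ t) M n →ₗ[R] H) : Prop where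
  compat : ∀ {s t : ℕ} (h : s ≤ t) (x : XT R (R ⧸ a ^ s) M n), ι t (tr a M n h x) = ι s x
  surj : ∀ y : H, ∃ t x, ι t x = y
  zero : ∀ t (x : XT R (R ⧸ a ^ t) M n), ι t x = 0 → ∃ (r : ℕ) (h : t ≤ r), tr a M n h x = 0

/-- local cohomology -/
noncomputable abbrev HH (a : Ideal R) (n : ℕ) (M : Type u) [AddCommGroup M] [Module R M] :
    ModuleCat.{u} R := (localCohomology a n).obj (ModuleCat.of R M)

theorem lcoh_HH (a : Ideal R) (n : ℕ) : ∃ ι, LCoh a n M (HH a n M) ι := by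
  let D := localCohomology.diagram (localCohomology.idealPowersDiagram a) n
  let M0 := ModuleCat.of R M
  have : Limits.HasColimit D := localCohomology.hasColimitDiagram.{u, 0} _ n
  let hc : Limits.IsColimit (((evaluation _ _).obj M0).mapCocone (Limits.colimit.cocone D)) :=
    Limits.isColimitOfPreserves ((evaluation _ _).obj M0) (Limits.colimit.isColimit D)
  have hpres : Limits.PreservesFilteredColimitsOfSize.{0, 0} (forget (ModuleCat.{u} R)) :=
    Limits.preservesFilteredColimitsOfSize_shrink.{0, u, 0, u} _
  have hfil : IsFiltered ℕᵒᵖᵒᵖ := inferInstance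
  have hp2 : Limits.PreservesColimit (D ⋙ (evaluation _ _).obj M0) (forget (ModuleCat.{u} R)) :=
    inferInstance
  let j : ℕ → ℕᵒᵖᵒᵖ := fun t => Opposite.op (Opposite.op t)
  let q : ∀ t, OX (ModuleCat.of R (R ⧸ a ^ t)) M0 n →ₗ[R] HH a n M := fun t =>
    ((Limits.colimit.ι D (j t)).app M0).hom
  let ι : ∀ t, XT R (R ⧸ a ^ t) M n →ₗ[R] HH a n M := fun t =>
    q t ∘ₗ (oe (ModuleCat.of R (R ⧸ a ^ t)) M0 n).symm.toLinearMap
  have hmap : ∀ {s t : ℕ} (h : s ≤ t), ∀ f : j s ⟶ j t, ∀ w : OX (ModuleCat.of R (R ⧸ a ^ s)) M0 n,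
      oe (ModuleCat.of R (R ⧸ a ^ t)) M0 n ((D.map f).app M0 w) =
        tr a M n h (oe (ModuleCat.of R (R ⧸ a ^ s)) M0 n w) := by
    intro s t h f w
    exact oe_nat (ModuleCat.ofHom (pj a h)) M0 n w
  refine ⟨ι, ?_, ?_, ?_⟩
  · intro s t h x
    obtain ⟨w, rfl⟩ := (oe (ModuleCat.of R (R ⧸ a ^ s)) M0 n).surjective x
    let f : j s ⟶ j t := (homOfLE h).op.op
    rw [← hmap h f]
    change q t ((oe (ModuleCat.of R (R ⧸ a ^ t)) M0 n).symm _) =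
      q s ((oe (ModuleCat.of R (R ⧸ a ^ s)) M0 n).symm _)
    rw [LinearEquiv.symm_apply_apply]
    refine (congrArg (q t) (LinearEquiv.symm_apply_apply
      (oe (ModuleCat.of R (R ⧸ a ^ t)) M0 n) _)).trans ?_
    have := congrArg (fun g => (g.app M0).hom w) (Limits.colimit.w D f)
    exact this
  · intro y
    obtain ⟨k, w, hw⟩ := Limits.Concrete.isColimit_exists_rep _ hc y
    refine ⟨k.unop.unop, oe (ModuleCat.of R (R ⧸ a ^ k.unop.unop)) M0 n w, ?_⟩
    change q _ ((oe (ModuleCat.of R (R ⧸ a ^ _)) M0 n).symm _) = y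
    refine (congrArg (q _) (LinearEquiv.symm_apply_apply
      (oe (ModuleCat.of R (R ⧸ a ^ k.unop.unop)) M0 n) _)).trans ?_
    exact hw
  · intro t x hx
    obtain ⟨w, rfl⟩ := (oe (ModuleCat.of R (R ⧸ a ^ t)) M0 n).surjective x
    change q t ((oe (ModuleCat.of R (R ⧸ a ^ t)) M0 n).symm _) = 0 at hx
    rw [LinearEquiv.symm_apply_apply] at hx
    obtain ⟨k, f, g, h⟩ := Limits.Concrete.isColimit_exists_of_rep_eq _ hc (i := j t) (j := j t)
      w (0 : OX (ModuleCat.of R (R ⧸ a ^ t)) M0 n) (by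
        refine Eq.trans hx (map_zero (q t)).symm)
    have hle : t ≤ k.unop.unop := leOfHom f.unop.unop
    refine ⟨k.unop.unop, hle, ?_⟩
    rw [← hmap hle f]
    have h' : (D.map f).app M0 w = (D.map g).app M0 (0 : OX (ModuleCat.of R (R ⧸ a ^ t)) M0 n) := h
    have h2 : (D.map g).app M0 (0 : OX (ModuleCat.of R (R ⧸ a ^ t)) M0 n) = 0 :=
      map_zero ((D.map g).app M0).hom
    refine (congrArg (oe (ModuleCat.of R (R ⧸ a ^ k.unop.unop)) M0 n) (h'.trans h2)).trans ?_
    exact map_zero _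

theorem lcoh_iso {a : Ideal R} {n n' : ℕ} {ι ι'} (h : LCoh a n M H ι) (h' : LCoh a n' M' H' ι')
    (θ : ∀ t, XT R (R ⧸ a ^ t) M n →ₗ[R] XT R (R ⧸ a ^ t) M' n')
    (hθ : ∀ {s t : ℕ} (hst : s ≤ t) x, θ t (tr a M n hst x) = tr a M' n' hst (θ s x))
    (hinj : ∀ t x, θ t x = 0 → ∃ (r : ℕ) (h : t ≤ r), tr a M n h x = 0)
    (hsurj : ∀ t y, ∃ (r : ℕ) (h : t ≤ r), ∃ x, θ r x = tr a M' n' h y) :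
    Nonempty (H ≃ₗ[R] H') := by
  choose T X hX using h.surj
  let f : H → H' := fun y => ι' (T y) (θ (T y) (X y))
  have key0 : ∀ t x, ι t x = 0 ↔ ι' t (θ t x) = 0 := by
    intro t x
    constructor
    · intro h0
      obtain ⟨r, hr, h1⟩ := h.zero t x h0
      rw [← h'.compat hr, ← hθ, h1, map_zero, map_zero]
    · intro h0
      obtain ⟨r, hr, h1⟩ := h'.zero t _ h0
      rw [← hθ] at h1
      obtain ⟨r', hr', h2⟩ := hinj _ _ h1
      rw [← h.compat (hr.trans hr'), ← tr_tr a n hr hr', h2, map_zero]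
  have key : ∀ t x s y, ι t x = ι s y → ι' t (θ t x) = ι' s (θ s y) := by
    intro t x s y hxy
    rw [← h.compat (le_max_left t s), ← h.compat (le_max_right t s), ← sub_eq_zero, ← map_sub,
      key0] at hxy
    rwa [map_sub, map_sub, hθ, hθ, h'.compat, h'.compat, sub_eq_zero] at hxy
  have fkey : ∀ t x, f (ι t x) = ι' t (θ t x) := fun t x => key _ _ _ _ (hX _)
  let F : H →ₗ[R] H' :=
    { toFun := f
      map_add' := by
        intro y z
        obtain ⟨t, x, rfl⟩ := h.surj y
        obtain ⟨s, w, rfl⟩ := h.surj z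
        rw [← h.compat (le_max_left t s), ← h.compat (le_max_right t s), ← map_add,
          fkey, fkey, fkey, map_add, map_add]
      map_smul' := by
        intro r y
        obtain ⟨t, x, rfl⟩ := h.surj y
        rw [← map_smul, fkey, fkey, map_smul, map_smul]; rfl }
  refine ⟨LinearEquiv.ofBijective F ⟨?_, ?_⟩⟩
  · rw [← LinearMap.ker_eq_bot, LinearMap.ker_eq_bot']
    intro y hy
    obtain ⟨t, x, rfl⟩ := h.surj y
    rw [key0]
    rw [← fkey]; exact hy
  · intro y
    obtain ⟨t, x, rfl⟩ := h'.surj y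
    obtain ⟨r, hr, w, hw⟩ := hsurj t x
    refine ⟨ι r w, ?_⟩
    change f _ = _
    rw [fkey, hw, h'.compat]
end LC

end

section

namespace LC
variable {R : Type u} [CommRing R]
variable {M M' H H' : Type u} [AddCommGroup M] [Module R M] [AddCommGroup M'] [Module R M']
  [AddCommGroup H] [Module R H] [AddCommGroup H'] [Module R H']

/-- the `a`-torsion submodule -/
def gam (a : Ideal R) (M : Type u) [AddCommGroup M] [Module R M] : Submodule R M where
  carrier := {x | ∃ n : ℕ, ∀ r ∈ a ^ n, r • x = 0}
  zero_mem' := ⟨0, fun r _ => smul_zero r⟩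
  add_mem' := by
    rintro x y ⟨n, hn⟩ ⟨m, hm⟩
    refine ⟨max n m, fun r hr => ?_⟩
    rw [smul_add, hn r (Ideal.pow_le_pow_right (le_max_left _ _) hr),
      hm r (Ideal.pow_le_pow_right (le_max_right _ _) hr), add_zero]
  smul_mem' := by
    rintro c x ⟨n, hn⟩
    exact ⟨n, fun r hr => by rw [smul_comm, hn r hr, smul_zero]⟩

lemma mem_gam {a : Ideal R} {x : M} : x ∈ gam a M ↔ ∃ n : ℕ, ∀ r ∈ a ^ n, r • x = 0 := Iff.rfl

lemma gam_tors (a : Ideal R) : Tors a (gam a M) := by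
  rintro ⟨x, n, hn⟩
  exact ⟨n, fun r hr => Subtype.ext (hn r hr)⟩

lemma Tors.pow_killed {a : Ideal R} (h : Tors a M) (K : Submodule R M) (hK : K.FG) :
    ∃ n : ℕ, ∀ r ∈ a ^ n, ∀ x ∈ K, r • x = 0 := by
  classical
  obtain ⟨s, rfl⟩ := hK
  choose n hn using h
  refine ⟨s.sup n, fun r hr x hx => ?_⟩
  induction hx using Submodule.span_induction with
  | mem x hx => exact hn x r (Ideal.pow_le_pow_right (Finset.le_sup hx) hr)
  | zero => simp
  | add x y _ _ hx hy => rw [smul_add, hx, hy, add_zero]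
  | smul c x _ hx => rw [smul_comm, hx, smul_zero]

lemma gam_injective [IsNoetherianRing R] (a : Ideal R) [hE : Module.Injective R M] :
    Module.Injective R (gam a M) := by
  apply Module.Baer.injective
  intro I g
  obtain ⟨k, hk⟩ := (gam_tors (M := M) a).pow_killed (LinearMap.range g)
    ((Module.Finite.iff_fg).1 inferInstance)
  obtain ⟨c, hc⟩ := Ideal.exists_pow_inf_eq_pow_smul a (M := R) I
  have hAR : ∀ x (hx : x ∈ I), x ∈ a ^ (k + c) → g ⟨x, hx⟩ = 0 := by
    intro x hx hxa
    have h1 : x ∈ (a ^ (k + c) • ⊤ ⊓ I : Submodule R R) := ⟨by simpa using hxa, hx⟩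
    rw [hc (k + c) (by omega)] at h1
    have h2 : x ∈ (a ^ k • I : Submodule R R) := by
      have : k + c - c = k := by omega
      rw [this] at h1
      exact Submodule.smul_mono le_rfl inf_le_right h1
    have h3 : ∀ y ∈ (a ^ k • I : Submodule R R), ∃ hy : y ∈ I, g ⟨y, hy⟩ = 0 := by
      intro y hy
      induction hy using Submodule.smul_induction_on' with
      | smul r hr z hz =>
        refine ⟨I.mul_mem_left r hz, ?_⟩
        have : (⟨r • z, I.mul_mem_left r hz⟩ : I) = r • ⟨z, hz⟩ := rfl
        rw [this, map_smul]
        exact hk r hr _ ⟨_, rfl⟩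
      | add y _ z _ hy hz =>
        obtain ⟨hy, hy'⟩ := hy
        obtain ⟨hz, hz'⟩ := hz
        refine ⟨I.add_mem hy hz, ?_⟩
        have : (⟨y + z, I.add_mem hy hz⟩ : I) = ⟨y, hy⟩ + ⟨z, hz⟩ := rfl
        rw [this, map_add, hy', hz', add_zero]
    exact (h3 x h2).2
  let K : Submodule R I := Submodule.comap I.subtype (a ^ (k + c))
  let e : (I ⧸ K) →ₗ[R] (R ⧸ (a ^ (k + c))) := Submodule.mapQ K (a ^ (k + c)) I.subtype le_rfl
  have he : Function.Injective e := by
    rw [← LinearMap.ker_eq_bot, LinearMap.ker_eq_bot']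
    intro x hx
    obtain ⟨x, rfl⟩ := K.mkQ_surjective x
    have hx' : (Submodule.Quotient.mk (x : R) : R ⧸ (a ^ (k + c))) = 0 := hx
    rw [Submodule.Quotient.mk_eq_zero] at hx'
    exact (Submodule.Quotient.mk_eq_zero K).2 hx'
  let g1 : (I ⧸ K) →ₗ[R] M := K.liftQ ((gam a M).subtype ∘ₗ g) (by
    intro x hx
    have := hAR x x.2 hx
    simp only [LinearMap.mem_ker, LinearMap.comp_apply]
    rw [this, map_zero])
  obtain ⟨h, hh⟩ := hE.out e he g1
  have hmem : ∀ y, h y ∈ gam a M := by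
    intro y
    obtain ⟨y, rfl⟩ := Submodule.mkQ_surjective _ y
    refine ⟨k + c, fun r hr => ?_⟩
    rw [← map_smul, ← map_smul]
    have : Submodule.mkQ (a ^ (k + c)) (r • y) = 0 := by
      rw [Submodule.mkQ_apply, Submodule.Quotient.mk_eq_zero]
      exact Ideal.mul_mem_right _ _ hr
    rw [this, map_zero]
  refine ⟨(LinearMap.codRestrict (gam a M) h hmem) ∘ₗ Submodule.mkQ (a ^ (k + c)), ?_⟩
  intro x hx
  apply Subtype.ext
  exact hh (K.mkQ ⟨x, hx⟩)

theorem exists_inj (M : Type u) [AddCommGroup M] [Module R M] :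
    ∃ (E : Type u) (_ : AddCommGroup E) (_ : Module R E) (f : M →ₗ[R] E),
      Module.Injective R E ∧ Function.Injective f := by
  let M0 := ModuleCat.of R M
  let E0 : ModuleCat.{u} R := Injective.under M0
  have hE0 : Injective E0 := inferInstanceAs (Injective (Injective.under M0))
  refine ⟨E0, inferInstance, inferInstance, (Injective.ι M0).hom, ?_, ?_⟩
  · exact Module.injective_module_of_injective_object R _
  · exact (ModuleCat.mono_iff_injective _).1 inferInstance

theorem exists_tors_inj [IsNoetherianRing R] (a : Ideal R) (ht : Tors a M) :
    ∃ (J : Type u) (_ : AddCommGroup J) (_ : Module R J) (f : M →ₗ[R] J),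
      Module.Injective R J ∧ Function.Injective f ∧ Tors a J := by
  obtain ⟨E, _, _, f, hE, hf⟩ := exists_inj (R := R) M
  refine ⟨gam a E, inferInstance, inferInstance, f.codRestrict (gam a E) ?_, gam_injective a, ?_,
    gam_tors a⟩
  · intro x
    obtain ⟨n, hn⟩ := ht x
    exact ⟨n, fun r hr => by rw [← map_smul, hn r hr, map_zero]⟩
  · intro x y h
    exact hf (congrArg Subtype.val h)

theorem exists_free_inj [IsNoetherianRing R] (a : Ideal R) (ht : gam a M = ⊥) :
    ∃ (J : Type u) (_ : AddCommGroup J) (_ : Module R J) (f : M →ₗ[R] J),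
      Module.Injective R J ∧ Function.Injective f ∧ gam a J = ⊥ := by
  obtain ⟨E, _, _, f, hE, hf⟩ := exists_inj (R := R) M
  obtain ⟨ρ, hρ⟩ := (gam_injective (M := E) a).out (gam a E).subtype (gam a E).injective_subtype
    LinearMap.id
  let s : E →ₗ[R] LinearMap.ker ρ := LinearMap.codRestrict _
    (LinearMap.id - (gam a E).subtype ∘ₗ ρ) (by
      intro e
      simp only [LinearMap.mem_ker, LinearMap.sub_apply, LinearMap.comp_apply, map_sub, hρ]
      simp)
  have hs : ∀ e : LinearMap.ker ρ, s e = e := by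
    rintro ⟨e, he⟩
    apply Subtype.ext
    change e - (ρ e : E) = e
    rw [LinearMap.mem_ker.1 he]; simp
  refine ⟨LinearMap.ker ρ, inferInstance, inferInstance, s ∘ₗ f, ⟨?_⟩, ?_, ?_⟩
  · intro X Y _ _ _ _ i hi g
    obtain ⟨h, hh⟩ := hE.out i hi ((LinearMap.ker ρ).subtype ∘ₗ g)
    refine ⟨s ∘ₗ h, fun x => ?_⟩
    rw [LinearMap.comp_apply, hh]
    exact hs _
  · rw [← LinearMap.ker_eq_bot, LinearMap.ker_eq_bot']
    intro m hm
    have h1 : f m - (ρ (f m) : E) = 0 := congrArg Subtype.val hm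
    rw [sub_eq_zero] at h1
    obtain ⟨n, hn⟩ := (ρ (f m)).2
    have : m ∈ gam a M := ⟨n, fun r hr => hf (by rw [map_smul, h1, hn r hr, map_zero])⟩
    rw [ht] at this
    exact this
  · rw [eq_bot_iff]
    rintro ⟨e, he⟩ ⟨n, hn⟩
    have h1 : e ∈ gam a E := ⟨n, fun r hr => congrArg Subtype.val (hn r hr)⟩
    have h2 : ρ e = ⟨e, h1⟩ := hρ ⟨e, h1⟩
    rw [LinearMap.mem_ker.1 he] at h2
    have h3 : (0:E) = e := congrArg Subtype.val h2
    subst h3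
    rfl

theorem xt_free_inj (a : Ideal R) [Module.Injective R M] (h : gam a M = ⊥) (J : Ideal R) (t : ℕ)
    (hJ : a ^ t ≤ J) (i : ℕ) (x : XT R (R ⧸ J) M i) : x = 0 := by
  cases i with
  | succ i => exact xt_injective i x
  | zero =>
    apply (xt0 _ _).injective
    rw [map_zero]
    ext
    have : (xt0 _ _ x) (Submodule.Quotient.mk 1) ∈ gam a M := ⟨t, fun r hr => by
      rw [← map_smul, ← Submodule.Quotient.mk_smul]
      have : (Submodule.Quotient.mk (r • (1:R)) : R ⧸ J) = 0 := by
        rw [Submodule.Quotient.mk_eq_zero]; simpa using hJ hr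
      rw [this, map_zero]⟩
    rw [h] at this
    exact this

/-- higher Ext classes with torsion coefficients die -/
theorem tors_dies [IsNoetherianRing R] (a : Ideal R) (n : ℕ) :
    ∀ (M : Type u) [AddCommGroup M] [Module R M], Tors a M →
    ∀ t (x : XT R (R ⧸ a ^ t) M (n+1)), ∃ (r : ℕ) (h : t ≤ r), tr a M (n+1) h x = 0 := by
  induction n with
  | zero =>
    intro M _ _ ht t x
    obtain ⟨J, _, _, f, hJ, hf, hJt⟩ := exists_tors_inj a ht
    have S := SES.range f hf
    obtain ⟨q, rfl⟩ := (S.exR1 (R ⧸ a ^ t) 0 x).1 (xt_injective 0 _)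
    obtain ⟨q, rfl⟩ := (xt0 _ _).symm.surjective q
    obtain ⟨j, hj⟩ := S.surj (q (Submodule.Quotient.mk 1))
    obtain ⟨s, hs⟩ := hJt j
    refine ⟨max t s, le_max_left _ _, ?_⟩
    rw [tr, S.natL, mapL_xt0_symm]
    let p : (R ⧸ a ^ (max t s)) →ₗ[R] J := Submodule.liftQ _ (LinearMap.toSpanSingleton R J j) (by
      intro r hr
      rw [LinearMap.mem_ker, LinearMap.toSpanSingleton_apply]
      exact hs r (Ideal.pow_le_pow_right (le_max_right _ _) hr))
    have : q ∘ₗ pj a (le_max_left t s) = (LinearMap.range f).mkQ ∘ₗ p := by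
      ext
      change q (Submodule.Quotient.mk 1) = (LinearMap.range f).mkQ ((1:R) • j)
      rw [one_smul, ← hj]
    rw [this, ← mapR_xt0_symm]
    exact (S.exR3 _ 0 _).2 ⟨_, rfl⟩
  | succ n ih =>
    intro M _ _ ht t x
    obtain ⟨J, _, _, f, hJ, hf, hJt⟩ := exists_tors_inj a ht
    have S := SES.range f hf
    obtain ⟨q, rfl⟩ := (S.exR1 (R ⧸ a ^ t) (n+1) x).1 (xt_injective (n+1) _)
    obtain ⟨r, h, hr⟩ := ih _ (hJt.quot (LinearMap.range f)) t q
    refine ⟨r, h, ?_⟩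
    rw [tr, S.natL]
    rw [tr] at hr
    rw [hr, map_zero]

theorem gam_quot [IsNoetherianRing R] (a : Ideal R) : gam a (M ⧸ gam a M) = ⊥ := by
  rw [eq_bot_iff]
  rintro x ⟨n, hn⟩
  obtain ⟨x, rfl⟩ := (gam a M).mkQ_surjective x
  rw [Submodule.mem_bot, Submodule.mkQ_apply, Submodule.Quotient.mk_eq_zero]
  have h1 : ∀ r ∈ a ^ n, r • x ∈ gam a M := by
    intro r hr
    have := hn r hr
    rwa [← map_smul, Submodule.mkQ_apply, Submodule.Quotient.mk_eq_zero] at this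
  let K : Submodule R M := Submodule.map (LinearMap.toSpanSingleton R M x) (a ^ n)
  have hK : K.FG := (IsNoetherian.noetherian (a ^ n)).map _
  let K' : Submodule R (gam a M) := Submodule.comap (gam a M).subtype K
  have hle : K ≤ gam a M := by
    rintro _ ⟨r, hr, rfl⟩
    exact h1 r hr
  have hK' : K'.FG := by
    apply Submodule.fg_of_fg_map_injective (gam a M).subtype (gam a M).injective_subtype
    rw [Submodule.map_comap_subtype, inf_eq_right.2 hle]
    exact hK
  obtain ⟨m, hm⟩ := (gam_tors (M := M) a).pow_killed K' hK'
  refine ⟨m + n, fun r hr => ?_⟩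
  rw [pow_add] at hr
  induction hr using Submodule.mul_induction_on' with
  | mem_mul_mem r hr s hs =>
    have := hm r hr ⟨s • x, h1 s hs⟩ ⟨s, hs, rfl⟩
    have h2 : r • s • x = 0 := congrArg Subtype.val this
    rwa [smul_smul] at h2
  | add r _ s _ h1 h2 => rw [add_smul, h1, h2, add_zero]

end LC

end

section

namespace LC
variable {R : Type u} [CommRing R]
variable {M M' H H' : Type u} [AddCommGroup M] [Module R M] [AddCommGroup M'] [Module R M']
  [AddCommGroup H] [Module R H] [AddCommGroup H'] [Module R H']

theorem lcoh_unique {a : Ideal R} {n : ℕ} {ι ι'} (h : LCoh a n M H ι) (h' : LCoh a n M H' ι') :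
    Nonempty (H ≃ₗ[R] H') :=
  lcoh_iso h h' (fun _ => LinearMap.id) (fun _ _ => rfl)
    (fun t x hx => ⟨t, le_rfl, by rw [show x = 0 from hx, map_zero]⟩)
    (fun t y => ⟨t, le_rfl, _, rfl⟩)

theorem hom_gam (a : Ideal R) (t : ℕ) (f : (R ⧸ a ^ t) →ₗ[R] M) (y : R ⧸ a ^ t) :
    f y ∈ gam a M := by
  obtain ⟨y, rfl⟩ := Submodule.mkQ_surjective _ y
  refine ⟨t, fun r hr => ?_⟩
  rw [← map_smul, ← map_smul]
  have : Submodule.mkQ (a ^ t) (r • y) = 0 := by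
    rw [Submodule.mkQ_apply, Submodule.Quotient.mk_eq_zero]
    exact Ideal.mul_mem_right _ _ hr
  rw [this, map_zero]

theorem lcoh_gam (a : Ideal R) : ∃ ι, LCoh a 0 M (gam a M) ι := by
  let ι : ∀ t, XT R (R ⧸ a ^ t) M 0 →ₗ[R] gam a M := fun t =>
    LinearMap.codRestrict (gam a M)
      ((LinearMap.applyₗ (Submodule.Quotient.mk 1 : R ⧸ a ^ t)) ∘ₗ (xt0 (R ⧸ a ^ t) M).toLinearMap)
      (fun x => hom_gam a t _ _)
  have hι : ∀ t f, (ι t ((xt0 _ _).symm f) : M) = f (Submodule.Quotient.mk 1) := by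
    intro t f
    change xt0 _ _ ((xt0 _ _).symm f) (Submodule.Quotient.mk 1) = _
    rw [LinearEquiv.apply_symm_apply]
  refine ⟨ι, ?_, ?_, ?_⟩
  · intro s t h x
    obtain ⟨f, rfl⟩ := (xt0 _ _).symm.surjective x
    apply Subtype.ext
    rw [tr, mapL_xt0_symm, hι, hι]
    rfl
  · rintro ⟨y, n, hn⟩
    refine ⟨n, (xt0 _ _).symm (Submodule.liftQ _ (LinearMap.toSpanSingleton R M y) ?_), ?_⟩
    · intro r hr
      exact hn r hr
    · apply Subtype.ext
      rw [hι]
      change (1:R) • y = y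
      rw [one_smul]
  · intro t x hx
    obtain ⟨f, rfl⟩ := (xt0 _ _).symm.surjective x
    refine ⟨t, le_rfl, ?_⟩
    have h1 : f (Submodule.Quotient.mk 1) = 0 := by rw [← hι, hx]; rfl
    have : f = 0 := by ext; exact h1
    rw [this, map_zero, map_zero]

theorem HH0 (a : Ideal R) : Nonempty (HH a 0 M ≃ₗ[R] gam a M) := by
  obtain ⟨ι, h⟩ := lcoh_HH (M := M) a 0
  obtain ⟨ι', h'⟩ := lcoh_gam (M := M) a
  exact lcoh_unique h h'

theorem HH_quot [IsNoetherianRing R] (a : Ideal R) (n : ℕ) :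
    Nonempty (HH a (n+1) M ≃ₗ[R] HH a (n+1) (M ⧸ gam a M)) := by
  obtain ⟨ι, h⟩ := lcoh_HH (M := M) a (n+1)
  obtain ⟨ι', h'⟩ := lcoh_HH (M := M ⧸ gam a M) a (n+1)
  have S := SES.mkQ (gam a M)
  refine lcoh_iso h h' (fun t => mapR _ (gam a M).mkQ (n+1)) ?_ ?_ ?_
  · intro s t hst x
    exact (mapL_mapR _ _ _ _).symm
  · intro t x hx
    obtain ⟨y, rfl⟩ := (S.exR2 _ _ _).1 hx
    obtain ⟨r, hr, h0⟩ := tors_dies a n _ (gam_tors a) t y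
    refine ⟨r, hr, ?_⟩
    rw [tr, mapL_mapR]
    rw [tr] at h0
    rw [h0, map_zero]
  · intro t y
    obtain ⟨r, hr, h0⟩ := tors_dies a (n+1) _ (gam_tors a) t (S.dR _ _ y)
    refine ⟨r, hr, ?_⟩
    rw [tr, S.natL] at h0
    exact (S.exR3 _ _ _).1 h0

theorem shift [IsNoetherianRing R] (a : Ideal R) (M : Type u) [AddCommGroup M] [Module R M] :
    ∃ (L : Type u) (_ : AddCommGroup L) (_ : Module R L),
      (∀ n, Nonempty (HH a n L ≃ₗ[R] HH a (n+1) M)) ∧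
      (∀ i, Nonempty (XT R (R ⧸ a) L i ≃ₗ[R] XT R (R ⧸ a) (M ⧸ gam a M) (i+1))) := by
  obtain ⟨E, _, _, f, hE, hf, hEt⟩ := exists_free_inj a (gam_quot (M := M) a)
  have S := SES.range f hf
  have bij : ∀ (J : Ideal R) (t : ℕ) (hJ : a ^ t ≤ J) (i : ℕ),
      Function.Bijective (S.dR (R ⧸ J) i) := by
    intro J t hJ i
    constructor
    · rw [← LinearMap.ker_eq_bot, LinearMap.ker_eq_bot']
      intro x hx
      obtain ⟨y, rfl⟩ := (S.exR3 _ _ _).1 hx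
      rw [xt_free_inj a hEt J t hJ i y, map_zero]
    · intro y
      exact (S.exR1 _ _ _).1 (xt_free_inj a hEt J t hJ _ _)
  refine ⟨E ⧸ LinearMap.range f, inferInstance, inferInstance, ?_, ?_⟩
  · intro n
    obtain ⟨ι, h⟩ := lcoh_HH (M := E ⧸ LinearMap.range f) a n
    obtain ⟨ι', h'⟩ := lcoh_HH (M := M ⧸ gam a M) a (n+1)
    obtain ⟨e⟩ := HH_quot (M := M) a n
    have : Nonempty (HH a n (E ⧸ LinearMap.range f) ≃ₗ[R] HH a (n+1) (M ⧸ gam a M)) := by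
      refine lcoh_iso h h' (fun t => S.dR _ n) ?_ ?_ ?_
      · intro s t hst x
        exact (S.natL _ _ _).symm
      · intro t x hx
        refine ⟨t, le_rfl, ?_⟩
        rw [(bij (a ^ t) t le_rfl n).1 (hx.trans (map_zero _).symm), map_zero]
      · intro t y
        exact ⟨t, le_rfl, (bij (a ^ t) t le_rfl n).2 _⟩
    obtain ⟨e'⟩ := this
    exact ⟨e'.trans e.symm⟩
  · intro i
    exact ⟨LinearEquiv.ofBijective (S.dR (R ⧸ a) i) (bij a 1 (by simp) i)⟩

end LC

end

namespace LC
variable {R : Type u} [CommRing R]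
variable {M M' H H' : Type u} [AddCommGroup M] [Module R M] [AddCommGroup M'] [Module R M']
  [AddCommGroup H] [Module R H] [AddCommGroup H'] [Module R H']

theorem hom_gam1 (a : Ideal R) (f : (R ⧸ a) →ₗ[R] M) (y : R ⧸ a) :
    f y ∈ gam a M := by
  obtain ⟨y, rfl⟩ := Submodule.mkQ_surjective _ y
  refine ⟨1, fun r hr => ?_⟩
  rw [pow_one] at hr
  rw [← map_smul, ← map_smul]
  have : Submodule.mkQ a (r • y) = 0 := by
    rw [Submodule.mkQ_apply, Submodule.Quotient.mk_eq_zero]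
    exact Ideal.mul_mem_right _ _ hr
  rw [this, map_zero]

theorem xt0_gam_surj (a : Ideal R) :
    Function.Surjective (mapR (R ⧸ a) (gam a M).subtype 0) := by
  intro x
  obtain ⟨f, rfl⟩ := (xt0 _ _).symm.surjective x
  refine ⟨(xt0 _ _).symm (f.codRestrict (gam a M) (hom_gam1 a f)), ?_⟩
  rw [mapR_xt0_symm]
  rfl

theorem xt0_free (a : Ideal R) (h : gam a M = ⊥) (x : XT R (R ⧸ a) M 0) : x = 0 := by
  apply (xt0 _ _).injective
  rw [map_zero]
  ext y
  have := hom_gam1 a (xt0 _ _ x) (Submodule.Quotient.mk 1)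
  rw [h] at this
  exact this

/-- `X` has finite Ext modules from `R/a` -/
def Good (a : Ideal R) (X : Type u) [AddCommGroup X] [Module R X] : Prop :=
  ∀ i, Module.Finite R (XT R (R ⧸ a) X i)

theorem Good.iso {a : Ideal R} (e : H ≃ₗ[R] H') (h : Good a H) : Good a H' := fun i =>
  have := h i
  Module.Finite.equiv (equivR (R ⧸ a) e i)

theorem HH_tors [IsNoetherianRing R] (a : Ideal R) (n : ℕ) :
    ∀ (M : Type u) [AddCommGroup M] [Module R M], Tors a (HH a n M) := by
  induction n with
  | zero =>
    intro M _ _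
    obtain ⟨e⟩ := HH0 (M := M) a
    exact (gam_tors a).of_inj e.toLinearMap e.injective
  | succ n ih =>
    intro M _ _
    obtain ⟨L, _, _, h, _⟩ := shift a M
    obtain ⟨e⟩ := h n
    exact (ih L).of_surj e.toLinearMap e.surjective

theorem gam_good [IsNoetherianRing R] (a : Ideal R) (hD : D2 a) (hM : Good a M)
    (h1 : Good a (HH a 1 M)) : Good a (gam a M) := by
  have S := SES.mkQ (gam a M)
  have q1 : Module.Finite R (XT R (R ⧸ a) (M ⧸ gam a M) 1) := by
    obtain ⟨L, _, _, hL, hX⟩ := shift a M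
    obtain ⟨e⟩ := hX 0
    obtain ⟨e0⟩ := HH0 (M := L) a
    obtain ⟨e1⟩ := hL 0
    have g := (h1.iso (e1.symm.trans e0)) 0
    have := Module.Finite.of_surjective _ (xt0_gam_surj (M := L) a)
    exact Module.Finite.equiv e
  refine thm2 a hD _ (gam_tors a) ?_
  intro j hj
  interval_cases j
  · have := hM 0
    exact Module.Finite.of_injective _ (mapR0_inj (R ⧸ a) S.inj)
  · have h0 : Module.Finite R (XT R (R ⧸ a) (M ⧸ gam a M) 0) :=
      Module.Finite.of_surjective (0 : PUnit.{u+1} →ₗ[R] _) (fun x =>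
        ⟨0, (xt0_free a (gam_quot a) x).symm⟩)
    exact (fgS R).ex _ _ (S.exR1 (R ⧸ a) 0) h0 (hM 1)
  · exact (fgS R).ex _ _ (S.exR1 (R ⧸ a) 1) q1 (hM 2)

theorem main [IsNoetherianRing R] (a : Ideal R) (hD : D2 a) (n : ℕ) :
    ∀ (M : Type u) [AddCommGroup M] [Module R M], Good a M → ∀ e : ℕ,
      (∀ i, i % 2 = e % 2 → Good a (HH a i M)) → Good a (HH a n M) ∧ Good a (gam a M) := by
  induction n with
  | zero =>
    intro M _ _ hM e h
    obtain ⟨e0⟩ := HH0 (M := M) a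
    have : Good a (gam a M) := by
      rcases Nat.mod_two_eq_zero_or_one e with he | he
      · exact (h 0 (by omega)).iso e0
      · exact gam_good a hD hM (h 1 (by omega))
    exact ⟨this.iso e0.symm, this⟩
  | succ n ih =>
    intro M _ _ hM e h
    obtain ⟨e0⟩ := HH0 (M := M) a
    have hg : Good a (gam a M) := by
      rcases Nat.mod_two_eq_zero_or_one e with he | he
      · exact (h 0 (by omega)).iso e0
      · exact gam_good a hD hM (h 1 (by omega))
    refine ⟨?_, hg⟩
    obtain ⟨L, _, _, hL, hX⟩ := shift a M
    have hLg : Good a L := by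
      intro i
      obtain ⟨e1⟩ := hX i
      have := (fgS R).ex _ _ ((SES.mkQ (gam a M)).exR3 (R ⧸ a) (i+1)) (hM (i+1)) (hg (i+2))
      have h2 : Module.Finite R (XT R (R ⧸ a) (M ⧸ gam a M) (i+1)) := this
      exact Module.Finite.equiv e1.symm
    obtain ⟨e2⟩ := hL n
    refine ((ih L hLg (e+1) ?_).1).iso e2
    intro i hi
    obtain ⟨e3⟩ := hL i
    exact (h (i+1) (by omega)).iso e3.symm

theorem tors_support (a : Ideal R) (h : Tors a M) :
    Module.support R M ⊆ PrimeSpectrum.zeroLocus (a : Set R) := by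
  intro p hp
  obtain ⟨m, hm⟩ := Module.mem_support_iff_exists_annihilator.1 hp
  obtain ⟨n, hn⟩ := h m
  have : a ^ n ≤ p.asIdeal := fun r hr => hm (by
    rw [Submodule.mem_annihilator_span_singleton]; exact hn r hr)
  exact p.2.le_of_pow_le this

theorem d2_of_dim (a : Ideal R) (h : ringKrullDim (R ⧸ a) = 2) : D2 a := by
  intro p q r hp hq hr hap hpq hqr
  by_contra hmax
  obtain ⟨m, hm, hrm⟩ := r.exists_le_maximal hr.ne_top
  have hrm' : r < m := lt_of_le_of_ne hrm (fun e => hmax (e ▸ hm))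
  rw [ringKrullDim_quotient] at h
  let P : PrimeSpectrum.zeroLocus (a : Set R) := ⟨⟨p, hp⟩, hap⟩
  let Q : PrimeSpectrum.zeroLocus (a : Set R) := ⟨⟨q, hq⟩, hap.trans hpq.le⟩
  let S : PrimeSpectrum.zeroLocus (a : Set R) := ⟨⟨r, hr⟩, hap.trans (hpq.trans hqr).le⟩
  let T : PrimeSpectrum.zeroLocus (a : Set R) :=
    ⟨⟨m, hm.isPrime⟩, hap.trans (hpq.trans (hqr.trans hrm')).le⟩
  have hPQ : P < Q := hpq
  have hQS : Q < S := hqr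
  have hST : S < T := hrm'
  let s : LTSeries (PrimeSpectrum.zeroLocus (a : Set R)) :=
    { length := 3
      toFun := ![P, Q, S, T]
      step := by
        intro i
        fin_cases i
        · exact hPQ
        · exact hQS
        · exact hST }
  have h3 : ((3 : ℕ) : WithBot ℕ∞) ≤ _ := Order.LTSeries.length_le_krullDim s
  rw [h] at h3
  have h4 : (((3 : ℕ) : ℕ∞) : WithBot ℕ∞) ≤ ((2 : ℕ) : ℕ∞) := h3
  norm_cast at h4

theorem extQuot_iff (a : Ideal R) (X : ModuleCat.{u} R) :
    (∀ i : ℕ, Module.Finite R (extQuot a i X)) ↔ Good a X := by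
  constructor
  · intro h i
    have : Module.Finite R (OX (ModuleCat.of R (R ⧸ a)) X i) := h i
    exact Module.Finite.equiv (oe (ModuleCat.of R (R ⧸ a)) X i)
  · intro h i
    have := h i
    exact Module.Finite.equiv (oe (ModuleCat.of R (R ⧸ a)) X i).symm

end LC

theorem stmt3 {R : Type u} [CommRing R] [IsNoetherianRing R] (a : Ideal R) (ha : a ≠ ⊤)
    (hdim : ringKrullDim (R ⧸ a) = 2) (M : ModuleCat.{u} R) (hfg : Module.Finite R M)
    (heven : ∀ i : ℕ, IsCofinite a ((localCohomology a (2 * i)).obj M)) :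
    ∀ i : ℕ, IsCofinite a ((localCohomology a i).obj M) := by
  intro i
  have hM : LC.Good a M := fun j => (LC.fgS R).xt_of hfg j (R ⧸ a)
  refine ⟨LC.tors_support a (LC.HH_tors a i M), (LC.extQuot_iff a _).2 ?_⟩
  refine (LC.main a (LC.d2_of_dim a hdim) i M hM 0 ?_).1
  intro j hj
  obtain ⟨k, rfl⟩ : ∃ k, j = 2 * k := ⟨j / 2, by omega⟩
  exact (LC.extQuot_iff a _).1 (heven k).2
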